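/- Mean-value property, volume version: assume m > 4. Let a ∈ ℝ^m, r > 0, and let f ∈ C²(B(a,r)×𝔹^m, ℋ_k) extend continuously to (closed ball B̄(a,r)) × (closed unit ball), with 𝒟_k f = 0 in B(a,r) × 𝔹^m. Then for every ν ∈ 𝔹^m, f(a,ν) = ((m+2k−2)/((m−2) V(B(a,r)))) ∫_{B(a,r)} f(x, R_{η(x)}(ν)) dx, where η(x) = (x−a)/|x−a|, R_{η}(ν) = ν − 2⟨η,ν⟩η, and V(B(a,r)) is the Lebesgue volume of B(a,r). -/

import Mathlib

noncomputable section

open MeasureTheory Metric Filter Topology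
open scoped RealInnerProductSpace

/-- `ℝ^m` as a Euclidean space. -/
abbrev Evec (m : ℕ) : Type := EuclideanSpace ℝ (Fin m)

/-- Partial derivative in the `i`-th coordinate direction. -/
def pdv {m : ℕ} (i : Fin m) (f : Evec m → ℝ) (x : Evec m) : ℝ :=
  fderiv ℝ f x (EuclideanSpace.single i 1)

/-- Euclidean Laplacian on `ℝ^m`. -/
def lapl {m : ℕ} (f : Evec m → ℝ) (x : Evec m) : ℝ :=
  ∑ i : Fin m, pdv i (pdv i f) x

/-- `p` is a real-valued polynomial function on `ℝ^m`, homogeneous of degree `k` and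
harmonic; i.e. `p ∈ ℋ_k`. -/
def IsHk (m k : ℕ) (p : Evec m → ℝ) : Prop :=
  (∃ P : MvPolynomial (Fin m) ℝ, ∀ x : Evec m, p x = MvPolynomial.eval (fun i => x i) P) ∧
  (∀ (c : ℝ) (x : Evec m), p (c • x) = c ^ k * p x) ∧
  (∀ x : Evec m, lapl p x = 0)

/-- The surface measure `dS` on the unit sphere `𝕊^{m-1}`, as a measure on `ℝ^m`. -/
def sphereM (m : ℕ) : Measure (Evec m) :=
  Measure.map Subtype.val ((volume : Measure (Evec m)).toSphere)

/-- `ω_m`, the surface area of the unit sphere `𝕊^{m-1}`. -/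
def omegaS (m : ℕ) : ℝ := (sphereM m Set.univ).toReal

/-- The constant `c_{m,k} = 2(m+2k-2)/((m-2)ω_m)`. -/
def cmk (m k : ℕ) : ℝ := 2 * ((m : ℝ) + 2 * k - 2) / (((m : ℝ) - 2) * omegaS m)

/-- The reflection `R_a(u) = u - 2⟨a,u⟩a/|a|²` (in Clifford notation `a u a/|a|²`). -/
def reflv {m : ℕ} (a u : Evec m) : Evec m :=
  u - (2 * ⟪a, u⟫ / ‖a‖ ^ 2) • a

/-- `dim ℋ_k`. -/
def hdim (m k : ℕ) : ℕ :=
  Nat.choose (m + k - 1) (m - 1) - Nat.choose (m + k - 3) (m - 1)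

/-- `Z` is the reproducing kernel `Z_k` of `ℋ_k` on the unit sphere: a symmetric,
rotation invariant kernel, bounded by `dim ℋ_k` on the unit ball, belonging to `ℋ_k`
in the first variable and reproducing elements of `ℋ_k` from their spherical values. -/
def IsZk (m k : ℕ) (Z : Evec m → Evec m → ℝ) : Prop :=
  (∀ v : Evec m, IsHk m k (fun u => Z u v)) ∧
  (∀ p : Evec m → ℝ, IsHk m k p → ∀ v : Evec m, (∫ u, Z u v * p u ∂(sphereM m)) = p v) ∧
  (∀ u v : Evec m, Z u v = Z v u) ∧
  (∀ u v : Evec m, ‖u‖ ≤ 1 → ‖v‖ ≤ 1 → |Z u v| ≤ (hdim m k : ℝ)) ∧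
  (∀ (A : Evec m ≃ₗᵢ[ℝ] Evec m) (u v : Evec m), Z (A u) (A v) = Z u v)

/-- The point `(x', y) ∈ ℝ^{d+1}` with first `d` coordinates `x'` and last coordinate `y`. -/
def upP (d : ℕ) (x' : Evec d) (y : ℝ) : Evec (d + 1) :=
  (EuclideanSpace.equiv (Fin (d + 1)) ℝ).symm
    (Fin.snoc (⇑(EuclideanSpace.equiv (Fin d) ℝ) x') y)

/-- The first `d` coordinates of a point of `ℝ^{d+1}`. -/
def downP (d : ℕ) (x : Evec (d + 1)) : Evec d :=
  (EuclideanSpace.equiv (Fin d) ℝ).symm (fun i => x (Fin.castSucc i))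

/-- The last coordinate of a point of `ℝ^{d+1}`. -/
def lastP (d : ℕ) (x : Evec (d + 1)) : ℝ := x (Fin.last d)

/-- The Poisson kernel `P_H` for bosonic Laplacians in the upper half-space `ℝ^{d+1}_+`,
`P_H(x,t,u,v) = c_{m,k} (y/|x-t|^m) Z_k(R_{x-t}(u), v)` with `m = d+1`, `x = (x',y)`,
`t = (t',0)`. -/
def PH (d k : ℕ) (Z : Evec (d + 1) → Evec (d + 1) → ℝ) (x' : Evec d) (y : ℝ)
    (t' : Evec d) (u v : Evec (d + 1)) : ℝ :=
  cmk (d + 1) k * (y / ‖upP d x' y - upP d t' 0‖ ^ (d + 1)) *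
    Z (reflv (upP d x' y - upP d t' 0) u) v

/-- The Poisson integral `P_H[f]` in the upper half-space. -/
def PHint (d k : ℕ) (Z : Evec (d + 1) → Evec (d + 1) → ℝ)
    (f : Evec d → Evec (d + 1) → ℝ) (x' : Evec d) (y : ℝ) (v : Evec (d + 1)) : ℝ :=
  ∫ t' : Evec d, (∫ u, PH d k Z x' y t' u v * f t' u ∂(sphereM (d + 1)))

/-- The Poisson kernel `P_B` for bosonic Laplacians in the unit ball. -/
def PB (m k : ℕ) (Z : Evec m → Evec m → ℝ) (x ζ ω ν : Evec m) : ℝ :=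
  (cmk m k / 2) * ((1 - ‖x‖ ^ 2) / ‖x - ζ‖ ^ m) * Z (reflv (x - ζ) ω) ν

/-- The Poisson integral `P_B[h]` in the unit ball. -/
def PBint (m k : ℕ) (Z : Evec m → Evec m → ℝ) (h : Evec m → Evec m → ℝ)
    (x ν : Evec m) : ℝ :=
  ∫ ζ, (∫ ω, PB m k Z x ζ ω ν * h ζ ω ∂(sphereM m)) ∂(sphereM m)

/-- Partial derivative in the first (`x`) variable. -/
def pd1 {m : ℕ} (i : Fin m) (f : Evec m → Evec m → ℝ) : Evec m → Evec m → ℝ :=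
  fun x u => fderiv ℝ (fun x₁ => f x₁ u) x (EuclideanSpace.single i 1)

/-- Partial derivative in the second (`u`) variable. -/
def pd2 {m : ℕ} (i : Fin m) (f : Evec m → Evec m → ℝ) : Evec m → Evec m → ℝ :=
  fun x u => fderiv ℝ (fun u₁ => f x u₁) u (EuclideanSpace.single i 1)

/-- The bosonic Laplacian `𝒟_k`. -/
def Dk (m k : ℕ) (f : Evec m → Evec m → ℝ) : Evec m → Evec m → ℝ := fun x u =>
  (∑ i : Fin m, pd1 i (pd1 i f) x u)
    - (4 / ((m : ℝ) + 2 * k - 2)) *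
        ∑ i : Fin m, ∑ j : Fin m, u i * pd1 i (pd2 j (pd1 j f)) x u
    + (4 * ‖u‖ ^ 2 / (((m : ℝ) + 2 * k - 2) * ((m : ℝ) + 2 * k - 4))) *
        ∑ i : Fin m, ∑ j : Fin m, pd2 i (pd1 i (pd2 j (pd1 j f))) x u

/-- `f ∈ C²(Ω×𝔹^m, ℋ_k)`: twice continuously differentiable on `Ω × 𝔹^m` and, for each
fixed `x ∈ Ω`, coinciding in the second variable with an element of `ℋ_k`. -/
def C2Hk (m k : ℕ) (Ω : Set (Evec m)) (f : Evec m → Evec m → ℝ) : Prop :=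
  ContDiffOn ℝ 2 (fun q : Evec m × Evec m => f q.1 q.2) (Ω ×ˢ ball (0 : Evec m) 1) ∧
  ∀ x ∈ Ω, ∃ q, IsHk m k q ∧ ∀ u ∈ closedBall (0 : Evec m) 1, f x u = q u

/-- The `L^p` norm `(∫_{ℝ^{m-1}} ∫_{𝕊^{m-1}} |f(x',u)|^p dS(u) dx')^{1/p}` (`m = d+1`),
valued in `ℝ≥0∞`. -/
def lpH (d : ℕ) (p : ℝ) (f : Evec d → Evec (d + 1) → ℝ) : ENNReal :=
  (∫⁻ x' : Evec d, ∫⁻ u, ENNReal.ofReal (|f x' u| ^ p) ∂(sphereM (d + 1))) ^ (1 / p)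

/-- `f ∈ L^p(ℝ^{m-1}×𝔹^m, ℋ_k)` (`m = d+1`). -/
def MemLpH (d k : ℕ) (p : ℝ) (f : Evec d → Evec (d + 1) → ℝ) : Prop :=
  Measurable (fun q : Evec d × Evec (d + 1) => f q.1 q.2) ∧
  (∀ x' : Evec d, ∃ q, IsHk (d + 1) k q ∧
    ∀ u ∈ closedBall (0 : Evec (d + 1)) 1, f x' u = q u) ∧
  lpH d p f < ⊤

/-- The `L^p` norm `(∫_{𝕊^{m-1}} ∫_{𝕊^{m-1}} |h(ζ,ω)|^p dS(ω) dS(ζ))^{1/p}`,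
valued in `ℝ≥0∞`. -/
def lpS (m : ℕ) (p : ℝ) (h : Evec m → Evec m → ℝ) : ENNReal :=
  (∫⁻ ζ, ∫⁻ ω, ENNReal.ofReal (|h ζ ω| ^ p) ∂(sphereM m) ∂(sphereM m)) ^ (1 / p)

/-- `h ∈ L^p(𝕊^{m-1}×𝔹^m, ℋ_k)`. -/
def MemLpS (m k : ℕ) (p : ℝ) (h : Evec m → Evec m → ℝ) : Prop :=
  Measurable (fun q : Evec m × Evec m => h q.1 q.2) ∧
  (∀ ζ : Evec m, ‖ζ‖ = 1 → ∃ q, IsHk m k q ∧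
    ∀ ω ∈ closedBall (0 : Evec m) 1, h ζ ω = q ω) ∧
  lpS m p h < ⊤

/-- Iterated partial derivative `D_x^α` in the first variable, for a multi-index `α ∈ ℕ^m`. -/
def Dx {m : ℕ} (α : Fin m → ℕ) (f : Evec m → Evec m → ℝ) : Evec m → Evec m → ℝ :=
  (List.finRange m).foldr (fun i g => (pd1 i)^[α i] g) f

/-- Iterated partial derivative `D_ν^β` in the second variable, for a multi-index `β ∈ ℕ^m`. -/
def Dv {m : ℕ} (β : Fin m → ℕ) (f : Evec m → Evec m → ℝ) : Evec m → Evec m → ℝ :=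
  (List.finRange m).foldr (fun i g => (pd2 i)^[β i] g) f

/-!
Put `N = m + 2k - 2` and take `a = 0`. On a smaller ball `f = ∑ φ_α(x) p_α(u)` with `p_α ∈ ℋ_k` and
`φ_α` compactly supported of class `C²`, and `𝒟_k f = ∑ ∂_i ∂_j φ_α · σ_ij p_α`, where the symbol
`σ_ij` of `𝒟_k` preserves `ℋ_k`.

The functions `S_ij(x) = |x|^{2-m} (σ_ij p)(R_x ν)` are homogeneous of degree `2 - m` and satisfy
`∑ ∂_i ∂_j S_ij = 0` off the origin, so Green's formula gives `∫ (∂_i ∂_j φ)(x) S_ij(x - y) dx =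
c φ(y) p(ν)`, summed over `i` and `j`. The constant `c` is a flux, and it is computed from the mean
over the sphere of `p(R_ω ν)`, that is, from Gaussian moments.

Replacing `ν` by `R_y ν` and integrating over `|y| < ρ`, everything rests on a shell theorem: for
`|x| > ρ` and `P ∈ ℋ_k`, the integral of `|x - y|^{2-m} P(R_{x-y} R_y ν)` over `|y| < ρ` is
`(m - 2) / N` times the volume of the ball times `|x|^{2-m} P(R_x ν)`. Inversion in the unit sphere
turns `R_{x-y} R_y` into `R_x R_w`, where `w` is the difference of the inverted points, and
splits the integral into an elementary radial one and the same spherical mean. Since `𝒟_k f`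
vanishes for `|x| ≤ ρ`, the mean of `f(y, R_y ν)` over the ball is a multiple of `f(0, ν)`.
-/

section PolarCoordinates

lemma integral_volumeIoiPow (n : ℕ) (g : ℝ → ℝ) :
    ∫ r : Set.Ioi (0 : ℝ), g r ∂(Measure.volumeIoiPow n) =
      ∫ r in Set.Ioi (0 : ℝ), r ^ n * g r := by
  simp only [Measure.volumeIoiPow, ENNReal.ofReal]
  rw [integral_withDensity_eq_integral_smul,
    integral_subtype_comap measurableSet_Ioi fun a ↦ Real.toNNReal (a ^ n) • g a,
    setIntegral_congr_fun measurableSet_Ioi fun x hx ↦ ?_]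
  · simp only [NNReal.smul_def, Real.coe_toNNReal _ (pow_nonneg (Set.mem_Ioi.1 hx).le _),
      smul_eq_mul]
  · exact (measurable_subtype_coe.pow_const _).real_toNNReal

variable {E : Type*} [NormedAddCommGroup E] [NormedSpace ℝ E]

lemma homeomorphUnitSphereProd_snd_smul_fst (x : ({(0 : E)}ᶜ : Set E)) :
    (homeomorphUnitSphereProd E x).2.1 • (homeomorphUnitSphereProd E x).1.1 = x.1 := by
  have hx : ‖x.1‖ ≠ 0 := norm_ne_zero_iff.2 x.2
  simp [smul_smul, hx]

variable [MeasurableSpace E]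

/-- The mean over the unit sphere of the restriction of `F`, for the surface measure induced
by `μ`. -/
def angularMean (μ : Measure E) (F : E → ℝ) : ℝ :=
  (∫ ω : sphere (0 : E) 1, F ω ∂μ.toSphere) / μ.toSphere.real Set.univ

variable (μ : Measure E)

lemma angularMean_congr {F G : E → ℝ} (h : ∀ ω, ‖ω‖ = 1 → F ω = G ω) :
    angularMean μ F = angularMean μ G := by
  simp only [angularMean]
  congr 1
  exact integral_congr_ae (.of_forall fun ω => h ω (by simp))

lemma angularMean_const_mul (c : ℝ) (F : E → ℝ) :
    angularMean μ (fun ω => c * F ω) = c * angularMean μ F := by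
  rw [angularMean, integral_const_mul, mul_div_assoc, angularMean]

variable [BorelSpace E] [FiniteDimensional ℝ E] [μ.IsAddHaarMeasure]

lemma toSphere_real_univ_pos [Nontrivial E] : 0 < μ.toSphere.real Set.univ := by
  rw [measureReal_def, ENNReal.toReal_pos_iff, Measure.measure_univ_pos]
  exact ⟨μ.toSphere_ne_zero, measure_lt_top _ _⟩

lemma integral_eq_integral_sphere_prod_Ioi [Nontrivial E] (G : E → ℝ) :
    ∫ y, G y ∂μ = ∫ z : sphere (0 : E) 1 × Set.Ioi (0 : ℝ), G (z.2.1 • z.1.1)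
      ∂(μ.toSphere.prod (Measure.volumeIoiPow (Module.finrank ℝ E - 1))) := by
  rw [← μ.measurePreserving_homeomorphUnitSphereProd.integral_comp
    (Homeomorph.measurableEmbedding _)]
  simp only [homeomorphUnitSphereProd_snd_smul_fst]
  rw [integral_subtype_comap (measurableSet_singleton _).compl G, restrict_compl_singleton]

variable {μ} in
lemma integrable_comp_smul_sphere_prod_Ioi {G : E → ℝ} (hG : Integrable G μ) :
    Integrable (fun z : sphere (0 : E) 1 × Set.Ioi (0 : ℝ) => G (z.2.1 • z.1.1))
      (μ.toSphere.prod (Measure.volumeIoiPow (Module.finrank ℝ E - 1))) := by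
  rw [← μ.measurePreserving_homeomorphUnitSphereProd.integrable_comp_emb
    (Homeomorph.measurableEmbedding _)]
  simp only [Function.comp_def, homeomorphUnitSphereProd_snd_smul_fst]
  exact (integrableOn_iff_comap_subtypeVal (measurableSet_singleton (0 : E)).compl).1
    (hG.integrableOn (s := {(0 : E)}ᶜ))

lemma integral_mul_radial [Nontrivial E] {F : E → ℝ}
    (hF : ∀ (c : ℝ) (y : E), 0 < c → F (c • y) = F y) (τ : ℝ → ℝ) :
    ∫ y, F y * τ ‖y‖ ∂μ = angularMean μ F * ∫ y, τ ‖y‖ ∂μ := by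
  have polar : ∀ H : E → ℝ, (∀ (c : ℝ) (y : E), 0 < c → H (c • y) = H y) →
      ∫ y, H y * τ ‖y‖ ∂μ = (∫ ω : sphere (0 : E) 1, H ω ∂μ.toSphere) *
        ∫ r : Set.Ioi (0 : ℝ), τ r ∂(Measure.volumeIoiPow (Module.finrank ℝ E - 1)) := by
    intro H hH
    rw [integral_eq_integral_sphere_prod_Ioi, ← integral_prod_mul]
    refine integral_congr_ae (.of_forall fun z => ?_)
    have hz : (0 : ℝ) < z.2.1 := z.2.2
    simp only [hH _ _ hz, norm_smul, Real.norm_eq_abs, abs_of_pos hz, norm_eq_of_mem_sphere,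
      mul_one]
  have radial := polar (fun _ => 1) (fun _ _ _ => rfl)
  simp only [one_mul, integral_const, smul_eq_mul, mul_one] at radial
  rw [polar F hF, radial, angularMean]
  have := (toSphere_real_univ_pos μ).ne'
  field_simp

lemma integrable_comp_toSphere {F : E → ℝ} (hF : Continuous F) :
    Integrable (fun ω : sphere (0 : E) 1 => F ω) μ.toSphere :=
  (hF.comp continuous_subtype_val).integrable_of_hasCompactSupport (.of_compactSpace _)

lemma angularMean_add {F G : E → ℝ} (hF : Continuous F) (hG : Continuous G) :
    angularMean μ (fun ω => F ω + G ω) = angularMean μ F + angularMean μ G := by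
  rw [angularMean, integral_add (integrable_comp_toSphere μ hF) (integrable_comp_toSphere μ hG),
    add_div, angularMean, angularMean]

lemma angularMean_sum {ι : Type*} (s : Finset ι) {F : ι → E → ℝ}
    (hF : ∀ i ∈ s, Continuous (F i)) :
    angularMean μ (fun ω => ∑ i ∈ s, F i ω) = ∑ i ∈ s, angularMean μ (F i) := by
  simp only [angularMean]
  rw [integral_finsetSum _ fun i hi => integrable_comp_toSphere μ (hF i hi), Finset.sum_div]

lemma angularMean_comp_linearIsometryEquiv [Nontrivial E] {L : E ≃ₗᵢ[ℝ] E}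
    (hL : MeasurePreserving L μ μ) (F : E → ℝ) :
    angularMean μ (fun ω => F (L ω)) = angularMean μ F := by
  set G : E → ℝ := fun y => F (‖y‖⁻¹ • y)
  have hG : ∀ (c : ℝ) (y : E), 0 < c → G (c • y) = G y := fun c y hc => by
    simp only [G, norm_smul, Real.norm_eq_abs, abs_of_pos hc, mul_inv, smul_smul]
    rw [mul_right_comm, inv_mul_cancel₀ hc.ne', one_mul]
  set τ : ℝ → ℝ := (Set.Iio 1).indicator 1
  have hτ : ∫ y : E, τ ‖y‖ ∂μ = μ.real (ball (0 : E) 1) := by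
    rw [← integral_indicator_one measurableSet_ball]
    refine integral_congr_ae (.of_forall fun y => ?_)
    by_cases hy : ‖y‖ < 1 <;> simp [τ, hy]
  have hball : 0 < μ.real (ball (0 : E) 1) :=
    ENNReal.toReal_pos (measure_ball_pos μ _ one_pos).ne' measure_ball_lt_top.ne
  have invariance : ∫ y, G (L y) * τ ‖y‖ ∂μ = ∫ y, G y * τ ‖y‖ ∂μ := by
    simpa only [L.norm_map] using hL.integral_comp L.toHomeomorph.measurableEmbedding
      (fun y => G y * τ ‖y‖)
  rw [integral_mul_radial μ (fun c y hc => by rw [map_smul, hG c _ hc]),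
    integral_mul_radial μ hG, hτ] at invariance
  rw [angularMean_congr μ (F := F) (G := G) fun ω hω => by simp [G, hω],
    ← mul_right_cancel₀ hball.ne' invariance]
  exact angularMean_congr μ fun ω hω => by simp [G, hω]

end PolarCoordinates

/-- The polynomial function on `ℝ^m` defined by `P`. -/
def polyFun {m : ℕ} (P : MvPolynomial (Fin m) ℝ) (x : Evec m) : ℝ :=
  MvPolynomial.eval (fun i => x i) P

/-- The formal derivative of polynomials in the direction `v`, written `∂[v]`. -/
def dirDeriv {m : ℕ} (v : Evec m) :
    Derivation ℝ (MvPolynomial (Fin m) ℝ) (MvPolynomial (Fin m) ℝ) :=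
  MvPolynomial.mkDerivation ℝ (fun i => MvPolynomial.C (v i))

local notation:max "∂[" v "]" => dirDeriv v

/-- The standard basis vectors of `ℝ^m`. -/
abbrev basisVec {m : ℕ} (i : Fin m) : Evec m := EuclideanSpace.single i 1

/-- The linear form `x ↦ ⟨v, x⟩` as a polynomial. -/
def linForm {m : ℕ} (v : Evec m) : MvPolynomial (Fin m) ℝ :=
  ∑ i, MvPolynomial.C (v i) * MvPolynomial.X i

/-- The polynomial `|x|²`. -/
def normSqPoly (m : ℕ) : MvPolynomial (Fin m) ℝ := ∑ i, MvPolynomial.X i * MvPolynomial.X i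

/-- A solid harmonic of degree `k`: the polynomial-level counterpart of the elements of `ℋ_k`. -/
structure IsSolidHarmonic {m : ℕ} (k : ℕ) (P : MvPolynomial (Fin m) ℝ) : Prop where
  isHomogeneous : P.IsHomogeneous k
  laplacian_eq_zero : ∑ i, ∂[basisVec i] (∂[basisVec i] P) = 0

section Polynomials

variable {m : ℕ}

lemma polyFun_add (P Q : MvPolynomial (Fin m) ℝ) (x : Evec m) :
    polyFun (P + Q) x = polyFun P x + polyFun Q x := by
  simp [polyFun]

lemma polyFun_sub (P Q : MvPolynomial (Fin m) ℝ) (x : Evec m) :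
    polyFun (P - Q) x = polyFun P x - polyFun Q x := by
  simp [polyFun]

lemma polyFun_mul (P Q : MvPolynomial (Fin m) ℝ) (x : Evec m) :
    polyFun (P * Q) x = polyFun P x * polyFun Q x := by
  simp [polyFun]

lemma polyFun_pow (P : MvPolynomial (Fin m) ℝ) (n : ℕ) (x : Evec m) :
    polyFun (P ^ n) x = polyFun P x ^ n := by
  simp [polyFun]

lemma polyFun_smul (c : ℝ) (P : MvPolynomial (Fin m) ℝ) (x : Evec m) :
    polyFun (c • P) x = c * polyFun P x := by
  simp [polyFun]

lemma polyFun_sum {ι : Type*} (s : Finset ι) (P : ι → MvPolynomial (Fin m) ℝ) (x : Evec m) :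
    polyFun (∑ i ∈ s, P i) x = ∑ i ∈ s, polyFun (P i) x := by
  simp [polyFun]

@[simp] lemma polyFun_zero (x : Evec m) : polyFun (0 : MvPolynomial (Fin m) ℝ) x = 0 := by
  simp [polyFun]

@[simp] lemma polyFun_one (x : Evec m) : polyFun (1 : MvPolynomial (Fin m) ℝ) x = 1 := by
  simp [polyFun]

@[simp] lemma polyFun_C (c : ℝ) (x : Evec m) : polyFun (MvPolynomial.C c) x = c := by
  simp [polyFun]

@[simp] lemma polyFun_X (i : Fin m) (x : Evec m) : polyFun (MvPolynomial.X i) x = x i := by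
  simp [polyFun]

lemma inner_eq_sum (v w : Evec m) : ⟪v, w⟫ = ∑ i, v i * w i := by
  simp [PiLp.inner_apply, mul_comm]

lemma polyFun_linForm (v x : Evec m) : polyFun (linForm v) x = ⟪v, x⟫ := by
  simp [linForm, polyFun_sum, polyFun_mul, inner_eq_sum]

lemma polyFun_normSqPoly (x : Evec m) : polyFun (normSqPoly m) x = ‖x‖ ^ 2 := by
  rw [← real_inner_self_eq_norm_sq, inner_eq_sum]
  simp [normSqPoly, polyFun_sum, polyFun_mul]

lemma polyFun_injective {P Q : MvPolynomial (Fin m) ℝ} (h : ∀ x, polyFun P x = polyFun Q x) :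
    P = Q :=
  MvPolynomial.funext fun x => by simpa [polyFun] using h (WithLp.toLp 2 x)

lemma contDiff_polyFun (P : MvPolynomial (Fin m) ℝ) : ContDiff ℝ ⊤ (polyFun P) := by
  induction P using MvPolynomial.induction_on with
  | C c => simpa only [funext (polyFun_C c)] using contDiff_const
  | add P Q hP hQ => simpa only [funext (polyFun_add P Q)] using hP.add hQ
  | mul_X P i hP =>
    have hX : ContDiff ℝ ⊤ (fun x : Evec m => x i) := by fun_prop
    simpa only [funext (polyFun_mul P _), polyFun_X] using hP.mul hX

lemma differentiable_polyFun (P : MvPolynomial (Fin m) ℝ) : Differentiable ℝ (polyFun P) :=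
  (contDiff_polyFun P).differentiable (by simp)

lemma continuous_polyFun (P : MvPolynomial (Fin m) ℝ) : Continuous (polyFun P) :=
  (contDiff_polyFun P).continuous

lemma dirDeriv_X (v : Evec m) (i : Fin m) : ∂[v] (MvPolynomial.X i) = MvPolynomial.C (v i) := by
  simp [dirDeriv]

lemma dirDeriv_C (v : Evec m) (c : ℝ) : ∂[v] (MvPolynomial.C c) = 0 := by
  simp [dirDeriv]

lemma dirDeriv_mul (v : Evec m) (P Q : MvPolynomial (Fin m) ℝ) :
    ∂[v] (P * Q) = P * ∂[v] Q + Q * ∂[v] P := by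
  simp

lemma fderiv_polyFun (P : MvPolynomial (Fin m) ℝ) (x v : Evec m) :
    fderiv ℝ (polyFun P) x v = polyFun (∂[v] P) x := by
  induction P using MvPolynomial.induction_on with
  | C c =>
    rw [show polyFun (MvPolynomial.C c) = fun _ : Evec m => c from funext (polyFun_C c),
      dirDeriv_C]
    simp
  | add P Q hP hQ =>
    rw [show polyFun (P + Q) = fun x => polyFun P x + polyFun Q x from funext (polyFun_add P Q),
      map_add, polyFun_add,
      fderiv_fun_add (differentiable_polyFun P x) (differentiable_polyFun Q x)]
    simp [hP, hQ]
  | mul_X P i hP =>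
    have hX : HasFDerivAt (polyFun (MvPolynomial.X i)) (EuclideanSpace.proj (𝕜 := ℝ) i) x := by
      rw [show polyFun (MvPolynomial.X i) = fun x : Evec m => x i from funext (polyFun_X i)]
      exact (EuclideanSpace.proj (𝕜 := ℝ) i).hasFDerivAt
    rw [show polyFun (P * MvPolynomial.X i) = fun x => polyFun P x * polyFun (MvPolynomial.X i) x
      from funext (polyFun_mul P _), dirDeriv_mul, polyFun_add, polyFun_mul, polyFun_mul,
      fderiv_fun_mul (differentiable_polyFun P x) (differentiable_polyFun _ x), hX.fderiv,
      dirDeriv_X]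
    simp [hP]

lemma dirDeriv_comm (v w : Evec m) (P : MvPolynomial (Fin m) ℝ) :
    ∂[v] (∂[w] P) = ∂[w] (∂[v] P) := by
  have bracket_eq_zero :
      ⁅∂[v], ∂[w]⁆ = (0 : Derivation ℝ (MvPolynomial (Fin m) ℝ) (MvPolynomial (Fin m) ℝ)) :=
    MvPolynomial.derivation_ext fun i => by simp [Derivation.commutator_apply, dirDeriv_X]
  rw [← sub_eq_zero, ← Derivation.commutator_apply, bracket_eq_zero, Derivation.zero_apply]

lemma dirDeriv_eq_sum (v : Evec m) (P : MvPolynomial (Fin m) ℝ) :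
    ∂[v] P = ∑ i, v i • ∂[basisVec i] P := by
  refine polyFun_injective fun x => ?_
  have expansion : v = ∑ i, v i • basisVec i := by
    ext j
    simp [Pi.single_apply]
  simp only [polyFun_sum, polyFun_smul, ← fderiv_polyFun]
  conv_lhs => rw [expansion, map_sum]
  simp only [map_smul, smul_eq_mul]

lemma dirDeriv_basisVec (i : Fin m) (P : MvPolynomial (Fin m) ℝ) :
    ∂[basisVec i] P = MvPolynomial.pderiv i P := by
  have derivations_eq : ∂[basisVec i] = MvPolynomial.pderiv (R := ℝ) i := by
    refine MvPolynomial.derivation_ext fun j => ?_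
    rw [dirDeriv_X, MvPolynomial.pderiv_X]
    by_cases hij : i = j <;> simp [hij, eq_comm]
  rw [derivations_eq]

lemma polyFun_dirDeriv_eq_sum (v : Evec m) (P : MvPolynomial (Fin m) ℝ) (x : Evec m) :
    polyFun (∂[v] P) x = ∑ i, v i * polyFun (∂[basisVec i] P) x := by
  rw [dirDeriv_eq_sum, polyFun_sum]
  simp only [polyFun_smul]

lemma polyFun_dirDeriv_add (v w : Evec m) (P : MvPolynomial (Fin m) ℝ) (x : Evec m) :
    polyFun (∂[v + w] P) x = polyFun (∂[v] P) x + polyFun (∂[w] P) x := by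
  simp only [← fderiv_polyFun, map_add]

lemma polyFun_dirDeriv_sub (v w : Evec m) (P : MvPolynomial (Fin m) ℝ) (x : Evec m) :
    polyFun (∂[v - w] P) x = polyFun (∂[v] P) x - polyFun (∂[w] P) x := by
  simp only [← fderiv_polyFun, map_sub]

lemma polyFun_dirDeriv_smul (c : ℝ) (v : Evec m) (P : MvPolynomial (Fin m) ℝ) (x : Evec m) :
    polyFun (∂[c • v] P) x = c * polyFun (∂[v] P) x := by
  simp only [← fderiv_polyFun, map_smul, smul_eq_mul]

lemma pdv_polyFun (i : Fin m) (P : MvPolynomial (Fin m) ℝ) :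
    pdv i (polyFun P) = polyFun (∂[basisVec i] P) :=
  funext fun x => fderiv_polyFun P x _

lemma lapl_polyFun (P : MvPolynomial (Fin m) ℝ) (x : Evec m) :
    lapl (polyFun P) x = polyFun (∑ i, ∂[basisVec i] (∂[basisVec i] P)) x := by
  simp [lapl, pdv_polyFun, polyFun_sum]

lemma dirDeriv_linForm (v w : Evec m) : ∂[w] (linForm v) = MvPolynomial.C ⟪v, w⟫ := by
  simp [linForm, dirDeriv_X, inner_eq_sum]

lemma linForm_basisVec (i : Fin m) : linForm (basisVec i) = MvPolynomial.X i := by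
  simp [linForm, PiLp.single_apply]

lemma dirDeriv_normSqPoly (v : Evec m) : ∂[v] (normSqPoly m) = (2 : ℝ) • linForm v := by
  simp only [normSqPoly, map_sum, dirDeriv_mul, dirDeriv_X, linForm, Finset.smul_sum, two_smul]
  exact Finset.sum_congr rfl fun i _ => by ring

lemma isHomogeneous_linForm (v : Evec m) : (linForm v).IsHomogeneous 1 :=
  MvPolynomial.IsHomogeneous.sum _ _ _ fun i _ => (MvPolynomial.isHomogeneous_X ℝ i).C_mul (v i)

lemma isHomogeneous_normSqPoly : (normSqPoly m).IsHomogeneous 2 :=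
  MvPolynomial.IsHomogeneous.sum _ _ _ fun i _ =>
    (MvPolynomial.isHomogeneous_X ℝ i).mul (MvPolynomial.isHomogeneous_X ℝ i)

lemma isHomogeneous_smul {k : ℕ} {P : MvPolynomial (Fin m) ℝ} (hP : P.IsHomogeneous k) (c : ℝ) :
    (c • P).IsHomogeneous k := by
  rw [MvPolynomial.smul_eq_C_mul]
  exact hP.C_mul c

section Homogeneous

variable {k : ℕ} {P : MvPolynomial (Fin m) ℝ}

lemma polyFun_smul_of_isHomogeneous (hP : P.IsHomogeneous k) (c : ℝ) (x : Evec m) :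
    polyFun P (c • x) = c ^ k * polyFun P x := by
  simp only [polyFun, MvPolynomial.eval_eq, Finset.mul_sum]
  refine Finset.sum_congr rfl fun d hd => ?_
  have sum_eq : ∑ i ∈ d.support, d i = k := by
    simpa [Finsupp.weight_apply, Finsupp.sum] using hP (MvPolynomial.mem_support_iff.1 hd)
  simp only [PiLp.smul_apply, smul_eq_mul, mul_pow, Finset.prod_mul_distrib,
    Finset.prod_pow_eq_pow_sum, sum_eq]
  ring

lemma isHomogeneous_dirDeriv (hP : P.IsHomogeneous k) (v : Evec m) :
    (∂[v] P).IsHomogeneous (k - 1) := by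
  rw [dirDeriv_eq_sum]
  refine MvPolynomial.IsHomogeneous.sum _ _ _ fun i _ => isHomogeneous_smul ?_ _
  rw [dirDeriv_basisVec]
  exact hP.pderiv

lemma exists_eq_C_of_isHomogeneous_zero (hP : P.IsHomogeneous 0) :
    ∃ c, P = MvPolynomial.C c := by
  rw [← MvPolynomial.totalDegree_zero_iff_isHomogeneous,
    MvPolynomial.totalDegree_eq_zero_iff_eq_C] at hP
  exact ⟨_, hP⟩

lemma dirDeriv_eq_zero_of_isHomogeneous_zero (hP : P.IsHomogeneous 0) (v : Evec m) :
    ∂[v] P = 0 := by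
  obtain ⟨c, rfl⟩ := exists_eq_C_of_isHomogeneous_zero hP
  exact dirDeriv_C v c

lemma polyFun_dirDeriv_self (hP : P.IsHomogeneous k) (x : Evec m) :
    polyFun (∂[x] P) x = k * polyFun P x := by
  have euler := congrArg (fun Q => polyFun Q x) hP.sum_X_mul_pderiv
  simp only [polyFun_sum, polyFun_mul, polyFun_X] at euler
  simp only [polyFun_dirDeriv_eq_sum x, dirDeriv_basisVec, euler]
  simp [polyFun]

lemma polyFun_dirDeriv_dirDeriv_self (hP : P.IsHomogeneous k) (x v : Evec m) :
    polyFun (∂[x] (∂[v] P)) x = ((k : ℝ) - 1) * polyFun (∂[v] P) x := by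
  rcases Nat.eq_zero_or_pos k with rfl | hk
  · simp [dirDeriv_eq_zero_of_isHomogeneous_zero hP]
  · rw [polyFun_dirDeriv_self (isHomogeneous_dirDeriv hP v)]
    push_cast [Nat.cast_sub hk]
    ring

lemma IsSolidHarmonic.dirDeriv (hP : IsSolidHarmonic k P) (v : Evec m) :
    IsSolidHarmonic (k - 1) (∂[v] P) where
  isHomogeneous := isHomogeneous_dirDeriv hP.isHomogeneous v
  laplacian_eq_zero := by
    simpa only [map_sum, dirDeriv_comm v, map_zero] using
      congrArg (_root_.dirDeriv v) hP.laplacian_eq_zero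

lemma polyFun_smul_eq_sum_homogeneousComponent (P : MvPolynomial (Fin m) ℝ) (c : ℝ)
    (x : Evec m) :
    polyFun P (c • x) = ∑ j ∈ Finset.range (P.totalDegree + 1),
      c ^ j * polyFun (MvPolynomial.homogeneousComponent j P) x := by
  conv_lhs => rw [← MvPolynomial.sum_homogeneousComponent P, polyFun_sum]
  exact Finset.sum_congr rfl fun j _ =>
    polyFun_smul_of_isHomogeneous (MvPolynomial.homogeneousComponent_isHomogeneous j P) c x

lemma isHomogeneous_of_polyFun_smul
    (h : ∀ (c : ℝ) (x : Evec m), polyFun P (c • x) = c ^ k * polyFun P x) :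
    P.IsHomogeneous k := by
  suffices hP : MvPolynomial.homogeneousComponent k P = P from
    hP ▸ MvPolynomial.homogeneousComponent_isHomogeneous k P
  refine polyFun_injective fun x => ?_
  have comparison : ∑ j ∈ Finset.range (P.totalDegree + 1), Polynomial.monomial j
      (polyFun (MvPolynomial.homogeneousComponent j P) x) =
        Polynomial.monomial k (polyFun P x) := by
    refine Polynomial.funext fun c => ?_
    simp only [Polynomial.eval_finsetSum, Polynomial.eval_monomial]
    rw [mul_comm (polyFun P x), ← h, polyFun_smul_eq_sum_homogeneousComponent]
    exact Finset.sum_congr rfl fun j _ => mul_comm _ _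
  have coeff_k := congrArg (fun Q => Polynomial.coeff Q k) comparison
  simp only [Polynomial.finsetSum_coeff, Polynomial.coeff_monomial, Finset.sum_ite_eq',
    Finset.mem_range, if_true] at coeff_k
  split_ifs at coeff_k with hk
  · exact coeff_k
  · rw [MvPolynomial.homogeneousComponent_eq_zero _ _ (by lia), polyFun_zero, coeff_k]

lemma hasDerivAt_polyFun_add_smul (P : MvPolynomial (Fin m) ℝ) (x v : Evec m) (t : ℝ) :
    HasDerivAt (fun s : ℝ => polyFun P (x + s • v)) (polyFun (∂[v] P) (x + t • v)) t := by
  have line : HasDerivAt (fun s : ℝ => x + s • v) v t := by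
    simpa using ((hasDerivAt_id t).smul_const v).const_add x
  have := (differentiable_polyFun P (x + t • v)).hasFDerivAt.comp_hasDerivAt t line
  rwa [fderiv_polyFun] at this

lemma hasDerivAt_sum_pow_div_factorial_mul (a : ℕ → ℝ) (n : ℕ) (t : ℝ) :
    HasDerivAt (fun s : ℝ => ∑ i ∈ Finset.range (n + 1), s ^ i / i.factorial * a i)
      (∑ i ∈ Finset.range n, t ^ i / i.factorial * a (i + 1)) t := by
  refine (HasDerivAt.fun_sum (u := Finset.range (n + 1)) (A := fun i s => s ^ i / i.factorial * a i)
    fun i _ => ((hasDerivAt_pow i t).div_const (i.factorial : ℝ)).mul_const _).congr_deriv ?_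
  rw [Finset.sum_range_succ' _ n]
  simp only [Nat.factorial_succ, zero_mul, zero_div, add_zero, Nat.cast_zero]
  refine Finset.sum_congr rfl fun i _ => ?_
  have := Nat.factorial_ne_zero i
  push_cast
  field_simp

lemma polyFun_add_smul (hP : P.IsHomogeneous k) (x v : Evec m) (t : ℝ) :
    polyFun P (x + t • v) =
      ∑ i ∈ Finset.range (k + 1), t ^ i / i.factorial * polyFun ((∂[v])^[i] P) x := by
  induction k generalizing P t with
  | zero =>
    obtain ⟨c, rfl⟩ := exists_eq_C_of_isHomogeneous_zero hP
    simp
  | succ k ih =>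
    have hsub (s : ℝ) : HasDerivAt (fun s : ℝ => polyFun P (x + s • v) -
        ∑ i ∈ Finset.range (k + 1 + 1), s ^ i / i.factorial * polyFun ((∂[v])^[i] P) x) 0 s := by
      refine ((hasDerivAt_polyFun_add_smul P x v s).fun_sub
        (hasDerivAt_sum_pow_div_factorial_mul (fun i => polyFun ((∂[v])^[i] P) x)
          (k + 1) s)).congr_deriv ?_
      rw [ih (isHomogeneous_dirDeriv hP v)]
      simp only [Function.iterate_succ_apply, sub_self]
    have hconst := is_const_of_deriv_eq_zero (fun s => (hsub s).differentiableAt)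
      (fun s => (hsub s).deriv) t 0
    rw [Finset.sum_range_succ' (fun i => (0 : ℝ) ^ i / _ * _)] at hconst
    exact sub_eq_zero.1 (by simpa using hconst)

end Homogeneous

lemma IsHk.exists_isSolidHarmonic {k : ℕ} {p : Evec m → ℝ} (hp : IsHk m k p) :
    ∃ P, IsSolidHarmonic k P ∧ p = polyFun P := by
  obtain ⟨⟨P, hP⟩, hhom, hharm⟩ := hp
  obtain rfl : p = polyFun P := funext hP
  refine ⟨P, ⟨isHomogeneous_of_polyFun_smul hhom, polyFun_injective fun x => ?_⟩, rfl⟩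
  rw [← lapl_polyFun, hharm, polyFun_zero]

end Polynomials

section Gaussian

variable {m : ℕ}

lemma integrable_exp_neg_mul_norm_sq {b : ℝ} (hb : 0 < b) :
    Integrable (fun x : Evec m => Real.exp (-(b * ‖x‖ ^ 2))) := by
  refine (GaussianFourier.integrable_cexp_neg_mul_sq_norm_add (V := Evec m) (b := b)
    (by simpa using hb) 0 0).re.congr (.of_forall fun x => ?_)
  have h_ofReal : (-(b : ℂ) * (‖x‖ : ℂ) ^ 2) = ((-(b * ‖x‖ ^ 2) : ℝ) : ℂ) := by
    push_cast
    ring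
  simp only [zero_mul, add_zero, h_ofReal, ← Complex.ofReal_exp]
  exact Complex.ofReal_re _

lemma le_const_mul_exp_mul_sq {ε : ℝ} (hε : 0 < ε) (t : ℝ) :
    t ≤ (1 / ε + 1) * Real.exp (ε * t ^ 2) := by
  have hεinv : 0 ≤ 1 / ε := by positivity
  calc t ≤ t ^ 2 + 1 / ε + ε * t ^ 2 + 1 := by nlinarith [sq_nonneg (t - 1), sq_nonneg t]
    _ = (1 / ε + 1) * (ε * t ^ 2 + 1) := by field_simp; ring
    _ ≤ (1 / ε + 1) * Real.exp (ε * t ^ 2) := by gcongr; exact Real.add_one_le_exp _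

lemma exists_abs_polyFun_le_exp (P : MvPolynomial (Fin m) ℝ) {ε : ℝ} (hε : 0 < ε) :
    ∃ C : ℝ, ∀ x : Evec m, |polyFun P x| ≤ C * Real.exp (ε * ‖x‖ ^ 2) := by
  induction P using MvPolynomial.induction_on generalizing ε with
  | C c =>
    refine ⟨|c|, fun x => ?_⟩
    rw [polyFun_C]
    exact le_mul_of_one_le_right (abs_nonneg _) (Real.one_le_exp (by positivity))
  | add P Q hP hQ =>
    obtain ⟨C, hC⟩ := hP hε
    obtain ⟨C', hC'⟩ := hQ hε
    refine ⟨C + C', fun x => ?_⟩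
    rw [polyFun_add, add_mul]
    exact (abs_add_le _ _).trans (add_le_add (hC x) (hC' x))
  | mul_X P i hP =>
    obtain ⟨C, hC⟩ := hP (half_pos hε)
    refine ⟨C * (1 / (ε / 2) + 1), fun x => ?_⟩
    have coord_le : |x i| ≤ (1 / (ε / 2) + 1) * Real.exp (ε / 2 * ‖x‖ ^ 2) :=
      (PiLp.norm_apply_le x i).trans (le_const_mul_exp_mul_sq (half_pos hε) ‖x‖)
    rw [polyFun_mul, polyFun_X, abs_mul]
    calc |polyFun P x| * |x i| ≤ (C * Real.exp (ε / 2 * ‖x‖ ^ 2)) *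
          ((1 / (ε / 2) + 1) * Real.exp (ε / 2 * ‖x‖ ^ 2)) :=
          mul_le_mul (hC x) coord_le (abs_nonneg _) ((abs_nonneg _).trans (hC x))
      _ = C * (1 / (ε / 2) + 1) * Real.exp (ε * ‖x‖ ^ 2) := by
          rw [mul_mul_mul_comm, ← Real.exp_add, ← add_mul, add_halves]

lemma integrable_polyFun_mul_gaussian (P : MvPolynomial (Fin m) ℝ) :
    Integrable (fun x : Evec m => polyFun P x * Real.exp (-(‖x‖ ^ 2 / 2))) := by
  obtain ⟨C, hC⟩ := exists_abs_polyFun_le_exp P (ε := 1 / 4) (by norm_num)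
  refine ((integrable_exp_neg_mul_norm_sq (m := m) (b := 1 / 4) (by norm_num)).const_mul C).mono'
    ((continuous_polyFun P).mul (by fun_prop)).aestronglyMeasurable (.of_forall fun x => ?_)
  rw [Real.norm_eq_abs, abs_mul, abs_of_pos (Real.exp_pos _)]
  calc |polyFun P x| * Real.exp (-(‖x‖ ^ 2 / 2))
      ≤ C * Real.exp (1 / 4 * ‖x‖ ^ 2) * Real.exp (-(‖x‖ ^ 2 / 2)) := by gcongr; exact hC x
    _ = C * Real.exp (-(1 / 4 * ‖x‖ ^ 2)) := by rw [mul_assoc, ← Real.exp_add]; ring_nf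

/-- The integral of polynomials against the Gaussian weight `exp (-|x|²/2)`. -/
def gaussianIntegral (m : ℕ) : MvPolynomial (Fin m) ℝ →ₗ[ℝ] ℝ where
  toFun P := ∫ x : Evec m, polyFun P x * Real.exp (-(‖x‖ ^ 2 / 2))
  map_add' P Q := by
    rw [← integral_add (integrable_polyFun_mul_gaussian P) (integrable_polyFun_mul_gaussian Q)]
    simp only [polyFun_add, add_mul]
  map_smul' c P := by
    rw [RingHom.id_apply, smul_eq_mul, ← integral_const_mul]
    simp only [polyFun_smul, mul_assoc]

lemma gaussianIntegral_apply (P : MvPolynomial (Fin m) ℝ) :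
    gaussianIntegral m P = ∫ x : Evec m, polyFun P x * Real.exp (-(‖x‖ ^ 2 / 2)) := rfl

lemma gaussianIntegral_one_pos : 0 < gaussianIntegral m 1 := by
  have total_mass : gaussianIntegral m 1 = ∫ v : Evec m, Real.exp (-(1 / 2) * ‖v‖ ^ 2) := by
    refine integral_congr_ae (.of_forall fun x => ?_)
    simp only [polyFun_one, one_mul]
    ring_nf
  rw [total_mass, GaussianFourier.integral_rexp_neg_mul_sq_norm (by norm_num)]
  positivity

lemma hasFDerivAt_gaussian (x : Evec m) :
    HasFDerivAt (fun x : Evec m => Real.exp (-(‖x‖ ^ 2 / 2)))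
      (Real.exp (-(‖x‖ ^ 2 / 2)) • (-(innerSL ℝ x))) x := by
  refine HasFDerivAt.exp ?_
  have := ((hasStrictFDerivAt_norm_sq x).hasFDerivAt.const_mul (1 / 2 : ℝ)).neg
  refine (this.congr_fderiv ?_).congr_of_eventuallyEq (.of_forall fun y => ?_)
  · ext y
    simp
  · simp only [Pi.neg_apply]
    ring

lemma gaussianIntegral_linForm_mul (v : Evec m) (P : MvPolynomial (Fin m) ℝ) :
    gaussianIntegral m (linForm v * P) = gaussianIntegral m (∂[v] P) := by
  have hfderiv (x : Evec m) :
      polyFun P x * fderiv ℝ (fun x : Evec m => Real.exp (-(‖x‖ ^ 2 / 2))) x v =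
        -(polyFun (linForm v * P) x * Real.exp (-(‖x‖ ^ 2 / 2))) := by
    rw [(hasFDerivAt_gaussian x).fderiv, polyFun_mul, polyFun_linForm]
    simp only [smul_neg, neg_apply, smul_apply,
      innerSL_apply_apply, smul_eq_mul, real_inner_comm]
    ring
  have by_parts := integral_mul_fderiv_eq_neg_fderiv_mul_of_integrable (μ := volume)
    (f := polyFun P) (g := fun x : Evec m => Real.exp (-(‖x‖ ^ 2 / 2))) (v := v)
    (by simpa only [fderiv_polyFun] using integrable_polyFun_mul_gaussian (∂[v] P))
    (by simpa only [hfderiv] using (integrable_polyFun_mul_gaussian (linForm v * P)).fun_neg)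
    (integrable_polyFun_mul_gaussian P) (fun x _ => differentiable_polyFun P x)
    (fun x _ => (hasFDerivAt_gaussian x).differentiableAt)
  simpa only [hfderiv, fderiv_polyFun, integral_neg, neg_inj, ← gaussianIntegral_apply]
    using by_parts

lemma gaussianIntegral_X_mul (i : Fin m) (P : MvPolynomial (Fin m) ℝ) :
    gaussianIntegral m (MvPolynomial.X i * P) = gaussianIntegral m (∂[basisVec i] P) := by
  rw [← linForm_basisVec, gaussianIntegral_linForm_mul]

lemma gaussianIntegral_normSqPoly_mul {d : ℕ} {Q : MvPolynomial (Fin m) ℝ}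
    (hQ : Q.IsHomogeneous d) :
    gaussianIntegral m (normSqPoly m * Q) = (m + d) * gaussianIntegral m Q := by
  have euler : ∑ i, ∂[basisVec i] (MvPolynomial.X i * Q) = ((m : ℝ) + d) • Q := by
    simp only [dirDeriv_mul, dirDeriv_X, Finset.sum_add_distrib, dirDeriv_basisVec,
      hQ.sum_X_mul_pderiv]
    simp [add_smul, ← Nat.cast_smul_eq_nsmul ℝ, add_comm, MvPolynomial.smul_eq_C_mul, mul_comm]
  simp only [normSqPoly, Finset.sum_mul, mul_assoc, map_sum, gaussianIntegral_X_mul]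
  rw [← map_sum, euler, map_smul, smul_eq_mul]

lemma gaussianIntegral_normSqPoly_pow (j : ℕ) :
    gaussianIntegral m (normSqPoly m ^ j) =
      (∏ i ∈ Finset.range j, ((m : ℝ) + 2 * i)) * gaussianIntegral m 1 := by
  induction j with
  | zero => simp
  | succ j ih =>
    rw [pow_succ', gaussianIntegral_normSqPoly_mul (isHomogeneous_normSqPoly.pow j), ih,
      Finset.prod_range_succ]
    push_cast
    ring

lemma gaussianIntegral_eq_zero_of_isSolidHarmonic {j : ℕ} (hj : j ≠ 0)
    {H : MvPolynomial (Fin m) ℝ} (hH : IsSolidHarmonic j H) : gaussianIntegral m H = 0 := by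
  have euler := congrArg (gaussianIntegral m) hH.isHomogeneous.sum_X_mul_pderiv
  simp only [map_sum, ← dirDeriv_basisVec, gaussianIntegral_X_mul] at euler
  rw [← map_sum, hH.laplacian_eq_zero, map_zero, map_nsmul] at euler
  exact (smul_eq_zero.1 euler.symm).resolve_left hj

lemma gaussianIntegral_linForm_pow_succ_mul (ν : Evec m) (i : ℕ) (H : MvPolynomial (Fin m) ℝ) :
    gaussianIntegral m (linForm ν ^ (i + 1) * H) =
      i * ‖ν‖ ^ 2 * gaussianIntegral m (linForm ν ^ (i - 1) * H) +
        gaussianIntegral m (linForm ν ^ i * ∂[ν] H) := by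
  have product_rule : ∂[ν] (linForm ν ^ i * H) =
      (i * ‖ν‖ ^ 2 : ℝ) • (linForm ν ^ (i - 1) * H) + linForm ν ^ i * ∂[ν] H := by
    rw [dirDeriv_mul, Derivation.leibniz_pow, dirDeriv_linForm, real_inner_self_eq_norm_sq,
      MvPolynomial.smul_eq_C_mul, add_comm, ← Nat.cast_smul_eq_nsmul ℝ,
      MvPolynomial.smul_eq_C_mul, smul_eq_mul, map_mul]
    ring
  rw [pow_succ', mul_assoc, gaussianIntegral_linForm_mul, product_rule, map_add, map_smul,
    smul_eq_mul]

lemma gaussianIntegral_linForm_pow_mul_of_lt (ν : Evec m) {i j : ℕ} (hij : i < j)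
    {H : MvPolynomial (Fin m) ℝ} (hH : IsSolidHarmonic j H) :
    gaussianIntegral m (linForm ν ^ i * H) = 0 := by
  induction i using Nat.strong_induction_on generalizing j H with
  | _ i ih =>
    rcases i with _ | i
    · rw [pow_zero, one_mul, gaussianIntegral_eq_zero_of_isSolidHarmonic hij.ne' hH]
    · rw [gaussianIntegral_linForm_pow_succ_mul, ih (i - 1) (by lia) (by lia) hH,
        ih i (by lia) (by lia) (hH.dirDeriv ν), mul_zero, add_zero]

lemma gaussianIntegral_linForm_pow_mul_self (ν : Evec m) {j : ℕ} {H : MvPolynomial (Fin m) ℝ}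
    (hH : IsSolidHarmonic j H) :
    gaussianIntegral m (linForm ν ^ j * H) =
      j.factorial * polyFun H ν * gaussianIntegral m 1 := by
  induction j generalizing H with
  | zero =>
    obtain ⟨c, rfl⟩ := exists_eq_C_of_isHomogeneous_zero hH.isHomogeneous
    rw [pow_zero, one_mul, ← mul_one (MvPolynomial.C c), ← MvPolynomial.smul_eq_C_mul, map_smul,
      polyFun_smul]
    simp
  | succ j ih =>
    rw [gaussianIntegral_linForm_pow_succ_mul,
      gaussianIntegral_linForm_pow_mul_of_lt ν (by lia) hH, ih (hH.dirDeriv ν),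
      polyFun_dirDeriv_self hH.isHomogeneous, Nat.factorial_succ]
    push_cast
    ring

end Gaussian

section SphereMeans

variable {m : ℕ}

lemma nontrivial_evec (hm : 0 < m) : Nontrivial (Evec m) :=
  Module.nontrivial_of_finrank_pos (R := ℝ) (by simpa using hm)

lemma gaussianIntegral_eq_angularMean (hm : 0 < m) {j : ℕ} {Q : MvPolynomial (Fin m) ℝ}
    (hQ : Q.IsHomogeneous (2 * j)) :
    gaussianIntegral m Q =
      angularMean volume (polyFun Q) * gaussianIntegral m (normSqPoly m ^ j) := by
  have := nontrivial_evec hm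
  have hQ_div : ∀ (c : ℝ) (y : Evec m), 0 < c →
      polyFun Q (c • y) / ‖c • y‖ ^ (2 * j) = polyFun Q y / ‖y‖ ^ (2 * j) := by
    intro c y hc
    rw [polyFun_smul_of_isHomogeneous hQ, norm_smul, Real.norm_eq_abs, abs_of_pos hc, mul_pow,
      mul_div_mul_left _ _ (by positivity)]
  have hpolar := integral_mul_radial volume
    (F := fun y : Evec m => polyFun Q y / ‖y‖ ^ (2 * j)) hQ_div
    (fun t => t ^ (2 * j) * Real.exp (-(t ^ 2 / 2)))
  rw [angularMean_congr (G := polyFun Q) volume (fun ω hω => by simp [hω])] at hpolar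
  have hQ_eq : ∀ y : Evec m, polyFun Q y / ‖y‖ ^ (2 * j) * ‖y‖ ^ (2 * j) = polyFun Q y := by
    intro y
    rcases eq_or_ne y 0 with rfl | hy
    · rcases j with _ | j
      · simp
      · simpa using (polyFun_smul_of_isHomogeneous hQ 0 (0 : Evec m)).symm
    · rw [div_mul_cancel₀ _ (pow_ne_zero _ (norm_ne_zero_iff.2 hy))]
  simp only [← mul_assoc, hQ_eq] at hpolar
  simpa only [gaussianIntegral_apply, polyFun_pow, polyFun_normSqPoly, ← pow_mul] using hpolar

lemma prod_add_two_mul_pos {b : ℝ} (hb : 0 < b) (j : ℕ) :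
    0 < ∏ i ∈ Finset.range j, (b + 2 * i) :=
  Finset.prod_pos fun i _ => by positivity

section

variable {k : ℕ} {P : MvPolynomial (Fin m) ℝ}

lemma angularMean_linForm_pow_mul (hm : 0 < m) (ν : Evec m) (hP : IsSolidHarmonic k P) :
    angularMean volume (polyFun (linForm ν ^ k * P)) =
      k.factorial * polyFun P ν / ∏ i ∈ Finset.range k, ((m : ℝ) + 2 * i) := by
  have hmean := gaussianIntegral_eq_angularMean hm (j := k) (Q := linForm ν ^ k * P)
    (by simpa [two_mul] using ((isHomogeneous_linForm ν).pow k).mul hP.isHomogeneous)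
  rw [gaussianIntegral_linForm_pow_mul_self ν hP, gaussianIntegral_normSqPoly_pow,
    ← mul_assoc] at hmean
  rw [eq_div_iff (prod_add_two_mul_pos (Nat.cast_pos.2 hm) k).ne']
  exact (mul_right_cancel₀ gaussianIntegral_one_pos.ne' hmean).symm

lemma angularMean_linForm_pow_mul_of_add_two (hm : 0 < m) (ν : Evec m)
    (hP : IsSolidHarmonic (k + 2) P) :
    angularMean volume (polyFun (linForm ν ^ k * P)) = 0 := by
  have hmean := gaussianIntegral_eq_angularMean hm (j := k + 1) (Q := linForm ν ^ k * P)
    (by convert! ((isHomogeneous_linForm ν).pow k).mul hP.isHomogeneous using 1; ring)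
  rw [gaussianIntegral_linForm_pow_mul_of_lt ν (by omega) hP, gaussianIntegral_normSqPoly_pow]
    at hmean
  exact (mul_eq_zero.1 hmean.symm).resolve_right
    (mul_pos (prod_add_two_mul_pos (Nat.cast_pos.2 hm) _) gaussianIntegral_one_pos).ne'

lemma isHomogeneous_iterate_dirDeriv (hP : P.IsHomogeneous k) (v : Evec m) (i : ℕ) :
    ((∂[v])^[i] P).IsHomogeneous (k - i) := by
  induction i with
  | zero => exact hP
  | succ i ih =>
    rw [Function.iterate_succ_apply', ← Nat.sub_sub]
    exact isHomogeneous_dirDeriv ih v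

lemma IsSolidHarmonic.iterate_dirDeriv (hP : IsSolidHarmonic k P) (v : Evec m) (i : ℕ) :
    IsSolidHarmonic (k - i) ((∂[v])^[i] P) := by
  induction i with
  | zero => exact hP
  | succ i ih =>
    rw [Function.iterate_succ_apply', ← Nat.sub_sub]
    exact ih.dirDeriv v

lemma polyFun_iterate_dirDeriv_self (hP : P.IsHomogeneous k) (v : Evec m) (i : ℕ) :
    polyFun ((∂[v])^[i] P) v = k.descFactorial i * polyFun P v := by
  induction i with
  | zero => simp
  | succ i ih =>
    rw [Function.iterate_succ_apply',
      polyFun_dirDeriv_self (isHomogeneous_iterate_dirDeriv hP v i), ih, Nat.descFactorial_succ]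
    push_cast
    ring

end

lemma sum_descFactorial_div_prod (k : ℕ) {b : ℝ} (hb : 2 < b) :
    ∑ j ∈ Finset.range (k + 1), (-2) ^ j * (k.descFactorial j : ℝ) /
      ∏ i ∈ Finset.range j, (b + 2 * i) = (b - 2) / (b + 2 * k - 2) := by
  induction k generalizing b with
  | zero => simp [div_self (sub_pos.2 hb).ne']
  | succ k ih =>
    have hshift : ∀ j ∈ Finset.range (k + 1),
        (-2) ^ (j + 1) * ((k + 1).descFactorial (j + 1) : ℝ) /
          ∏ i ∈ Finset.range (j + 1), (b + 2 * i) = (-2 * (k + 1) / b) *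
            ((-2) ^ j * (k.descFactorial j : ℝ) / ∏ i ∈ Finset.range j, (b + 2 + 2 * i)) := by
      intro j _
      have hprod : ∏ i ∈ Finset.range j, (b + 2 * ((i + 1 : ℕ) : ℝ)) =
          ∏ i ∈ Finset.range j, (b + 2 + 2 * i) :=
        Finset.prod_congr rfl fun i _ => by push_cast; ring
      have := prod_add_two_mul_pos (show 0 < b + 2 by linarith) j
      rw [Finset.prod_range_succ', Nat.succ_descFactorial_succ, hprod]
      push_cast
      field_simp
      ring
    have : (0 : ℝ) ≤ k := k.cast_nonneg
    rw [Finset.sum_range_succ', Finset.sum_congr rfl hshift, ← Finset.mul_sum,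
      ih (show 2 < b + 2 by linarith)]
    have hden : b + 2 * (k : ℝ) ≠ 0 := by linarith
    simp only [pow_zero, Nat.descFactorial_zero, Finset.range_zero, Finset.prod_empty]
    push_cast
    rw [show b + 2 + 2 * (k : ℝ) - 2 = b + 2 * k by ring,
      show b + 2 * ((k : ℝ) + 1) - 2 = b + 2 * k by ring]
    field_simp
    ring

lemma reflv_of_norm_eq_one {ω : Evec m} (hω : ‖ω‖ = 1) (ν : Evec m) :
    reflv ω ν = (-2 * ⟪ν, ω⟫) • ω + ν := by
  simp only [reflv, hω, real_inner_comm ω ν]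
  module

variable {k : ℕ} {P : MvPolynomial (Fin m) ℝ}

lemma polyFun_reflv (hP : P.IsHomogeneous k) {ω : Evec m} (hω : ‖ω‖ = 1) (ν : Evec m) :
    polyFun P (reflv ω ν) = ∑ i ∈ Finset.range (k + 1),
      (-2 * ⟪ν, ω⟫) ^ (k - i) / i.factorial * polyFun ((∂[ν])^[i] P) ω := by
  have htaylor := polyFun_add_smul hP ((-2 * ⟪ν, ω⟫) • ω) ν 1
  rw [one_smul, ← reflv_of_norm_eq_one hω] at htaylor
  rw [htaylor]
  refine Finset.sum_congr rfl fun i _ => ?_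
  rw [polyFun_smul_of_isHomogeneous (isHomogeneous_iterate_dirDeriv hP ν i)]
  ring

lemma factorial_mul_descFactorial_sub {j : ℕ} (hj : j ≤ k) :
    j.factorial * k.descFactorial (k - j) = (k - j).factorial * k.descFactorial j := by
  rw [Nat.factorial_mul_descFactorial hj]
  simpa [Nat.sub_sub_self hj] using Nat.factorial_mul_descFactorial (Nat.sub_le k j)

lemma angularMean_reflv (hm : 2 < m) (hP : IsSolidHarmonic k P) (ν : Evec m) :
    angularMean volume (fun ω => polyFun P (reflv ω ν)) =
      ((m : ℝ) - 2) / (m + 2 * k - 2) * polyFun P ν := by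
  rw [angularMean_congr (G := fun ω => ∑ i ∈ Finset.range (k + 1),
    ((-2) ^ (k - i) / i.factorial) * polyFun (linForm ν ^ (k - i) * (∂[ν])^[i] P) ω)]
  · rw [angularMean_sum _ _ fun i _ => (continuous_polyFun _).const_mul _]
    simp only [angularMean_const_mul,
      angularMean_linForm_pow_mul (by omega) ν (hP.iterate_dirDeriv ν _),
      polyFun_iterate_dirDeriv_self hP.isHomogeneous]
    rw [← sum_descFactorial_div_prod k (b := m) (by exact_mod_cast hm), Finset.sum_mul,
      ← Finset.sum_range_reflect]
    refine Finset.sum_congr rfl fun j hj => ?_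
    have hj : j ≤ k := Finset.mem_range_succ_iff.1 hj
    rw [show k + 1 - 1 - j = k - j by omega, Nat.sub_sub_self hj]
    have hfact : (j.factorial : ℝ) * k.descFactorial (k - j) =
        (k - j).factorial * k.descFactorial j := by
      exact_mod_cast factorial_mul_descFactorial_sub hj
    have := prod_add_two_mul_pos (b := m) (by exact_mod_cast (by omega : 0 < m)) j
    have : (0 : ℝ) < (k - j).factorial := by positivity
    field_simp
    linear_combination polyFun P ν * hfact
  · intro ω hω
    rw [polyFun_reflv hP.isHomogeneous hω]
    refine Finset.sum_congr rfl fun i _ => ?_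
    rw [polyFun_mul, polyFun_pow, polyFun_linForm, mul_pow]
    ring

lemma iterate_dirDeriv_comm (v w : Evec m) (i : ℕ) (P : MvPolynomial (Fin m) ℝ) :
    (∂[v])^[i] (∂[w] P) = ∂[w] ((∂[v])^[i] P) :=
  have hcomm : Function.Commute ∂[v] ∂[w] := fun Q => dirDeriv_comm v w Q
  hcomm.iterate_left i P

lemma angularMean_dirDeriv_dirDeriv_reflv (hm : 0 < m) (hP : IsSolidHarmonic k P)
    (ν : Evec m) : angularMean volume (fun ω => polyFun (∂[ω] (∂[ω] P)) (reflv ω ν)) = 0 := by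
  rcases Nat.lt_or_ge k 2 with hk | hk
  · have hzero : ∀ ω : Evec m, ∂[ω] (∂[ω] P) = 0 := fun ω =>
      dirDeriv_eq_zero_of_isHomogeneous_zero
        (by simpa [show k - 1 = 0 by omega] using (hP.dirDeriv ω).isHomogeneous) ω
    simp [angularMean, hzero]
  obtain ⟨k, rfl⟩ := Nat.exists_eq_add_of_le' hk
  rw [angularMean_congr (G := fun ω => ∑ i ∈ Finset.range (k + 1),
    ((-2) ^ (k - i) / i.factorial * ((k - i + 2 : ℕ) * ((k - i + 2 : ℕ) - 1))) *
      polyFun (linForm ν ^ (k - i) * (∂[ν])^[i] P) ω)]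
  · rw [angularMean_sum _ _ fun i _ => (continuous_polyFun _).const_mul _]
    refine Finset.sum_eq_zero fun i hi => ?_
    have hi : i ≤ k := Finset.mem_range_succ_iff.1 hi
    rw [angularMean_const_mul, angularMean_linForm_pow_mul_of_add_two hm ν, mul_zero]
    simpa [show k + 2 - i = k - i + 2 by omega] using hP.iterate_dirDeriv ν i
  · intro ω hω
    rw [polyFun_reflv (k := k) ((hP.dirDeriv ω).dirDeriv ω).isHomogeneous hω]
    refine Finset.sum_congr rfl fun i hi => ?_
    have hhom := isHomogeneous_iterate_dirDeriv hP.isHomogeneous ν i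
    rw [show k + 2 - i = k - i + 2 by have := Finset.mem_range_succ_iff.1 hi; omega] at hhom
    rw [iterate_dirDeriv_comm, iterate_dirDeriv_comm, polyFun_dirDeriv_dirDeriv_self hhom,
      polyFun_dirDeriv_self hhom, polyFun_mul, polyFun_pow, polyFun_linForm, mul_pow]
    push_cast
    ring

end SphereMeans

section FundamentalSolution

/-- The quadratic map `x ↦ |x|² R_x ν`, which is polynomial in `x`. -/
def scaledReflv {m : ℕ} (ν x : Evec m) : Evec m := ‖x‖ ^ 2 • ν - (2 * ⟪x, ν⟫) • x

/-- The symbol of the bosonic Laplacian: for `f(x,u) = ∑ φ_α(x) p_α(u)` one has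
`𝒟_k f = ∑ ∂_i ∂_j φ_α · bosonicSymbol N e_i e_j p_α` with `N = m + 2k - 2`. -/
def bosonicSymbol {m : ℕ} (N : ℝ) (a b : Evec m) (P : MvPolynomial (Fin m) ℝ) :
    MvPolynomial (Fin m) ℝ :=
  ⟪a, b⟫ • P - (2 / N) • (linForm a * ∂[b] P + linForm b * ∂[a] P)
    + (4 / (N * (N - 2))) • (normSqPoly m * ∂[b] (∂[a] P))

/-- The matrix-valued fundamental solution: its `(a, b)` component is
`|x|^{-N} bosonicSymbol(a,b) P (|x|² R_x ν)`. -/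
def fundSol {m : ℕ} (N : ℝ) (P : MvPolynomial (Fin m) ℝ) (ν a b x : Evec m) : ℝ :=
  (‖x‖ ^ 2) ^ (-(N / 2)) * polyFun (bosonicSymbol N a b P) (scaledReflv ν x)

/-- The divergence of the fundamental solution in its second index. -/
def fundSolDiv {m : ℕ} (N : ℝ) (P : MvPolynomial (Fin m) ℝ) (ν a x : Evec m) : ℝ :=
  (‖x‖ ^ 2) ^ (-(N / 2)) * (-((m : ℝ) - 2) * (⟪x, a⟫ / ‖x‖ ^ 2 * polyFun P (scaledReflv ν x))
    + 4 / N * (⟪x, a⟫ * polyFun (∂[ν] P) (scaledReflv ν x)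
      - ⟪ν, a⟫ * polyFun (∂[x] P) (scaledReflv ν x)
      + ⟪x, ν⟫ * polyFun (∂[a] P) (scaledReflv ν x))
    + 8 * ‖ν‖ ^ 2 / (N * (N - 2)) *
      (‖x‖ ^ 2 * polyFun (∂[x] (∂[a] P)) (scaledReflv ν x)))

variable {m : ℕ}

lemma polyFun_bosonicSymbol (N : ℝ) (a b : Evec m) (P : MvPolynomial (Fin m) ℝ) (u : Evec m) :
    polyFun (bosonicSymbol N a b P) u = ⟪a, b⟫ * polyFun P u
      - 2 / N * (⟪a, u⟫ * polyFun (∂[b] P) u + ⟪b, u⟫ * polyFun (∂[a] P) u)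
      + 4 / (N * (N - 2)) * (‖u‖ ^ 2 * polyFun (∂[b] (∂[a] P)) u) := by
  simp only [bosonicSymbol, polyFun_add, polyFun_sub, polyFun_smul, polyFun_mul, polyFun_linForm,
    polyFun_normSqPoly]

lemma polyFun_dirDeriv_bosonicSymbol (N : ℝ) (a b v : Evec m) (P : MvPolynomial (Fin m) ℝ)
    (u : Evec m) :
    polyFun (∂[v] (bosonicSymbol N a b P)) u = ⟪a, b⟫ * polyFun (∂[v] P) u
      - 2 / N * (⟪a, v⟫ * polyFun (∂[b] P) u + ⟪b, v⟫ * polyFun (∂[a] P) u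
        + ⟪a, u⟫ * polyFun (∂[v] (∂[b] P)) u + ⟪b, u⟫ * polyFun (∂[v] (∂[a] P)) u)
      + 4 / (N * (N - 2)) * (2 * ⟪v, u⟫ * polyFun (∂[b] (∂[a] P)) u
        + ‖u‖ ^ 2 * polyFun (∂[v] (∂[b] (∂[a] P))) u) := by
  simp only [bosonicSymbol, map_add, map_sub, Derivation.map_smul, dirDeriv_mul, dirDeriv_linForm,
    dirDeriv_normSqPoly, polyFun_add, polyFun_sub, polyFun_smul, polyFun_mul, polyFun_linForm,
    polyFun_normSqPoly, polyFun_C]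
  ring

lemma inner_basisVec (i : Fin m) (v : Evec m) : ⟪basisVec i, v⟫ = v i := by
  simp [EuclideanSpace.inner_single_left]

lemma sum_mul_inner_basisVec (v w : Evec m) : ∑ i, v i * ⟪basisVec i, w⟫ = ⟪v, w⟫ := by
  simp only [inner_basisVec, inner_eq_sum v w]

lemma sum_mul_polyFun_bosonicSymbol (N : ℝ) (a v : Evec m) (P : MvPolynomial (Fin m) ℝ)
    (u : Evec m) :
    ∑ j, v j * polyFun (bosonicSymbol N a (basisVec j) P) u =
      polyFun (bosonicSymbol N a v P) u := by
  have hterm : ∀ j, v j * polyFun (bosonicSymbol N a (basisVec j) P) u =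
      polyFun P u * (v j * ⟪basisVec j, a⟫)
      - 2 / N * (⟪a, u⟫ * (v j * polyFun (∂[basisVec j] P) u)
        + (v j * ⟪basisVec j, u⟫) * polyFun (∂[a] P) u)
      + 4 / (N * (N - 2)) * (‖u‖ ^ 2 * (v j * polyFun (∂[basisVec j] (∂[a] P)) u)) := by
    intro j
    rw [polyFun_bosonicSymbol, real_inner_comm]
    ring
  simp only [hterm, Finset.sum_add_distrib, Finset.sum_sub_distrib, ← Finset.mul_sum,
    ← Finset.sum_mul, sum_mul_inner_basisVec, ← polyFun_dirDeriv_eq_sum]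
  rw [polyFun_bosonicSymbol, real_inner_comm]
  ring

lemma sum_smul_bosonicSymbol (N : ℝ) (a v : Evec m) (P : MvPolynomial (Fin m) ℝ) :
    ∑ j, v j • bosonicSymbol N a (basisVec j) P = bosonicSymbol N a v P :=
  polyFun_injective fun u => by
    rw [← sum_mul_polyFun_bosonicSymbol, polyFun_sum]
    simp only [polyFun_smul]

lemma sum_mul_polyFun_dirDeriv_bosonicSymbol (N : ℝ) (a v w : Evec m)
    (P : MvPolynomial (Fin m) ℝ) (u : Evec m) :
    ∑ j, v j * polyFun (∂[w] (bosonicSymbol N a (basisVec j) P)) u =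
      polyFun (∂[w] (bosonicSymbol N a v P)) u := by
  rw [← sum_smul_bosonicSymbol N a v, map_sum, polyFun_sum]
  simp only [Derivation.map_smul, polyFun_smul]

variable {k : ℕ} {P : MvPolynomial (Fin m) ℝ}

lemma IsSolidHarmonic.sum_polyFun_dirDeriv_dirDeriv (hP : IsSolidHarmonic k P) (u : Evec m) :
    ∑ i, polyFun (∂[basisVec i] (∂[basisVec i] P)) u = 0 := by
  rw [← polyFun_sum, hP.laplacian_eq_zero, polyFun_zero]

lemma sum_polyFun_dirDeriv_basisVec_bosonicSymbol (N : ℝ) (a : Evec m)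
    (hP : IsSolidHarmonic k P) (u : Evec m) :
    ∑ j, polyFun (∂[basisVec j] (bosonicSymbol N a (basisVec j) P)) u =
      (1 - 2 / N * (m + k) + 8 * (k - 1) / (N * (N - 2))) * polyFun (∂[a] P) u := by
  have hterm : ∀ j, polyFun (∂[basisVec j] (bosonicSymbol N a (basisVec j) P)) u =
      a j * polyFun (∂[basisVec j] P) u
      - 2 / N * (a j * polyFun (∂[basisVec j] P) u + 1 * polyFun (∂[a] P) u
        + ⟪a, u⟫ * polyFun (∂[basisVec j] (∂[basisVec j] P)) u
        + u j * polyFun (∂[basisVec j] (∂[a] P)) u)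
      + 4 / (N * (N - 2)) * (2 * (u j * polyFun (∂[basisVec j] (∂[a] P)) u)
        + ‖u‖ ^ 2 * polyFun (∂[basisVec j] (∂[basisVec j] (∂[a] P))) u) := by
    intro j
    have hunit : ⟪(basisVec j : Evec m), basisVec j⟫ = 1 := by simp
    rw [polyFun_dirDeriv_bosonicSymbol, real_inner_comm (basisVec j) a, inner_basisVec j a,
      inner_basisVec j u, hunit]
    ring
  simp only [hterm, Finset.sum_add_distrib, Finset.sum_sub_distrib, ← Finset.mul_sum,
    ← polyFun_dirDeriv_eq_sum, hP.sum_polyFun_dirDeriv_dirDeriv,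
    (hP.dirDeriv a).sum_polyFun_dirDeriv_dirDeriv,
    polyFun_dirDeriv_dirDeriv_self hP.isHomogeneous, Finset.sum_const, Finset.card_univ,
    Fintype.card_fin, nsmul_eq_mul]
  ring

section

variable {E : Type*} [NormedAddCommGroup E] [InnerProductSpace ℝ E]

lemma hasFDerivAt_inner_const (a x : E) :
    HasFDerivAt (fun x : E => ⟪x, a⟫) (innerSL ℝ a) x := by
  convert! (innerSL ℝ a).hasFDerivAt (x := x) using 1
  funext y
  simp only [innerSL_apply_apply, real_inner_comm]

lemma hasFDerivAt_norm_sq_rpow (s : ℝ) {x : E} (hx : x ≠ 0) :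
    HasFDerivAt (fun x : E => (‖x‖ ^ 2) ^ s)
      ((2 * s * (‖x‖ ^ 2) ^ s / ‖x‖ ^ 2) • innerSL ℝ x) x := by
  have hx' : ‖x‖ ^ 2 ≠ 0 := by simpa using hx
  convert! (hasStrictFDerivAt_norm_sq x).hasFDerivAt.rpow_const (p := s) (Or.inl hx') using 1
  ext y
  rw [Real.rpow_sub_one hx']
  simp only [FunLike.coe_smul, Pi.smul_apply, innerSL_apply_apply, smul_eq_mul, two_smul, add_apply]
  ring

lemma fderiv_norm_sq_rpow (s : ℝ) {x : E} (hx : x ≠ 0) (v : E) :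
    fderiv ℝ (fun x : E => (‖x‖ ^ 2) ^ s) x v =
      2 * s * (‖x‖ ^ 2) ^ s / ‖x‖ ^ 2 * ⟪x, v⟫ := by
  simp [(hasFDerivAt_norm_sq_rpow s hx).fderiv]

end

lemma hasFDerivAt_scaledReflv (ν x : Evec m) : HasFDerivAt (scaledReflv ν)
    ((2 • innerSL ℝ x).smulRight ν - ((2 * ⟪x, ν⟫) • ContinuousLinearMap.id ℝ (Evec m)
      + (2 • innerSL ℝ ν).smulRight x)) x := by
  have hinner : HasFDerivAt (fun x : Evec m => 2 * ⟪x, ν⟫) (2 • innerSL ℝ ν) x := by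
    simpa only [ofNat_smul_eq_nsmul] using (hasFDerivAt_inner_const ν x).const_mul 2
  exact ((hasStrictFDerivAt_norm_sq x).hasFDerivAt.smul_const ν).sub
    (hinner.smul (hasFDerivAt_id x))

lemma differentiableAt_polyFun_scaledReflv (Q : MvPolynomial (Fin m) ℝ) (ν x : Evec m) :
    DifferentiableAt ℝ (fun x => polyFun Q (scaledReflv ν x)) x :=
  (differentiable_polyFun Q _).comp x (hasFDerivAt_scaledReflv ν x).differentiableAt

lemma fderiv_polyFun_scaledReflv (Q : MvPolynomial (Fin m) ℝ) (ν x v : Evec m) :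
    fderiv ℝ (fun x => polyFun Q (scaledReflv ν x)) x v =
      2 * ⟪x, v⟫ * polyFun (∂[ν] Q) (scaledReflv ν x)
      - 2 * ⟪ν, v⟫ * polyFun (∂[x] Q) (scaledReflv ν x)
      - 2 * ⟪x, ν⟫ * polyFun (∂[v] Q) (scaledReflv ν x) := by
  have hchain := ((differentiable_polyFun Q (scaledReflv ν x)).hasFDerivAt.comp x
    (hasFDerivAt_scaledReflv ν x)).fderiv
  simp only [Function.comp_def] at hchain
  rw [hchain, ContinuousLinearMap.comp_apply, fderiv_polyFun]
  simp [polyFun_dirDeriv_sub, polyFun_dirDeriv_add, polyFun_dirDeriv_smul]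
  ring

lemma norm_sq_mul_polyFun_dirDeriv_scaledReflv (hP : P.IsHomogeneous k) (ν x : Evec m) :
    ‖x‖ ^ 2 * polyFun (∂[ν] P) (scaledReflv ν x)
      - 2 * ⟪x, ν⟫ * polyFun (∂[x] P) (scaledReflv ν x) = k * polyFun P (scaledReflv ν x) := by
  rw [← polyFun_dirDeriv_self hP, scaledReflv, polyFun_dirDeriv_sub, polyFun_dirDeriv_smul,
    polyFun_dirDeriv_smul]

lemma norm_sq_mul_polyFun_dirDeriv_dirDeriv_scaledReflv (hP : P.IsHomogeneous k)
    (ν x v : Evec m) :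
    ‖x‖ ^ 2 * polyFun (∂[ν] (∂[v] P)) (scaledReflv ν x)
      - 2 * ⟪x, ν⟫ * polyFun (∂[x] (∂[v] P)) (scaledReflv ν x) =
        ((k : ℝ) - 1) * polyFun (∂[v] P) (scaledReflv ν x) := by
  rw [← polyFun_dirDeriv_dirDeriv_self hP, scaledReflv, polyFun_dirDeriv_sub,
    polyFun_dirDeriv_smul, polyFun_dirDeriv_smul]

lemma norm_sq_scaledReflv (ν x : Evec m) : ‖scaledReflv ν x‖ ^ 2 = (‖x‖ ^ 2) ^ 2 * ‖ν‖ ^ 2 := by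
  rw [scaledReflv, norm_sub_sq_real]
  simp only [norm_smul, mul_pow, inner_smul_left, inner_smul_right, real_inner_comm x ν,
    Real.norm_eq_abs, sq_abs, conj_trivial]
  ring

lemma inner_scaledReflv (ν x a : Evec m) :
    ⟪a, scaledReflv ν x⟫ = ‖x‖ ^ 2 * ⟪ν, a⟫ - 2 * ⟪x, ν⟫ * ⟪x, a⟫ := by
  simp only [scaledReflv, inner_sub_right, inner_smul_right, real_inner_comm a ν,
    real_inner_comm a x]

lemma fderiv_norm_sq_rpow_mul (s : ℝ) {F : Evec m → ℝ} {x : Evec m} (hx : x ≠ 0)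
    (hF : DifferentiableAt ℝ F x) (v : Evec m) :
    fderiv ℝ (fun y => (‖y‖ ^ 2) ^ s * F y) x v =
      (‖x‖ ^ 2) ^ s * (fderiv ℝ F x v + 2 * s / ‖x‖ ^ 2 * (⟪x, v⟫ * F x)) := by
  rw [fderiv_fun_mul (hasFDerivAt_norm_sq_rpow s hx).differentiableAt hF]
  simp only [add_apply, FunLike.coe_smul, Pi.smul_apply, smul_eq_mul, fderiv_norm_sq_rpow s hx]
  ring

lemma sum_fderiv_fundSol_eq (N : ℝ) (P : MvPolynomial (Fin m) ℝ) (ν a : Evec m) {x : Evec m}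
    (hx : x ≠ 0) :
    ∑ j, fderiv ℝ (fundSol N P ν a (basisVec j)) x (basisVec j) =
      (‖x‖ ^ 2) ^ (-(N / 2)) * (2 * polyFun (∂[ν] (bosonicSymbol N a x P)) (scaledReflv ν x)
        - 2 * polyFun (∂[x] (bosonicSymbol N a ν P)) (scaledReflv ν x)
        - 2 * ⟪x, ν⟫ *
          ∑ j, polyFun (∂[basisVec j] (bosonicSymbol N a (basisVec j) P)) (scaledReflv ν x)
        - N / ‖x‖ ^ 2 * polyFun (bosonicSymbol N a x P) (scaledReflv ν x)) := by
  have hterm : ∀ j, fderiv ℝ (fundSol N P ν a (basisVec j)) x (basisVec j) =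
      (‖x‖ ^ 2) ^ (-(N / 2)) *
        (2 * (x j * polyFun (∂[ν] (bosonicSymbol N a (basisVec j) P)) (scaledReflv ν x))
        - 2 * (ν j * polyFun (∂[x] (bosonicSymbol N a (basisVec j) P)) (scaledReflv ν x))
        - 2 * ⟪x, ν⟫ * polyFun (∂[basisVec j] (bosonicSymbol N a (basisVec j) P)) (scaledReflv ν x)
        - N / ‖x‖ ^ 2 * (x j * polyFun (bosonicSymbol N a (basisVec j) P) (scaledReflv ν x))) := by
    intro j
    have hprod := fderiv_norm_sq_rpow_mul (-(N / 2)) hx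
      (differentiableAt_polyFun_scaledReflv (bosonicSymbol N a (basisVec j) P) ν x) (basisVec j)
    rw [fderiv_polyFun_scaledReflv, real_inner_comm (basisVec j) x, real_inner_comm (basisVec j) ν,
      inner_basisVec, inner_basisVec] at hprod
    refine hprod.trans ?_
    ring
  simp only [hterm, ← Finset.mul_sum, Finset.sum_sub_distrib,
    sum_mul_polyFun_dirDeriv_bosonicSymbol, sum_mul_polyFun_bosonicSymbol]

lemma sum_fderiv_fundSol {N : ℝ} (hN : N = m + 2 * k - 2) (hN2 : 2 < N)
    (hP : IsSolidHarmonic k P) (ν a : Evec m) {x : Evec m} (hx : x ≠ 0) :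
    ∑ j, fderiv ℝ (fundSol N P ν a (basisVec j)) x (basisVec j) = fundSolDiv N P ν a x := by
  have : ‖x‖ ^ 2 ≠ 0 := by simpa using hx
  have hN0 : N ≠ 0 := by linarith
  have hN20 : N - 2 ≠ 0 := by linarith
  have hm : (m : ℝ) = N + 2 - 2 * k := by rw [hN]; ring
  have euler := norm_sq_mul_polyFun_dirDeriv_scaledReflv hP.isHomogeneous ν x
  have euler' := norm_sq_mul_polyFun_dirDeriv_dirDeriv_scaledReflv hP.isHomogeneous ν x a
  rw [sum_fderiv_fundSol_eq N P ν a hx, sum_polyFun_dirDeriv_basisVec_bosonicSymbol N a hP,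
    polyFun_bosonicSymbol, polyFun_dirDeriv_bosonicSymbol, polyFun_dirDeriv_bosonicSymbol,
    fundSolDiv, norm_sq_scaledReflv]
  simp only [inner_scaledReflv, real_inner_self_eq_norm_sq, real_inner_comm x ν,
    real_inner_comm x a, real_inner_comm ν a, dirDeriv_comm x ν, hm]
  generalize (‖x‖ ^ 2) ^ (-(N / 2)) = G
  linear_combination (norm := (field_simp; ring)) 2 * G * ⟪x, a⟫ / ‖x‖ ^ 2 * euler
    + G * ⟪x, ν⟫ * (4 / N + 16 / (N * (N - 2))) * euler'

end FundamentalSolution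

section DivergenceFree

/-- The polynomial factor of `fundSolDiv`: the latter is `|x|^{-N-2}` times `fundSolDivNum`. -/
def fundSolDivNum {m : ℕ} (N : ℝ) (P : MvPolynomial (Fin m) ℝ) (ν a x : Evec m) : ℝ :=
  -((m : ℝ) - 2) * (⟪x, a⟫ * polyFun P (scaledReflv ν x))
    + 4 / N * (‖x‖ ^ 2 * (⟪x, a⟫ * polyFun (∂[ν] P) (scaledReflv ν x)
      - ⟪ν, a⟫ * polyFun (∂[x] P) (scaledReflv ν x)
      + ⟪x, ν⟫ * polyFun (∂[a] P) (scaledReflv ν x)))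
    + 8 * ‖ν‖ ^ 2 / (N * (N - 2)) *
      (‖x‖ ^ 2 * (‖x‖ ^ 2 * polyFun (∂[x] (∂[a] P)) (scaledReflv ν x)))

variable {m : ℕ}

lemma fundSolDiv_eq (N : ℝ) (P : MvPolynomial (Fin m) ℝ) (ν a : Evec m) {x : Evec m}
    (hx : x ≠ 0) :
    fundSolDiv N P ν a x = (‖x‖ ^ 2) ^ (-(N / 2) - 1) * fundSolDivNum N P ν a x := by
  have hx' : ‖x‖ ^ 2 ≠ 0 := by simpa using hx
  rw [Real.rpow_sub_one hx', fundSolDiv, fundSolDivNum]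
  field_simp

lemma hasFDerivAt_polyFun_dirDeriv_self_scaledReflv (Q : MvPolynomial (Fin m) ℝ)
    (ν x : Evec m) :
    HasFDerivAt (fun x => polyFun (∂[x] Q) (scaledReflv ν x))
      (∑ j, (x j • fderiv ℝ (fun y => polyFun (∂[basisVec j] Q) (scaledReflv ν y)) x
        + polyFun (∂[basisVec j] Q) (scaledReflv ν x) • EuclideanSpace.proj j)) x := by
  have hproj : ∀ j, HasFDerivAt (fun x : Evec m => x j) (EuclideanSpace.proj (𝕜 := ℝ) j) x :=
    fun j => (EuclideanSpace.proj (𝕜 := ℝ) j).hasFDerivAt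
  have hsum := HasFDerivAt.fun_sum (u := Finset.univ) fun j _ => (hproj j).mul
    (differentiableAt_polyFun_scaledReflv (∂[basisVec j] Q) ν x).hasFDerivAt
  simpa only [Pi.mul_apply, ← polyFun_dirDeriv_eq_sum] using hsum

lemma differentiableAt_polyFun_dirDeriv_self_scaledReflv (Q : MvPolynomial (Fin m) ℝ)
    (ν x : Evec m) : DifferentiableAt ℝ (fun x => polyFun (∂[x] Q) (scaledReflv ν x)) x :=
  (hasFDerivAt_polyFun_dirDeriv_self_scaledReflv Q ν x).differentiableAt

lemma fderiv_polyFun_dirDeriv_self_scaledReflv (Q : MvPolynomial (Fin m) ℝ) (ν x v : Evec m) :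
    fderiv ℝ (fun x => polyFun (∂[x] Q) (scaledReflv ν x)) x v =
      polyFun (∂[v] Q) (scaledReflv ν x)
        + fderiv ℝ (fun y => polyFun (∂[x] Q) (scaledReflv ν y)) x v := by
  have hsum := HasFDerivAt.fun_sum (u := Finset.univ) fun j _ =>
    (differentiableAt_polyFun_scaledReflv (∂[basisVec j] Q) ν x).hasFDerivAt.const_mul (x j)
  simp only [← polyFun_dirDeriv_eq_sum] at hsum
  rw [(hasFDerivAt_polyFun_dirDeriv_self_scaledReflv Q ν x).fderiv, hsum.fderiv]
  simp [Finset.sum_add_distrib, polyFun_dirDeriv_eq_sum v, add_comm, mul_comm]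

lemma hasFDerivAt_fundSolDivNum (N : ℝ) (P : MvPolynomial (Fin m) ℝ) (ν a x : Evec m) :
    ∃ L : Evec m →L[ℝ] ℝ, HasFDerivAt (fundSolDivNum N P ν a) L x ∧ ∀ v, L v =
      -((m : ℝ) - 2) * (⟪a, v⟫ * polyFun P (scaledReflv ν x)
        + ⟪x, a⟫ * fderiv ℝ (fun x => polyFun P (scaledReflv ν x)) x v)
      + 4 / N * (2 * ⟪x, v⟫ * (⟪x, a⟫ * polyFun (∂[ν] P) (scaledReflv ν x)
          - ⟪ν, a⟫ * polyFun (∂[x] P) (scaledReflv ν x)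
          + ⟪x, ν⟫ * polyFun (∂[a] P) (scaledReflv ν x))
        + ‖x‖ ^ 2 * (⟪a, v⟫ * polyFun (∂[ν] P) (scaledReflv ν x)
          + ⟪x, a⟫ * fderiv ℝ (fun x => polyFun (∂[ν] P) (scaledReflv ν x)) x v
          - ⟪ν, a⟫ * (polyFun (∂[v] P) (scaledReflv ν x)
            + fderiv ℝ (fun y => polyFun (∂[x] P) (scaledReflv ν y)) x v)
          + ⟪ν, v⟫ * polyFun (∂[a] P) (scaledReflv ν x)
          + ⟪x, ν⟫ * fderiv ℝ (fun x => polyFun (∂[a] P) (scaledReflv ν x)) x v))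
      + 8 * ‖ν‖ ^ 2 / (N * (N - 2)) *
        (4 * ‖x‖ ^ 2 * ⟪x, v⟫ * polyFun (∂[x] (∂[a] P)) (scaledReflv ν x)
          + ‖x‖ ^ 2 * (‖x‖ ^ 2 * (polyFun (∂[v] (∂[a] P)) (scaledReflv ν x)
            + fderiv ℝ (fun y => polyFun (∂[x] (∂[a] P)) (scaledReflv ν y)) x v))) := by
  have hnorm := (hasStrictFDerivAt_norm_sq x).hasFDerivAt
  have hpoly := fun Q => (differentiableAt_polyFun_scaledReflv Q ν x).hasFDerivAt
  have hself := fun Q => (differentiableAt_polyFun_dirDeriv_self_scaledReflv Q ν x).hasFDerivAt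
  have hinner := fun b => hasFDerivAt_inner_const b x
  refine ⟨_, ((((hinner a).fun_mul (hpoly P)).const_mul (-((m : ℝ) - 2))).fun_add
    ((hnorm.fun_mul ((((hinner a).fun_mul (hpoly (∂[ν] P))).fun_sub
      ((hself P).const_mul ⟪ν, a⟫)).fun_add
      ((hinner ν).fun_mul (hpoly (∂[a] P))))).const_mul (4 / N))).fun_add
    ((hnorm.fun_mul (hnorm.fun_mul (hself (∂[a] P)))).const_mul
      (8 * ‖ν‖ ^ 2 / (N * (N - 2)))), fun v => ?_⟩
  simp only [add_apply, sub_apply, FunLike.coe_smul, Pi.smul_apply, smul_eq_mul,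
    innerSL_apply_apply, fderiv_polyFun_dirDeriv_self_scaledReflv, two_smul]
  ring

lemma differentiableAt_fundSolDivNum (N : ℝ) (P : MvPolynomial (Fin m) ℝ) (ν a x : Evec m) :
    DifferentiableAt ℝ (fundSolDivNum N P ν a) x :=
  let ⟨_, hL, _⟩ := hasFDerivAt_fundSolDivNum N P ν a x
  hL.differentiableAt

lemma inner_basisVec_right (v : Evec m) (i : Fin m) : ⟪v, basisVec i⟫ = v i := by
  rw [real_inner_comm, inner_basisVec]

lemma fderiv_fundSolDivNum_basisVec (N : ℝ) (P : MvPolynomial (Fin m) ℝ) (ν x : Evec m)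
    (j : Fin m) {u : Evec m} (hu : scaledReflv ν x = u) :
    fderiv ℝ (fundSolDivNum N P ν (basisVec j)) x (basisVec j) =
      -((m : ℝ) - 2) * (polyFun P u + 2 * (x j * x j) * polyFun (∂[ν] P) u
        - 2 * (x j * ν j) * polyFun (∂[x] P) u - 2 * ⟪x, ν⟫ * (x j * polyFun (∂[basisVec j] P) u))
      + 4 / N * (2 * ((x j * x j) * polyFun (∂[ν] P) u - (x j * ν j) * polyFun (∂[x] P) u
          + ⟪x, ν⟫ * (x j * polyFun (∂[basisVec j] P) u))
        + ‖x‖ ^ 2 * (polyFun (∂[ν] P) u + 2 * (x j * x j) * polyFun (∂[ν] (∂[ν] P)) u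
          - 4 * (x j * ν j) * polyFun (∂[ν] (∂[x] P)) u
          + 2 * (ν j * ν j) * polyFun (∂[x] (∂[x] P)) u
          - 2 * ⟪x, ν⟫ * ⟪x, ν⟫ * polyFun (∂[basisVec j] (∂[basisVec j] P)) u))
      + 8 * ‖ν‖ ^ 2 / (N * (N - 2)) *
        (4 * ‖x‖ ^ 2 * (x j * polyFun (∂[basisVec j] (∂[x] P)) u)
        + ‖x‖ ^ 2 * (‖x‖ ^ 2 * (polyFun (∂[basisVec j] (∂[basisVec j] P)) u
          + 2 * (x j * polyFun (∂[basisVec j] (∂[ν] (∂[x] P))) u)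
          - 2 * (ν j * polyFun (∂[basisVec j] (∂[x] (∂[x] P))) u)
          - 2 * ⟪x, ν⟫ * polyFun (∂[basisVec j] (∂[basisVec j] (∂[x] P))) u))) := by
  obtain ⟨L, hL, hL_apply⟩ := hasFDerivAt_fundSolDivNum N P ν (basisVec j) x
  have hunit : (basisVec j : Evec m) j = 1 := by simp
  rw [hL.fderiv, hL_apply]
  simp only [fderiv_polyFun_scaledReflv, inner_basisVec_right, hu]
  rw [dirDeriv_comm x ν P, dirDeriv_comm x (basisVec j) P, dirDeriv_comm x (basisVec j) (∂[x] P),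
    dirDeriv_comm ν (basisVec j) (∂[x] P), dirDeriv_comm ν (basisVec j) P, hunit]
  ring

lemma sum_mul_self (x : Evec m) : ∑ j, x j * x j = ‖x‖ ^ 2 := by
  rw [← inner_eq_sum, real_inner_self_eq_norm_sq]

lemma sum_mul_fundSolDivNum (N : ℝ) (P : MvPolynomial (Fin m) ℝ) (ν x : Evec m) :
    ∑ j, x j * fundSolDivNum N P ν (basisVec j) x =
      -((m : ℝ) - 2) * (‖x‖ ^ 2 * polyFun P (scaledReflv ν x))
      + 4 / N * (‖x‖ ^ 2 * (‖x‖ ^ 2 * polyFun (∂[ν] P) (scaledReflv ν x)))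
      + 8 * ‖ν‖ ^ 2 / (N * (N - 2)) *
        (‖x‖ ^ 2 * (‖x‖ ^ 2 * polyFun (∂[x] (∂[x] P)) (scaledReflv ν x))) := by
  set u := scaledReflv ν x with hu
  have hterm : ∀ j, x j * fundSolDivNum N P ν (basisVec j) x =
      -((m : ℝ) - 2) * ((x j * x j) * polyFun P u)
      + 4 / N * (‖x‖ ^ 2 * ((x j * x j) * polyFun (∂[ν] P) u - (x j * ν j) * polyFun (∂[x] P) u
        + ⟪x, ν⟫ * (x j * polyFun (∂[basisVec j] P) u)))
      + 8 * ‖ν‖ ^ 2 / (N * (N - 2)) * (‖x‖ ^ 2 * (‖x‖ ^ 2 *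
        (x j * polyFun (∂[basisVec j] (∂[x] P)) u))) := by
    intro j
    rw [fundSolDivNum, inner_basisVec_right, inner_basisVec_right, dirDeriv_comm x (basisVec j),
      ← hu]
    ring
  simp only [hterm, Finset.sum_add_distrib, Finset.sum_sub_distrib, ← Finset.mul_sum,
    ← Finset.sum_mul, sum_mul_self, ← inner_eq_sum, ← polyFun_dirDeriv_eq_sum]
  ring

variable {k : ℕ} {P : MvPolynomial (Fin m) ℝ}

lemma sum_fderiv_fundSolDivNum (N : ℝ) (hP : IsSolidHarmonic k P) (ν x : Evec m) :
    ∑ j, fderiv ℝ (fundSolDivNum N P ν (basisVec j)) x (basisVec j) =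
      -((m : ℝ) - 2) * (m * polyFun P (scaledReflv ν x)
        + 2 * ‖x‖ ^ 2 * polyFun (∂[ν] P) (scaledReflv ν x)
        - 4 * ⟪x, ν⟫ * polyFun (∂[x] P) (scaledReflv ν x))
      + 4 / N * (‖x‖ ^ 2 * ((m + 2) * polyFun (∂[ν] P) (scaledReflv ν x)
          + 2 * ‖x‖ ^ 2 * polyFun (∂[ν] (∂[ν] P)) (scaledReflv ν x)
          - 4 * ⟪x, ν⟫ * polyFun (∂[ν] (∂[x] P)) (scaledReflv ν x)
          + 2 * ‖ν‖ ^ 2 * polyFun (∂[x] (∂[x] P)) (scaledReflv ν x)))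
      + 8 * ‖ν‖ ^ 2 / (N * (N - 2)) *
        (4 * ‖x‖ ^ 2 * polyFun (∂[x] (∂[x] P)) (scaledReflv ν x)) := by
  simp only [fderiv_fundSolDivNum_basisVec N P ν x _ rfl, Finset.sum_add_distrib,
    Finset.sum_sub_distrib, ← Finset.mul_sum, ← Finset.sum_mul, sum_mul_self, ← inner_eq_sum,
    ← polyFun_dirDeriv_eq_sum, hP.sum_polyFun_dirDeriv_dirDeriv,
    (hP.dirDeriv x).sum_polyFun_dirDeriv_dirDeriv, Finset.sum_const, Finset.card_univ,
    Fintype.card_fin, nsmul_eq_mul, dirDeriv_comm x ν]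
  ring

lemma sum_fderiv_fundSolDiv {N : ℝ} (hN : N = m + 2 * k - 2) (hN2 : 2 < N)
    (hP : IsSolidHarmonic k P) (ν : Evec m) {x : Evec m} (hx : x ≠ 0) :
    ∑ j, fderiv ℝ (fundSolDiv N P ν (basisVec j)) x (basisVec j) = 0 := by
  have hterm : ∀ j, fderiv ℝ (fundSolDiv N P ν (basisVec j)) x (basisVec j) =
      (‖x‖ ^ 2) ^ (-(N / 2) - 1) * (fderiv ℝ (fundSolDivNum N P ν (basisVec j)) x (basisVec j)
        - (N + 2) / ‖x‖ ^ 2 * (x j * fundSolDivNum N P ν (basisVec j) x)) := by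
    intro j
    have heq : fundSolDiv N P ν (basisVec j) =ᶠ[𝓝 x]
        fun x => (‖x‖ ^ 2) ^ (-(N / 2) - 1) * fundSolDivNum N P ν (basisVec j) x := by
      filter_upwards [isOpen_ne.mem_nhds hx] with y hy using fundSolDiv_eq N P ν (basisVec j) hy
    rw [heq.fderiv_eq, fderiv_norm_sq_rpow_mul _ hx (differentiableAt_fundSolDivNum N P ν _ x),
      inner_basisVec_right]
    ring
  have : ‖x‖ ^ 2 ≠ 0 := by simpa using hx
  have hN0 : N ≠ 0 := by linarith
  have hN20 : N - 2 ≠ 0 := by linarith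
  have hm : (m : ℝ) = N + 2 - 2 * k := by rw [hN]; ring
  have euler := norm_sq_mul_polyFun_dirDeriv_scaledReflv hP.isHomogeneous ν x
  have euler' := norm_sq_mul_polyFun_dirDeriv_dirDeriv_scaledReflv hP.isHomogeneous ν x ν
  simp only [hterm, ← Finset.mul_sum, Finset.sum_sub_distrib, sum_mul_fundSolDivNum,
    sum_fderiv_fundSolDivNum N hP, dirDeriv_comm x ν, hm] at euler' ⊢
  refine mul_eq_zero_of_right _ ?_
  linear_combination (norm := (field_simp; ring)) -2 * ((N + 2 - 2 * k) - 2) * euler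
    + 8 / N * ‖x‖ ^ 2 * euler'

end DivergenceFree

section Green

/-- A smooth radial function vanishing on the unit ball and equal to `1` for `|x|² ≥ 2`. -/
def radialCutoff {m : ℕ} (x : Evec m) : ℝ := Real.smoothTransition (‖x‖ ^ 2 - 1)

variable {m : ℕ}

lemma contDiff_radialCutoff : ContDiff ℝ 2 (radialCutoff : Evec m → ℝ) :=
  (Real.smoothTransition.contDiff (n := 2)).comp ((contDiff_norm_sq ℝ).sub contDiff_const)

lemma radialCutoff_eq_zero {x : Evec m} (hx : ‖x‖ ≤ 1) : radialCutoff x = 0 :=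
  Real.smoothTransition.zero_of_nonpos (by nlinarith [norm_nonneg x])

lemma radialCutoff_eq_one {x : Evec m} (hx : 2 ≤ ‖x‖) : radialCutoff x = 1 :=
  Real.smoothTransition.one_of_one_le (by nlinarith [norm_nonneg x])

lemma radialCutoff_eventuallyEq_zero : (radialCutoff : Evec m → ℝ) =ᶠ[𝓝 0] fun _ => 0 := by
  filter_upwards [ball_mem_nhds (0 : Evec m) one_pos] with y hy
  exact radialCutoff_eq_zero (mem_ball_zero_iff.1 hy).le

lemma pdv_radialCutoff (i : Fin m) (x : Evec m) :
    pdv i radialCutoff x = 2 * deriv Real.smoothTransition (‖x‖ ^ 2 - 1) * x i := by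
  have htransition : HasDerivAt Real.smoothTransition _ (‖x‖ ^ 2 - 1) :=
    ((Real.smoothTransition.contDiff (n := 1)).differentiable one_ne_zero _).hasDerivAt
  have hchain : HasFDerivAt (radialCutoff : Evec m → ℝ) _ x :=
    htransition.comp_hasFDerivAt x ((hasStrictFDerivAt_norm_sq x).hasFDerivAt.sub_const 1)
  rw [pdv, hchain.fderiv]
  simp only [smul_apply, add_apply, innerSL_apply_apply, two_smul, smul_eq_mul,
    inner_basisVec_right]
  ring

lemma pdv_radialCutoff_eventuallyEq_zero (i : Fin m) : pdv i radialCutoff =ᶠ[𝓝 0] fun _ => 0 := by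
  filter_upwards [radialCutoff_eventuallyEq_zero.fderiv (𝕜 := ℝ)] with y hy
  simp [pdv, hy]

lemma contDiff_radialCutoff_mul {n : WithTop ℕ∞} (hn : n ≤ 2) {g : Evec m → ℝ}
    (hg : ContDiffOn ℝ n g {0}ᶜ) : ContDiff ℝ n (fun x => radialCutoff x * g x) := by
  refine contDiff_iff_contDiffAt.2 fun x => ?_
  by_cases hx : x = 0
  · refine (contDiffAt_const (c := (0 : ℝ))).congr_of_eventuallyEq ?_
    filter_upwards [hx ▸ radialCutoff_eventuallyEq_zero] with y hy
    rw [hy, zero_mul]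
  · exact (contDiff_radialCutoff.of_le hn).contDiffAt.mul
      (hg.contDiffAt (isOpen_compl_singleton.mem_nhds hx))

lemma contDiff_pdv {n n' : WithTop ℕ∞} (hn : n' + 1 ≤ n) (i : Fin m) {g : Evec m → ℝ}
    (hg : ContDiff ℝ n g) : ContDiff ℝ n' (pdv i g) :=
  (hg.fderiv_right hn).clm_apply contDiff_const

lemma contDiffOn_pdv {n n' : WithTop ℕ∞} (hn : n' + 1 ≤ n) (i : Fin m) {s : Set (Evec m)}
    (hs : IsOpen s) {g : Evec m → ℝ} (hg : ContDiffOn ℝ n g s) : ContDiffOn ℝ n' (pdv i g) s :=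
  (hg.fderiv_of_isOpen hs hn).clm_apply contDiffOn_const

lemma hasCompactSupport_pdv (i : Fin m) {g : Evec m → ℝ} (hg : HasCompactSupport g) :
    HasCompactSupport (pdv i g) :=
  hg.fderiv_apply ℝ _

lemma integral_pdv_mul (i : Fin m) {φ g : Evec m → ℝ} (hφ : ContDiff ℝ 1 φ)
    (hc : HasCompactSupport φ) (hg : ContDiff ℝ 1 g) :
    ∫ x, pdv i φ x * g x = -∫ x, φ x * pdv i g x := by
  refine neg_eq_iff_eq_neg.1 (integral_mul_fderiv_eq_neg_fderiv_mul_of_integrable (μ := volume)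
    (v := (basisVec i : Evec m)) ?_ ?_ ?_ (fun x _ => hφ.differentiable one_ne_zero x)
    (fun x _ => hg.differentiable one_ne_zero x)).symm
  · exact ((contDiff_pdv (n' := 0) (by simp) i hφ).continuous.mul
      hg.continuous).integrable_of_hasCompactSupport (hasCompactSupport_pdv i hc).mul_right
  · exact (hφ.continuous.mul (contDiff_pdv (n' := 0) (by simp) i
      hg).continuous).integrable_of_hasCompactSupport hc.mul_right
  · exact (hφ.continuous.mul hg.continuous).integrable_of_hasCompactSupport hc.mul_right

lemma continuous_pdv_radialCutoff_mul (i : Fin m) {g : Evec m → ℝ} (hg : ContinuousOn g {0}ᶜ) :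
    Continuous fun x => pdv i radialCutoff x * g x := by
  refine continuous_iff_continuousAt.2 fun x => ?_
  by_cases hx : x = 0
  · refine (continuousAt_const (y := (0 : ℝ))).congr ?_
    filter_upwards [hx ▸ pdv_radialCutoff_eventuallyEq_zero i] with y hy
    rw [hy, zero_mul]
  · exact (contDiff_pdv (n' := 1) (by norm_num) i contDiff_radialCutoff).continuous.continuousAt.mul
      (hg.continuousAt (isOpen_compl_singleton.mem_nhds hx))

lemma pdv_radialCutoff_mul (i : Fin m) {g : Evec m → ℝ} (hg : ContDiffOn ℝ 1 g {0}ᶜ)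
    (x : Evec m) :
    pdv i (fun x => radialCutoff x * g x) x =
      pdv i radialCutoff x * g x + radialCutoff x * pdv i g x := by
  by_cases hx : x = 0
  · have hzero : (fun x => radialCutoff x * g x) =ᶠ[𝓝 0] fun _ => 0 := by
      filter_upwards [radialCutoff_eventuallyEq_zero] with y hy
      rw [hy, zero_mul]
    rw [hx, (pdv_radialCutoff_eventuallyEq_zero i).eq_of_nhds,
      radialCutoff_eventuallyEq_zero.eq_of_nhds, pdv, hzero.fderiv_eq]
    simp
  · have hprod := fderiv_fun_mul (contDiff_radialCutoff.differentiable two_ne_zero x)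
      ((hg.contDiffAt (isOpen_compl_singleton.mem_nhds hx)).differentiableAt one_ne_zero)
    simp only [pdv, hprod, add_apply, FunLike.coe_smul, Pi.smul_apply, smul_eq_mul]
    ring

lemma hasCompactSupport_pdv_radialCutoff_mul (i : Fin m) (g : Evec m → ℝ) :
    HasCompactSupport fun x => pdv i radialCutoff x * g x := by
  refine HasCompactSupport.intro (isCompact_closedBall (0 : Evec m) 2) fun x hx => ?_
  have hx : 2 < ‖x‖ := by simpa using hx
  have hone : (radialCutoff : Evec m → ℝ) =ᶠ[𝓝 x] fun _ => 1 := by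
    filter_upwards [(isOpen_lt continuous_const continuous_norm).mem_nhds hx] with y hy
    exact radialCutoff_eq_one (le_of_lt hy)
  simp [pdv, hone.fderiv_eq]

lemma integrable_mul_of_hasCompactSupport {φ g : Evec m → ℝ} (hφ : Continuous φ)
    (hc : HasCompactSupport φ) (hg : Continuous g) : Integrable fun x => φ x * g x :=
  (hφ.mul hg).integrable_of_hasCompactSupport hc.mul_right

lemma integral_sum_pdv_mul_radialCutoff_mul {X : Fin m → Evec m → ℝ} {D : Evec m → ℝ}
    (hX : ∀ j, ContDiffOn ℝ 1 (X j) {0}ᶜ) (hD : ∀ x ≠ 0, ∑ j, pdv j (X j) x = D x)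
    {φ : Evec m → ℝ} (hφ : ContDiff ℝ 1 φ) (hc : HasCompactSupport φ) :
    ∫ x, ∑ j, pdv j φ x * (radialCutoff x * X j x) =
      -(∫ x, φ x * ∑ j, pdv j radialCutoff x * X j x) - ∫ x, φ x * (radialCutoff x * D x) := by
  have hχX := fun j => contDiff_radialCutoff_mul (by norm_num) (hX j)
  have hdiv : ∀ x, ∑ j, pdv j (fun x => radialCutoff x * X j x) x =
      ∑ j, pdv j radialCutoff x * X j x + radialCutoff x * D x := by
    intro x
    simp only [pdv_radialCutoff_mul _ (hX _), Finset.sum_add_distrib, ← Finset.mul_sum]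
    by_cases hx : x = 0
    · simp [hx, radialCutoff_eq_zero]
    · rw [hD x hx]
  have hdX : ∀ j, Continuous (pdv j fun x => radialCutoff x * X j x) := fun j =>
    (contDiff_pdv (n' := 0) (by norm_num) j (hχX j)).continuous
  have hχ : Continuous fun x => ∑ j, pdv j radialCutoff x * X j x :=
    continuous_finsetSum _ fun j _ => continuous_pdv_radialCutoff_mul j (hX j).continuousOn
  have hdχX : Continuous fun x => ∑ j, pdv j (fun x => radialCutoff x * X j x) x :=
    continuous_finsetSum _ fun j _ => hdX j
  have hχD : Continuous fun x => radialCutoff x * D x :=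
    (hdχX.sub hχ).congr fun x => by simp only [Pi.sub_apply, hdiv, add_sub_cancel_left]
  calc ∫ x, ∑ j, pdv j φ x * (radialCutoff x * X j x)
      = ∑ j, ∫ x, pdv j φ x * (radialCutoff x * X j x) :=
        integral_finsetSum _ fun j _ => integrable_mul_of_hasCompactSupport
          (contDiff_pdv (n' := 0) (by norm_num) j hφ).continuous (hasCompactSupport_pdv j hc)
          (hχX j).continuous
    _ = -∫ x, φ x * ∑ j, pdv j (fun x => radialCutoff x * X j x) x := by
        simp only [integral_pdv_mul _ hφ hc (hχX _), Finset.mul_sum, Finset.sum_neg_distrib]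
        rw [integral_finsetSum _ fun j _ =>
          integrable_mul_of_hasCompactSupport hφ.continuous hc (hdX j)]
    _ = -(∫ x, φ x * ∑ j, pdv j radialCutoff x * X j x)
          - ∫ x, φ x * (radialCutoff x * D x) := by
        simp only [hdiv, mul_add]
        rw [integral_add (integrable_mul_of_hasCompactSupport hφ.continuous hc hχ)
          (integrable_mul_of_hasCompactSupport hφ.continuous hc hχD), neg_add, sub_eq_add_neg]

lemma integral_sum_pdv_pdv_mul_radialCutoff_mul {S : Fin m → Fin m → Evec m → ℝ}
    {V : Fin m → Evec m → ℝ} (hS : ∀ i j, ContDiffOn ℝ 2 (S i j) {0}ᶜ)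
    (hV : ∀ i, ∀ x ≠ 0, ∑ j, pdv j (S i j) x = V i x)
    (hdiv : ∀ x ≠ 0, ∑ i, pdv i (V i) x = 0)
    {φ : Evec m → ℝ} (hφ : ContDiff ℝ 2 φ) (hc : HasCompactSupport φ) :
    ∫ x, ∑ i, ∑ j, pdv j (pdv i φ) x * (radialCutoff x * S i j x) =
      (∫ x, φ x * ∑ i, pdv i radialCutoff x * V i x)
        - ∫ x, ∑ i, pdv i φ x * ∑ j, pdv j radialCutoff x * S i j x := by
  have hφ₁ : ContDiff ℝ 1 φ := hφ.of_le (by norm_num)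
  have hdφ : ∀ i, ContDiff ℝ 1 (pdv i φ) := fun i => contDiff_pdv (by norm_num) i hφ
  have hddφ : ∀ i j, Continuous (pdv j (pdv i φ)) := fun i j =>
    (contDiff_pdv (n' := 0) (by norm_num) j (hdφ i)).continuous
  have hdc : ∀ i, HasCompactSupport (pdv i φ) := fun i => hasCompactSupport_pdv i hc
  have hS₁ : ∀ i j, ContDiffOn ℝ 1 (S i j) {0}ᶜ := fun i j => (hS i j).of_le (by norm_num)
  have hV₁ : ∀ i, ContDiffOn ℝ 1 (V i) {0}ᶜ := fun i =>
    (ContDiffOn.sum (s := Finset.univ) fun j _ =>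
      contDiffOn_pdv (n' := 1) (by norm_num) j isOpen_compl_singleton (hS i j)).congr
        fun x hx => (hV i x hx).symm
  have hχS : ∀ i, Continuous fun x => ∑ j, pdv j radialCutoff x * S i j x := fun i =>
    continuous_finsetSum _ fun j _ => continuous_pdv_radialCutoff_mul j (hS i j).continuousOn
  have hχV : ∀ i, Continuous fun x => radialCutoff x * V i x := fun i =>
    (contDiff_radialCutoff_mul (by norm_num) (hV₁ i)).continuous
  rw [integral_finsetSum _ fun i _ => integrable_finsetSum _ fun j _ =>
      integrable_mul_of_hasCompactSupport (hddφ i j) (hasCompactSupport_pdv j (hdc i))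
        (contDiff_radialCutoff_mul le_rfl (hS i j)).continuous]
  simp only [integral_sum_pdv_mul_radialCutoff_mul (hS₁ _) (hV _) (hdφ _) (hdc _),
    Finset.sum_sub_distrib, Finset.sum_neg_distrib]
  rw [← integral_finsetSum _ fun i _ => integrable_mul_of_hasCompactSupport (hdφ i).continuous
      (hdc i) (hχS i),
    ← integral_finsetSum _ fun i _ => integrable_mul_of_hasCompactSupport (hdφ i).continuous
      (hdc i) (hχV i), integral_sum_pdv_mul_radialCutoff_mul (D := 0) hV₁ hdiv hφ₁ hc]
  simp only [Pi.zero_apply, mul_zero, integral_zero]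
  ring

end Green

section Homogeneous

lemma exists_norm_le_of_homogeneous {E : Type*} [NormedAddCommGroup E] [NormedSpace ℝ E]
    [ProperSpace E] {n : ℕ} {g : E → ℝ} (hg : ContinuousOn g {0}ᶜ)
    (hom : ∀ c > 0, ∀ x, g (c • x) = (c ^ n)⁻¹ * g x) :
    ∃ C, ∀ x ≠ 0, ‖g x‖ ≤ C * (‖x‖ ^ n)⁻¹ := by
  obtain ⟨C, hC⟩ := (isCompact_sphere (0 : E) 1).exists_bound_of_continuousOn
    (hg.mono fun x hx => by rintro rfl; simp at hx)
  refine ⟨C, fun x hx => ?_⟩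
  have hx : 0 < ‖x‖ := norm_pos_iff.2 hx
  calc ‖g x‖ = ‖g (‖x‖⁻¹ • x)‖ * (‖x‖ ^ n)⁻¹ := by
        rw [← smul_inv_smul₀ hx.ne' x, hom ‖x‖ hx, smul_inv_smul₀ hx.ne', norm_mul, mul_comm,
          norm_inv, norm_pow, norm_norm]
    _ ≤ C * (‖x‖ ^ n)⁻¹ := by
        gcongr
        exact hC _ (by simp [norm_smul, hx.ne'])

variable {m : ℕ}

lemma aestronglyMeasurable_of_continuousOn_compl_zero (hm : 0 < m) {g : Evec m → ℝ}
    (hg : ContinuousOn g {0}ᶜ) : AEStronglyMeasurable g volume := by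
  have := nontrivial_evec hm
  rw [← restrict_compl_singleton (μ := volume) (0 : Evec m)]
  exact hg.aestronglyMeasurable (measurableSet_singleton 0).compl

lemma locallyIntegrable_of_homogeneous (hm : 2 ≤ m) {g : Evec m → ℝ} (hg : ContinuousOn g {0}ᶜ)
    (hom : ∀ c > 0, ∀ x, g (c • x) = (c ^ (m - 2))⁻¹ * g x) : LocallyIntegrable g := by
  have := nontrivial_evec (by lia : 0 < m)
  obtain ⟨C, hC⟩ := exists_norm_le_of_homogeneous hg hom
  refine locallyIntegrable_of_norm_le_rpow (C := C) (α := ((m - 2 : ℕ) : ℝ)) (by simp; lia)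
    (by simp; lia) ?_ (aestronglyMeasurable_of_continuousOn_compl_zero (by lia) hg)
  filter_upwards [compl_mem_ae_iff.2 (measure_singleton (0 : Evec m))] with x hx
  rw [Real.rpow_neg (norm_nonneg x), Real.rpow_natCast]
  exact hC x hx

end Homogeneous

section GreenLimit

variable {m : ℕ}

lemma pdv_comp_smul (i : Fin m) (δ : ℝ) (f : Evec m → ℝ) :
    pdv i (fun x => f (δ • x)) = fun x => δ * pdv i f (δ • x) := by
  funext x
  simp [pdv, fderiv_comp_smul]

lemma pdv_pdv_comp_smul (i j : Fin m) (δ : ℝ) {f : Evec m → ℝ}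
    (hf : Differentiable ℝ (pdv i f)) :
    pdv j (pdv i fun x => f (δ • x)) = fun x => δ ^ 2 * pdv j (pdv i f) (δ • x) := by
  funext x
  have : DifferentiableAt ℝ (fun x => pdv i f (δ • x)) x :=
    (hf _).comp x (differentiable_id.const_smul δ x)
  rw [pdv_comp_smul, pdv, fderiv_const_mul this, fderiv_comp_smul]
  simp only [FunLike.coe_smul, Pi.smul_apply, smul_eq_mul, pdv, pow_two, mul_assoc]

lemma tendsto_integral_comp_smul_mul {ψ K : Evec m → ℝ} (hψ : Continuous ψ)
    (hc : HasCompactSupport ψ) (hK : Integrable K) :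
    Tendsto (fun δ : ℝ => ∫ x, ψ (δ • x) * K x) (𝓝[>] 0) (𝓝 (ψ 0 * ∫ x, K x)) := by
  obtain ⟨C, hC⟩ := hc.exists_bound_of_continuous hψ
  rw [← integral_const_mul]
  refine tendsto_integral_filter_of_dominated_convergence (fun x => C * ‖K x‖)
    (Eventually.of_forall fun δ =>
      (hψ.comp (continuous_const_smul δ)).aestronglyMeasurable.mul hK.aestronglyMeasurable)
    (Eventually.of_forall fun δ => Eventually.of_forall fun x => ?_) (hK.norm.const_mul C)
    (Eventually.of_forall fun x => Tendsto.mul_const _ ?_)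
  · rw [norm_mul]
    gcongr
    exact hC _
  · have : Continuous fun δ : ℝ => ψ (δ • x) := by fun_prop
    simpa using (this.tendsto 0).mono_left nhdsWithin_le_nhds

lemma tendsto_integral_radialCutoff_mul (hm : 0 < m) {g : Evec m → ℝ} (hg : Integrable g) :
    Tendsto (fun δ : ℝ => ∫ x, radialCutoff (δ⁻¹ • x) * g x) (𝓝[>] 0) (𝓝 (∫ x, g x)) := by
  have := nontrivial_evec hm
  refine tendsto_integral_filter_of_dominated_convergence (fun x => ‖g x‖)
    (Eventually.of_forall fun δ => (contDiff_radialCutoff.continuous.comp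
      (continuous_const_smul δ⁻¹)).aestronglyMeasurable.mul hg.aestronglyMeasurable)
    (Eventually.of_forall fun δ => Eventually.of_forall fun x => ?_) hg.norm ?_
  · rw [norm_mul, radialCutoff, Real.norm_of_nonneg (Real.smoothTransition.nonneg _)]
    exact mul_le_of_le_one_left (norm_nonneg _) (Real.smoothTransition.le_one _)
  · filter_upwards [compl_mem_ae_iff.2 (measure_singleton (0 : Evec m))] with x hx
    have : 0 < ‖x‖ := norm_pos_iff.2 hx
    refine tendsto_const_nhds.congr' ?_
    filter_upwards [Ioo_mem_nhdsGT (by positivity : 0 < ‖x‖ / 2)] with δ hδ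
    rw [radialCutoff_eq_one, one_mul]
    rw [norm_smul, norm_inv, Real.norm_of_nonneg hδ.1.le, le_inv_mul_iff₀ hδ.1]
    linarith [hδ.2]

section

variable {S : Fin m → Fin m → Evec m → ℝ} {V : Fin m → Evec m → ℝ} {φ : Evec m → ℝ}

lemma integral_radialCutoff_mul_sum_pdv_pdv_mul (hm : 2 ≤ m)
    (hS : ∀ i j, ContDiffOn ℝ 2 (S i j) {0}ᶜ)
    (hom : ∀ i j, ∀ c > 0, ∀ x, S i j (c • x) = (c ^ (m - 2))⁻¹ * S i j x)
    (hV : ∀ i, ∀ x ≠ 0, ∑ j, pdv j (S i j) x = V i x)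
    (hdiv : ∀ x ≠ 0, ∑ i, pdv i (V i) x = 0)
    (hφ : ContDiff ℝ 2 φ) (hc : HasCompactSupport φ) {δ : ℝ} (hδ : 0 < δ) :
    ∫ x, radialCutoff (δ⁻¹ • x) * ∑ i, ∑ j, pdv j (pdv i φ) x * S i j x =
      (∫ x, φ (δ • x) * ∑ i, pdv i radialCutoff x * V i x)
        - δ * ∫ x, ∑ i, pdv i φ (δ • x) * ∑ j, pdv j radialCutoff x * S i j x := by
  have hdφ : ∀ i, Differentiable ℝ (pdv i φ) := fun i =>
    (contDiff_pdv (n' := 1) (by norm_num) i hφ).differentiable one_ne_zero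
  have hcδ : HasCompactSupport fun x : Evec m => φ (δ • x) :=
    hc.comp_homeomorph (Homeomorph.smulOfNeZero δ hδ.ne')
  have hsubst (F : Evec m → ℝ) : ∫ x, F x = ∫ x, δ ^ m * F (δ • x) := by
    rw [integral_const_mul, Measure.integral_comp_smul_of_nonneg _ _ _ (hR := hδ.le),
      finrank_euclideanSpace_fin, smul_eq_mul, mul_inv_cancel_left₀ (pow_pos hδ _).ne']
  have hpow : δ ^ m * (δ ^ (m - 2))⁻¹ = δ ^ 2 := by
    rw [← div_eq_mul_inv, div_eq_iff (pow_pos hδ _).ne', ← pow_add]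
    congr 1
    lia
  calc ∫ x, radialCutoff (δ⁻¹ • x) * ∑ i, ∑ j, pdv j (pdv i φ) x * S i j x
      = ∫ x, ∑ i, ∑ j, pdv j (pdv i fun x => φ (δ • x)) x * (radialCutoff x * S i j x) := by
        rw [hsubst]
        refine integral_congr_ae (Eventually.of_forall fun x => ?_)
        simp only [pdv_pdv_comp_smul _ _ _ (hdφ _), inv_smul_smul₀ hδ.ne', hom _ _ δ hδ, ← hpow,
          Finset.mul_sum]
        exact Finset.sum_congr rfl fun i _ => Finset.sum_congr rfl fun j _ => by ring
    _ = _ := by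
        rw [integral_sum_pdv_pdv_mul_radialCutoff_mul hS hV hdiv (φ := fun x => φ (δ • x))
          (hφ.comp (contDiff_const_smul δ)) hcδ, ← integral_const_mul]
        simp only [pdv_comp_smul, Finset.mul_sum, mul_assoc]

lemma integrable_pdv_radialCutoff_mul (i : Fin m) {g : Evec m → ℝ} (hg : ContinuousOn g {0}ᶜ) :
    Integrable fun x => pdv i radialCutoff x * g x :=
  (continuous_pdv_radialCutoff_mul i hg).integrable_of_hasCompactSupport
    (hasCompactSupport_pdv_radialCutoff_mul i g)

lemma tendsto_integral_sum_pdv_comp_smul_mul {G : Fin m → Evec m → ℝ}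
    (hφ : ContDiff ℝ 1 φ) (hc : HasCompactSupport φ) (hG : ∀ i, Integrable (G i)) :
    Tendsto (fun δ : ℝ => ∫ x, ∑ i, pdv i φ (δ • x) * G i x) (𝓝[>] 0)
      (𝓝 (∑ i, pdv i φ 0 * ∫ x, G i x)) := by
  have hdφ : ∀ i, Continuous (pdv i φ) := fun i =>
    (contDiff_pdv (n' := 0) (by norm_num) i hφ).continuous
  have hdc : ∀ i, HasCompactSupport (pdv i φ) := fun i => hasCompactSupport_pdv i hc
  refine (tendsto_finsetSum Finset.univ fun i _ => tendsto_integral_comp_smul_mul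
    (hdφ i) (hdc i) (hG i)).congr fun δ => (integral_finsetSum _ fun i _ => ?_).symm
  obtain ⟨C, hC⟩ := (hdc i).exists_bound_of_continuous (hdφ i)
  exact (hG i).bdd_mul ((hdφ i).comp (continuous_const_smul δ)).aestronglyMeasurable
    (Eventually.of_forall fun x => hC _)

/- Cut the singularity off at scale `δ`: by homogeneity the terms carrying `∇φ` are `O(δ)`, and the
remaining flux term is scale invariant. -/
theorem integral_sum_pdv_pdv_mul_eq_mul_integral (hm : 2 ≤ m)
    (hS : ∀ i j, ContDiffOn ℝ 2 (S i j) {0}ᶜ)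
    (hom : ∀ i j, ∀ c > 0, ∀ x, S i j (c • x) = (c ^ (m - 2))⁻¹ * S i j x)
    (hV : ∀ i, ∀ x ≠ 0, ∑ j, pdv j (S i j) x = V i x)
    (hdiv : ∀ x ≠ 0, ∑ i, pdv i (V i) x = 0)
    (hφ : ContDiff ℝ 2 φ) (hc : HasCompactSupport φ) :
    ∫ x, ∑ i, ∑ j, pdv j (pdv i φ) x * S i j x =
      φ 0 * ∫ x, ∑ i, pdv i radialCutoff x * V i x := by
  have hV₁ : ∀ i, ContinuousOn (V i) {0}ᶜ := fun i =>
    (ContDiffOn.sum (s := Finset.univ) fun j _ => contDiffOn_pdv (n' := 1) (by norm_num) j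
      isOpen_compl_singleton (hS i j)).continuousOn.congr fun x hx => (hV i x hx).symm
  have hχS : ∀ i, Integrable fun x => ∑ j, pdv j radialCutoff x * S i j x := fun i =>
    integrable_finsetSum _ fun j _ => integrable_pdv_radialCutoff_mul j (hS i j).continuousOn
  have hφS : Integrable fun x => ∑ i, ∑ j, pdv j (pdv i φ) x * S i j x :=
    integrable_finsetSum _ fun i _ => integrable_finsetSum _ fun j _ =>
      (locallyIntegrable_of_homogeneous hm (hS i j).continuousOn
        (hom i j)).integrable_smul_left_of_hasCompactSupport
          (contDiff_pdv (n' := 0) (by norm_num) j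
            (contDiff_pdv (n' := 1) (by norm_num) i hφ)).continuous
          (hasCompactSupport_pdv j (hasCompactSupport_pdv i hc))
  have hflux := tendsto_integral_comp_smul_mul hφ.continuous hc
    (integrable_finsetSum Finset.univ fun i _ => integrable_pdv_radialCutoff_mul i (hV₁ i))
  have hgrad := tendsto_integral_sum_pdv_comp_smul_mul (hφ.of_le (by norm_num)) hc hχS
  have hlim := hflux.sub ((tendsto_id.mono_left nhdsWithin_le_nhds).mul hgrad)
  rw [zero_mul, sub_zero] at hlim
  refine tendsto_nhds_unique ((tendsto_integral_radialCutoff_mul (by lia) hφS).congr' ?_) hlim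
  filter_upwards [self_mem_nhdsWithin] with δ hδ
  exact integral_radialCutoff_mul_sum_pdv_pdv_mul hm hS hom hV hdiv hφ hc hδ

end

end GreenLimit

section BosonicSymbol

variable {m k : ℕ} {P : MvPolynomial (Fin m) ℝ}

lemma isHomogeneous_linForm_mul_dirDeriv (hP : P.IsHomogeneous k) (v w : Evec m) :
    (linForm v * ∂[w] P).IsHomogeneous k := by
  rcases Nat.eq_zero_or_pos k with rfl | hk
  · rw [dirDeriv_eq_zero_of_isHomogeneous_zero hP, mul_zero]
    exact MvPolynomial.isHomogeneous_zero ..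
  · simpa only [Nat.add_sub_cancel' (Nat.succ_le_of_lt hk)] using
      (isHomogeneous_linForm v).mul (isHomogeneous_dirDeriv hP w)

lemma dirDeriv_dirDeriv_eq_zero (hk : k < 2) (hP : P.IsHomogeneous k) (v w : Evec m) :
    ∂[w] (∂[v] P) = 0 :=
  dirDeriv_eq_zero_of_isHomogeneous_zero
    (by simpa only [Nat.sub_eq_zero_of_le (Nat.le_of_lt_succ hk)] using isHomogeneous_dirDeriv hP v)
    w

lemma isHomogeneous_normSqPoly_mul_dirDeriv_dirDeriv (hP : P.IsHomogeneous k) (v w : Evec m) :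
    (normSqPoly m * ∂[w] (∂[v] P)).IsHomogeneous k := by
  rcases Nat.lt_or_ge k 2 with hk | hk
  · rw [dirDeriv_dirDeriv_eq_zero hk hP, mul_zero]
    exact MvPolynomial.isHomogeneous_zero ..
  · simpa only [Nat.sub_sub, Nat.add_sub_cancel' hk] using
      isHomogeneous_normSqPoly.mul (isHomogeneous_dirDeriv (isHomogeneous_dirDeriv hP v) w)

lemma isHomogeneous_bosonicSymbol (N : ℝ) (hP : P.IsHomogeneous k) (a b : Evec m) :
    (bosonicSymbol N a b P).IsHomogeneous k :=
  ((isHomogeneous_smul hP _).sub (isHomogeneous_smul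
    ((isHomogeneous_linForm_mul_dirDeriv hP a b).add
      (isHomogeneous_linForm_mul_dirDeriv hP b a)) _)).add
    (isHomogeneous_smul (isHomogeneous_normSqPoly_mul_dirDeriv_dirDeriv hP a b) _)

lemma polyFun_dirDeriv_dirDeriv_dirDeriv_self (hP : P.IsHomogeneous k) (u v w : Evec m) :
    polyFun (∂[u] (∂[w] (∂[v] P))) u = ((k : ℝ) - 2) * polyFun (∂[w] (∂[v] P)) u := by
  rcases Nat.eq_zero_or_pos k with rfl | hk
  · simp [dirDeriv_eq_zero_of_isHomogeneous_zero hP]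
  · rw [polyFun_dirDeriv_dirDeriv_self (isHomogeneous_dirDeriv hP v), Nat.cast_pred hk]
    ring

lemma sum_polyFun_dirDeriv_dirDeriv_bosonicSymbol {N : ℝ} (hP : IsSolidHarmonic k P)
    (a b u : Evec m) :
    ∑ j, polyFun (∂[basisVec j] (∂[basisVec j] (bosonicSymbol N a b P))) u =
      (4 / (N * (N - 2)) * (2 * m + 4 * (k - 2)) - 8 / N) * polyFun (∂[b] (∂[a] P)) u := by
  have hterm : ∀ j, polyFun (∂[basisVec j] (∂[basisVec j] (bosonicSymbol N a b P))) u =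
      ⟪a, b⟫ * polyFun (∂[basisVec j] (∂[basisVec j] P)) u
      - 2 / N * (2 * (a j * polyFun (∂[basisVec j] (∂[b] P)) u)
        + 2 * (b j * polyFun (∂[basisVec j] (∂[a] P)) u)
        + ⟪a, u⟫ * polyFun (∂[basisVec j] (∂[basisVec j] (∂[b] P))) u
        + ⟪b, u⟫ * polyFun (∂[basisVec j] (∂[basisVec j] (∂[a] P))) u)
      + 4 / (N * (N - 2)) * (2 * polyFun (∂[b] (∂[a] P)) u
        + 4 * (u j * polyFun (∂[basisVec j] (∂[b] (∂[a] P))) u)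
        + ‖u‖ ^ 2 * polyFun (∂[basisVec j] (∂[basisVec j] (∂[b] (∂[a] P)))) u) := by
    intro j
    have hunit : ⟪(basisVec j : Evec m), basisVec j⟫ = 1 := by simp
    simp only [bosonicSymbol, map_add, map_sub, Derivation.map_smul, dirDeriv_mul,
      dirDeriv_linForm, dirDeriv_normSqPoly, dirDeriv_C, polyFun_add, polyFun_sub, polyFun_smul,
      polyFun_mul, polyFun_linForm, polyFun_normSqPoly, polyFun_C, polyFun_zero, hunit,
      inner_basisVec, inner_basisVec_right]
    ring
  simp only [hterm, Finset.sum_add_distrib, Finset.sum_sub_distrib, ← Finset.mul_sum,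
    ← polyFun_dirDeriv_eq_sum, hP.sum_polyFun_dirDeriv_dirDeriv,
    (hP.dirDeriv _).sum_polyFun_dirDeriv_dirDeriv,
    ((hP.dirDeriv a).dirDeriv b).sum_polyFun_dirDeriv_dirDeriv, Finset.sum_const,
    Finset.card_univ, Fintype.card_fin, nsmul_eq_mul,
    polyFun_dirDeriv_dirDeriv_dirDeriv_self hP.isHomogeneous, dirDeriv_comm a b]
  ring

lemma IsSolidHarmonic.bosonicSymbol {N : ℝ} (hN : N = m + 2 * k - 2) (hN2 : 2 < N)
    (hP : IsSolidHarmonic k P) (a b : Evec m) : IsSolidHarmonic k (bosonicSymbol N a b P) where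
  isHomogeneous := isHomogeneous_bosonicSymbol N hP.isHomogeneous a b
  laplacian_eq_zero := polyFun_injective fun u => by
    have hN0 : N ≠ 0 := by linarith
    have hN20 : N - 2 ≠ 0 := by linarith
    have hcoeff : 4 / (N * (N - 2)) * (2 * m + 4 * (k - 2)) - 8 / N = 0 := by
      rw [show (m : ℝ) = N + 2 - 2 * k by rw [hN]; ring]
      field_simp
      ring
    rw [polyFun_sum, sum_polyFun_dirDeriv_dirDeriv_bosonicSymbol hP, hcoeff, zero_mul, polyFun_zero]

end BosonicSymbol

section Scaling

variable {m k : ℕ} {N : ℝ} {P : MvPolynomial (Fin m) ℝ}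

lemma scaledReflv_eq (ν : Evec m) {x : Evec m} (hx : x ≠ 0) :
    scaledReflv ν x = ‖x‖ ^ 2 • reflv x ν := by
  have : ‖x‖ ^ 2 ≠ 0 := by simpa using hx
  rw [scaledReflv, reflv, smul_sub, smul_smul, mul_div_cancel₀ _ this]

lemma polyFun_scaledReflv (hP : P.IsHomogeneous k) (ν : Evec m) {x : Evec m} (hx : x ≠ 0) :
    polyFun P (scaledReflv ν x) = (‖x‖ ^ 2) ^ k * polyFun P (reflv x ν) := by
  rw [scaledReflv_eq ν hx, polyFun_smul_of_isHomogeneous hP]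

lemma norm_sq_mul_polyFun_dirDeriv_scaledReflv_eq_pow_mul (hP : P.IsHomogeneous k)
    (v ν : Evec m) {x : Evec m} (hx : x ≠ 0) :
    ‖x‖ ^ 2 * polyFun (∂[v] P) (scaledReflv ν x) =
      (‖x‖ ^ 2) ^ k * polyFun (∂[v] P) (reflv x ν) := by
  rcases k with - | l
  · simp [dirDeriv_eq_zero_of_isHomogeneous_zero hP, polyFun_zero]
  · rw [polyFun_scaledReflv (isHomogeneous_dirDeriv hP v) ν hx, Nat.add_sub_cancel]
    ring

lemma norm_sq_sq_mul_polyFun_dirDeriv_dirDeriv_scaledReflv_eq_pow_mul (hP : P.IsHomogeneous k)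
    (v w ν : Evec m) {x : Evec m} (hx : x ≠ 0) :
    (‖x‖ ^ 2) ^ 2 * polyFun (∂[w] (∂[v] P)) (scaledReflv ν x) =
      (‖x‖ ^ 2) ^ k * polyFun (∂[w] (∂[v] P)) (reflv x ν) := by
  rcases k with - | l
  · simp [dirDeriv_eq_zero_of_isHomogeneous_zero hP, polyFun_zero]
  · rw [pow_two (‖x‖ ^ 2), mul_assoc, norm_sq_mul_polyFun_dirDeriv_scaledReflv_eq_pow_mul
      (isHomogeneous_dirDeriv hP v) w ν hx, Nat.add_sub_cancel]
    ring

lemma norm_sq_rpow_mul_pow (hm : 2 ≤ m) (hN : N = m + 2 * k - 2) {x : Evec m} (hx : x ≠ 0) :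
    (‖x‖ ^ 2) ^ (-(N / 2)) * (‖x‖ ^ 2) ^ k = (‖x‖ ^ (m - 2))⁻¹ := by
  have : 0 < ‖x‖ := norm_pos_iff.2 hx
  rw [← Real.rpow_natCast (‖x‖ ^ 2) k, ← Real.rpow_add (by positivity), ← Real.rpow_natCast,
    ← Real.rpow_mul this.le, ← Real.rpow_natCast, ← Real.rpow_neg this.le, Nat.cast_sub hm, hN]
  congr 1
  push_cast
  ring

lemma fundSol_eq (hm : 2 ≤ m) (hN : N = m + 2 * k - 2) (hP : P.IsHomogeneous k)
    (ν a b : Evec m) {x : Evec m} (hx : x ≠ 0) :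
    fundSol N P ν a b x = (‖x‖ ^ (m - 2))⁻¹ * polyFun (bosonicSymbol N a b P) (reflv x ν) := by
  rw [fundSol, polyFun_scaledReflv (isHomogeneous_bosonicSymbol N hP a b) ν hx, ← mul_assoc,
    norm_sq_rpow_mul_pow hm hN hx]

lemma reflv_smul {c : ℝ} (hc : c ≠ 0) (x ν : Evec m) : reflv (c • x) ν = reflv x ν := by
  by_cases hx : x = 0
  · simp [hx]
  have : ‖x‖ ^ 2 ≠ 0 := by simpa using hx
  rw [reflv, reflv, smul_smul, norm_smul, mul_pow, Real.norm_eq_abs, sq_abs, real_inner_smul_left]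
  congr 2
  field_simp

lemma fundSol_zero (hN : N ≠ 0) (P : MvPolynomial (Fin m) ℝ) (ν a b : Evec m) :
    fundSol N P ν a b 0 = 0 := by
  rw [fundSol, norm_zero, zero_pow two_ne_zero, Real.zero_rpow (by simpa using hN), zero_mul]

lemma fundSol_smul (hm : 2 ≤ m) (hN : N = m + 2 * k - 2) (hN0 : N ≠ 0) (hP : P.IsHomogeneous k)
    (ν a b : Evec m) {c : ℝ} (hc : 0 < c) (x : Evec m) :
    fundSol N P ν a b (c • x) = (c ^ (m - 2))⁻¹ * fundSol N P ν a b x := by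
  by_cases hx : x = 0
  · simp [hx, fundSol_zero hN0]
  rw [fundSol_eq hm hN hP _ _ _ (smul_ne_zero hc.ne' hx), fundSol_eq hm hN hP _ _ _ hx,
    reflv_smul hc.ne', norm_smul, mul_pow, Real.norm_eq_abs, abs_of_pos hc, mul_inv, mul_assoc]

lemma contDiff_scaledReflv (ν : Evec m) {n : WithTop ℕ∞} : ContDiff ℝ n (scaledReflv ν) :=
  ((contDiff_norm_sq ℝ).smul contDiff_const).sub
    ((contDiff_const.mul (contDiff_id.inner ℝ contDiff_const)).smul contDiff_id)

lemma contDiffOn_fundSol (N : ℝ) (P : MvPolynomial (Fin m) ℝ) (ν a b : Evec m) :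
    ContDiffOn ℝ 2 (fundSol N P ν a b) {0}ᶜ := by
  refine ContDiffOn.mul (fun x hx => ?_)
    (((contDiff_polyFun _).of_le le_top).comp (contDiff_scaledReflv ν)).contDiffOn
  have : x ≠ 0 := hx
  exact ((contDiff_norm_sq ℝ).contDiffAt.rpow_const_of_ne (by simpa)).contDiffWithinAt

end Scaling

section Flux

/-- The radial component of the divergence of the fundamental solution, freed of its radial factor:
`⟨x, div S(x)⟩ = |x|^{2-m} fluxDensity N P ν x`. It is homogeneous of degree `0` in `x`. -/
def fluxDensity {m : ℕ} (N : ℝ) (P : MvPolynomial (Fin m) ℝ) (ν x : Evec m) : ℝ :=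
  -((m : ℝ) - 2) * polyFun P (reflv x ν) + 4 / N * polyFun (∂[ν] P) (reflv x ν)
    + 8 * ‖ν‖ ^ 2 / (N * (N - 2)) * ((‖x‖ ^ 2)⁻¹ * polyFun (∂[x] (∂[x] P)) (reflv x ν))

/-- The integral of `|x|^{1-m}` against the radial derivative of the cutoff `radialCutoff`; it
normalises the fundamental solution. -/
def fluxWeight (m : ℕ) : ℝ :=
  ∫ x : Evec m, 2 * deriv Real.smoothTransition (‖x‖ ^ 2 - 1) * (‖x‖ ^ (m - 2))⁻¹

variable {m k : ℕ} {N : ℝ} {P : MvPolynomial (Fin m) ℝ}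

lemma sum_mul_fundSolDiv (hm : 2 ≤ m) (hN : N = m + 2 * k - 2) (hP : P.IsHomogeneous k)
    (ν : Evec m) {x : Evec m} (hx : x ≠ 0) :
    ∑ j, x j * fundSolDiv N P ν (basisVec j) x =
      (‖x‖ ^ (m - 2))⁻¹ * fluxDensity N P ν x := by
  have hx0 : ‖x‖ ^ 2 ≠ 0 := by simpa using hx
  have hterm : ∀ j, x j * fundSolDiv N P ν (basisVec j) x = (‖x‖ ^ 2) ^ (-(N / 2)) * (
      -((m : ℝ) - 2) / ‖x‖ ^ 2 * (x j * x j) * polyFun P (scaledReflv ν x)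
      + 4 / N * ((x j * x j) * polyFun (∂[ν] P) (scaledReflv ν x)
        - (x j * ν j) * polyFun (∂[x] P) (scaledReflv ν x)
        + ⟪x, ν⟫ * (x j * polyFun (∂[basisVec j] P) (scaledReflv ν x)))
      + 8 * ‖ν‖ ^ 2 / (N * (N - 2)) * (‖x‖ ^ 2 *
        (x j * polyFun (∂[basisVec j] (∂[x] P)) (scaledReflv ν x)))) := by
    intro j
    rw [fundSolDiv, inner_basisVec_right, inner_basisVec_right, dirDeriv_comm x (basisVec j)]
    ring
  simp only [hterm, Finset.sum_add_distrib, Finset.sum_sub_distrib, ← Finset.mul_sum,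
    ← Finset.sum_mul, sum_mul_self, ← inner_eq_sum, ← polyFun_dirDeriv_eq_sum]
  have hsecond : ‖x‖ ^ 2 * polyFun (∂[x] (∂[x] P)) (scaledReflv ν x) =
      (‖x‖ ^ 2) ^ k * ((‖x‖ ^ 2)⁻¹ * polyFun (∂[x] (∂[x] P)) (reflv x ν)) := by
    rw [mul_left_comm, eq_inv_mul_iff_mul_eq₀ hx0, ← mul_assoc, ← pow_two,
      norm_sq_sq_mul_polyFun_dirDeriv_dirDeriv_scaledReflv_eq_pow_mul hP x x ν hx]
  rw [← norm_sq_rpow_mul_pow hm hN hx, mul_assoc _ (_ ^ k), fluxDensity,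
    polyFun_scaledReflv hP ν hx, hsecond, div_mul_cancel₀ _ hx0]
  linear_combination 4 / N * (‖x‖ ^ 2) ^ (-(N / 2)) *
    norm_sq_mul_polyFun_dirDeriv_scaledReflv_eq_pow_mul hP ν ν hx

lemma continuous_polyFun_dirDeriv_dirDeriv_self_scaledReflv (P : MvPolynomial (Fin m) ℝ)
    (ν : Evec m) : Continuous fun x => polyFun (∂[x] (∂[x] P)) (scaledReflv ν x) := by
  have hsum : ∀ x, polyFun (∂[x] (∂[x] P)) (scaledReflv ν x) =
      ∑ j, x j * polyFun (∂[x] (∂[basisVec j] P)) (scaledReflv ν x) := fun x => by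
    simp only [polyFun_dirDeriv_eq_sum x (∂[x] P), dirDeriv_comm _ x]
  simp only [hsum]
  exact continuous_finsetSum _ fun j _ => .mul (by fun_prop) <| continuous_iff_continuousAt.2
    fun x => (differentiableAt_polyFun_dirDeriv_self_scaledReflv _ ν x).continuousAt

lemma scaledReflv_of_norm_eq_one {ω : Evec m} (hω : ‖ω‖ = 1) (ν : Evec m) :
    scaledReflv ν ω = reflv ω ν := by
  rw [scaledReflv_eq ν (norm_ne_zero_iff.1 (by simp [hω])), hω, one_pow, one_smul]

lemma angularMean_fluxDensity (hm : 2 < m) (hN : N = m + 2 * k - 2) (hN2 : 2 < N)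
    (hP : IsSolidHarmonic k P) (ν : Evec m) :
    angularMean volume (fluxDensity N P ν) =
      -(((m : ℝ) - 2) * (m - 4) / (N - 2)) * polyFun P ν := by
  have hcont := fun Q : MvPolynomial (Fin m) ℝ =>
    (continuous_polyFun Q).comp (contDiff_scaledReflv ν (n := 0)).continuous
  have hmean : ∀ Q : MvPolynomial (Fin m) ℝ, angularMean volume (polyFun Q ∘ scaledReflv ν) =
      angularMean volume (fun ω => polyFun Q (reflv ω ν)) :=
    fun Q => angularMean_congr _ fun ω hω => by
      rw [Function.comp_apply, scaledReflv_of_norm_eq_one hω]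
  have hmean₂ : angularMean volume (fun x => polyFun (∂[x] (∂[x] P)) (scaledReflv ν x)) = 0 := by
    rw [← angularMean_dirDeriv_dirDeriv_reflv (by lia : 0 < m) hP ν]
    exact angularMean_congr _ fun ω hω => by rw [scaledReflv_of_norm_eq_one hω]
  have hderiv : angularMean volume (fun ω => polyFun (∂[ν] P) (reflv ω ν)) =
      ((m : ℝ) - 2) / (N - 2) * (k * polyFun P ν) := by
    rcases Nat.eq_zero_or_pos k with rfl | hk
    · simp [dirDeriv_eq_zero_of_isHomogeneous_zero hP.isHomogeneous, polyFun_zero, angularMean]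
    · rw [angularMean_reflv hm (hP.dirDeriv ν), polyFun_dirDeriv_self hP.isHomogeneous,
        Nat.cast_pred hk, hN]
      ring_nf
  rw [angularMean_congr (G := fun x => (-((m : ℝ) - 2) * (polyFun P ∘ scaledReflv ν) x
      + 4 / N * (polyFun (∂[ν] P) ∘ scaledReflv ν) x)
      + 8 * ‖ν‖ ^ 2 / (N * (N - 2)) * polyFun (∂[x] (∂[x] P)) (scaledReflv ν x)) _
      fun ω hω => by simp [fluxDensity, scaledReflv_of_norm_eq_one hω, hω],
    angularMean_add _ (((hcont _).const_mul _).fun_add ((hcont _).const_mul _))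
      ((continuous_polyFun_dirDeriv_dirDeriv_self_scaledReflv P ν).const_mul _),
    angularMean_add _ ((hcont _).const_mul _) ((hcont _).const_mul _), angularMean_const_mul,
    angularMean_const_mul, angularMean_const_mul, hmean, hmean, hmean₂, angularMean_reflv hm hP,
    hderiv, ← hN]
  have hN0 : N ≠ 0 := by linarith
  have hN20 : N - 2 ≠ 0 := by linarith
  field_simp
  rw [hN]
  ring

lemma fluxDensity_smul (N : ℝ) (P : MvPolynomial (Fin m) ℝ) (ν : Evec m) {c : ℝ} (hc : 0 < c)
    (x : Evec m) : fluxDensity N P ν (c • x) = fluxDensity N P ν x := by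
  rw [fluxDensity, fluxDensity, reflv_smul hc.ne', polyFun_dirDeriv_smul, dirDeriv_comm,
    polyFun_dirDeriv_smul, norm_smul, mul_pow, Real.norm_eq_abs, sq_abs]
  congr 2
  field_simp

lemma deriv_smoothTransition_eq_zero {t : ℝ} (ht : t < 0 ∨ 1 < t) :
    deriv Real.smoothTransition t = 0 := by
  rcases ht with ht | ht
  · have h_zero : Real.smoothTransition =ᶠ[𝓝 t] fun _ => 0 := by
      filter_upwards [Iio_mem_nhds ht] with s hs using Real.smoothTransition.zero_of_nonpos hs.le
    rw [h_zero.deriv_eq, deriv_const]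
  · have h_one : Real.smoothTransition =ᶠ[𝓝 t] fun _ => 1 := by
      filter_upwards [Ioi_mem_nhds ht] with s hs using Real.smoothTransition.one_of_one_le hs.le
    rw [h_one.deriv_eq, deriv_const]

lemma continuous_deriv_smoothTransition_norm_mul (n : ℕ) : Continuous fun x : Evec m =>
    2 * deriv Real.smoothTransition (‖x‖ ^ 2 - 1) * (‖x‖ ^ n)⁻¹ := by
  have : Continuous (deriv Real.smoothTransition) :=
    (Real.smoothTransition.contDiff (n := 1)).continuous_deriv le_rfl
  refine continuous_iff_continuousAt.2 fun y => ?_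
  rcases eq_or_ne y 0 with rfl | hy
  · refine (continuousAt_const (y := (0 : ℝ))).congr ?_
    filter_upwards [ball_mem_nhds (0 : Evec m) one_pos] with z hz
    rw [mem_ball_zero_iff] at hz
    rw [deriv_smoothTransition_eq_zero (.inl (by nlinarith [norm_nonneg z])), mul_zero, zero_mul]
  · exact ContinuousAt.mul (by fun_prop) (ContinuousAt.inv₀ (by fun_prop)
      (pow_ne_zero _ (norm_ne_zero_iff.2 hy)))

lemma fluxWeight_pos (hm : 0 < m) : 0 < fluxWeight m := by
  have := nontrivial_evec hm
  have hst : ContDiff ℝ 1 Real.smoothTransition := Real.smoothTransition.contDiff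
  obtain ⟨t, ht, hslope⟩ := exists_deriv_eq_slope Real.smoothTransition zero_lt_one
    hst.continuous.continuousOn (hst.differentiable one_ne_zero).differentiableOn
  have : 0 < 1 + t := by linarith [ht.1]
  obtain ⟨x, hx⟩ := exists_norm_eq (Evec m) (Real.sqrt_nonneg (1 + t))
  refine (continuous_deriv_smoothTransition_norm_mul
    (m - 2)).integral_pos_of_hasCompactSupport_nonneg_nonzero (x := x) ?_ (fun y => ?_) ?_
  · refine HasCompactSupport.intro (isCompact_closedBall (0 : Evec m) 2) fun y hy => ?_
    rw [mem_closedBall_zero_iff, not_le] at hy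
    rw [deriv_smoothTransition_eq_zero (.inr (by nlinarith)), mul_zero, zero_mul]
  · have : 0 ≤ deriv Real.smoothTransition (‖y‖ ^ 2 - 1) :=
      Real.smoothTransition.monotone.deriv_nonneg
    rw [Pi.zero_apply]
    positivity
  · have hx0 : ‖x‖ ≠ 0 := by
      rw [hx]
      positivity
    rw [show ‖x‖ ^ 2 - 1 = t by rw [hx, Real.sq_sqrt this.le]; ring, hslope]
    simp [hx0]

lemma integral_sum_pdv_radialCutoff_mul_fundSolDiv (hm : 2 < m) (hN : N = m + 2 * k - 2)
    (hN2 : 2 < N) (hP : IsSolidHarmonic k P) (ν : Evec m) :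
    ∫ x, ∑ i, pdv i radialCutoff x * fundSolDiv N P ν (basisVec i) x =
      -(((m : ℝ) - 2) * (m - 4) / (N - 2)) * polyFun P ν * fluxWeight m := by
  have := nontrivial_evec (by lia : 0 < m)
  rw [← angularMean_fluxDensity hm hN hN2 hP ν, fluxWeight, ← integral_mul_radial volume
    (F := fluxDensity N P ν) (fun c y hc => fluxDensity_smul N P ν hc y)
    (fun t => 2 * deriv Real.smoothTransition (t ^ 2 - 1) * (t ^ (m - 2))⁻¹)]
  refine integral_congr_ae ?_
  filter_upwards [compl_mem_ae_iff.2 (measure_singleton (0 : Evec m))] with x hx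
  simp only [pdv_radialCutoff, mul_assoc, ← Finset.mul_sum,
    sum_mul_fundSolDiv hm.le hN hP.isHomogeneous ν hx]
  ring

lemma pdv_comp_add_right (i : Fin m) (g : Evec m → ℝ) (y : Evec m) :
    pdv i (fun x => g (x + y)) = fun x => pdv i g (x + y) := by
  funext x
  rw [pdv, fderiv_comp_add_right, pdv]

lemma integral_sum_pdv_pdv_mul_fundSol (hm : 2 < m) (hN : N = m + 2 * k - 2) (hN2 : 2 < N)
    (hP : IsSolidHarmonic k P) (ν y : Evec m) {φ : Evec m → ℝ} (hφ : ContDiff ℝ 2 φ)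
    (hc : HasCompactSupport φ) :
    ∫ x, ∑ i, ∑ j, pdv j (pdv i φ) x * fundSol N P ν (basisVec i) (basisVec j) (x - y) =
      φ y * (-(((m : ℝ) - 2) * (m - 4) / (N - 2)) * polyFun P ν * fluxWeight m) := by
  have hgreen := integral_sum_pdv_pdv_mul_eq_mul_integral hm.le
    (fun i j => contDiffOn_fundSol N P ν (basisVec i) (basisVec j))
    (fun i j c hc x => fundSol_smul hm.le hN (by linarith) hP.isHomogeneous ν _ _ hc x)
    (fun i x hx => sum_fderiv_fundSol hN hN2 hP ν (basisVec i) hx)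
    (fun x hx => sum_fderiv_fundSolDiv hN hN2 hP ν hx) (φ := fun x => φ (x + y))
    (hφ.comp (contDiff_id.add contDiff_const)) (hc.comp_homeomorph (Homeomorph.addRight y))
  simp only [pdv_comp_add_right, integral_sum_pdv_radialCutoff_mul_fundSolDiv hm hN hN2 hP ν,
    zero_add] at hgreen
  rw [← hgreen, ← integral_add_right_eq_self _ y]
  simp only [add_sub_cancel_right]

end Flux

/-- The truncated power `s ^ (-m / 2 - 1)`, supported on `s > R ^ 2`: with `s` the square of the
distance to a point, the density that inversion in the sphere of radius `R` gives to Lebesgue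
measure on a ball. -/
def tailKernel (m : ℕ) (R s : ℝ) : ℝ := if R ^ 2 < s then s ^ (-((m : ℝ) / 2) - 1) else 0

section LineIntegral

variable {m : ℕ} {R D p T : ℝ}

lemma tailKernel_nonneg (m : ℕ) (R s : ℝ) : 0 ≤ tailKernel m R s := by
  rw [tailKernel]
  split_ifs with h
  · exact Real.rpow_nonneg ((sq_nonneg R).trans h.le) _
  · rfl

lemma measurable_tailKernel (m : ℕ) (R : ℝ) : Measurable (tailKernel m R) :=
  Measurable.ite measurableSet_Ioi (by fun_prop) measurable_const

lemma hasDerivAt_neg_sq_add_rpow_div (hp : 0 < p) (hD : 0 ≤ D) {t : ℝ} (ht : 0 < t) :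
    HasDerivAt (fun t : ℝ => -(t ^ 2 + D) ^ (-p) / (2 * p)) (t * (t ^ 2 + D) ^ (-p - 1)) t := by
  have sq_add : HasDerivAt (fun t : ℝ => t ^ 2 + D) (2 * t) t := by
    simpa using (hasDerivAt_pow 2 t).add_const D
  convert! (sq_add.rpow_const (p := -p) (.inl (by positivity))).neg.div_const (2 * p) using 1
  field_simp

lemma tendsto_neg_sq_add_rpow_div (hp : 0 < p) :
    Tendsto (fun t : ℝ => -(t ^ 2 + D) ^ (-p) / (2 * p)) atTop (𝓝 0) := by
  have sq_add : Tendsto (fun t : ℝ => t ^ 2 + D) atTop atTop :=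
    tendsto_atTop_add_const_right _ _ (tendsto_pow_atTop two_ne_zero)
  simpa using ((tendsto_rpow_neg_atTop hp).comp sq_add).neg.div_const (2 * p)

lemma integrableOn_Ioi_mul_sq_add_rpow (hp : 0 < p) (hT : 0 < T) (hD : 0 ≤ D) :
    IntegrableOn (fun t : ℝ => t * (t ^ 2 + D) ^ (-p - 1)) (Set.Ioi T) :=
  integrableOn_Ioi_deriv_of_nonneg'
    (fun _ ht => hasDerivAt_neg_sq_add_rpow_div hp hD (hT.trans_le ht))
    (fun t ht => mul_nonneg (hT.trans ht).le (Real.rpow_nonneg (add_nonneg (sq_nonneg t) hD) _))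
    (tendsto_neg_sq_add_rpow_div hp)

lemma integral_Ioi_mul_sq_add_rpow (hp : 0 < p) (hT : 0 < T) (hD : 0 ≤ D) :
    ∫ t in Set.Ioi T, t * (t ^ 2 + D) ^ (-p - 1) = (T ^ 2 + D) ^ (-p) / (2 * p) := by
  rw [integral_Ioi_of_hasDerivAt_of_nonneg'
    (fun _ ht => hasDerivAt_neg_sq_add_rpow_div hp hD (hT.trans_le ht))
    (fun t ht => mul_nonneg (hT.trans ht).le (Real.rpow_nonneg (add_nonneg (sq_nonneg t) hD) _))
    (tendsto_neg_sq_add_rpow_div hp)]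
  ring

lemma mul_tailKernel_sq_add_eq_indicator {t : ℝ} (ht : t ∈ Set.Ioi (0 : ℝ)) :
    t * tailKernel m R (t ^ 2 + D) =
      (Set.Ioi √(R ^ 2 - D)).indicator (fun t => t * (t ^ 2 + D) ^ (-((m : ℝ) / 2) - 1)) t := by
  have ht_pos : 0 < t := ht
  have sqrt_lt : √(R ^ 2 - D) < t ↔ R ^ 2 < t ^ 2 + D := by
    rw [Real.sqrt_lt' ht_pos, sub_lt_iff_lt_add]
  simp only [Set.indicator_apply, Set.mem_Ioi, sqrt_lt, tailKernel, mul_ite, mul_zero]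

lemma integrableOn_Ioi_mul_tailKernel (hm : 0 < m) (hD0 : 0 ≤ D) (hD : D < R ^ 2) :
    IntegrableOn (fun t => t * tailKernel m R (t ^ 2 + D)) (Set.Ioi 0) := by
  rw [integrableOn_congr_fun (fun _ => mul_tailKernel_sq_add_eq_indicator) measurableSet_Ioi]
  exact ((integrable_indicator_iff measurableSet_Ioi).2 (integrableOn_Ioi_mul_sq_add_rpow
    (by positivity) (Real.sqrt_pos.2 (sub_pos.2 hD)) hD0)).integrableOn

lemma integral_Ioi_mul_tailKernel (hm : 0 < m) (hR : 0 < R) (hD0 : 0 ≤ D) (hD : D < R ^ 2) :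
    ∫ t in Set.Ioi 0, t * tailKernel m R (t ^ 2 + D) = (R ^ m)⁻¹ / m := by
  have hT : 0 < √(R ^ 2 - D) := Real.sqrt_pos.2 (sub_pos.2 hD)
  rw [setIntegral_congr_fun measurableSet_Ioi fun _ => mul_tailKernel_sq_add_eq_indicator,
    setIntegral_indicator measurableSet_Ioi,
    Set.inter_eq_right.2 (Set.Ioi_subset_Ioi hT.le),
    integral_Ioi_mul_sq_add_rpow (by positivity) hT hD0, Real.sq_sqrt (sub_pos.2 hD).le,
    sub_add_cancel, ← Real.rpow_natCast R 2, ← Real.rpow_mul hR.le, ← Real.rpow_natCast R m,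
    ← Real.rpow_neg hR.le]
  congr 2 <;> push_cast <;> ring

lemma tailKernel_sq_add_eq_zero {b t : ℝ} (hD : b ^ 2 + D < R ^ 2) (ht : |t| ≤ |b|) :
    tailKernel m R (t ^ 2 + D) = 0 :=
  if_neg (by linarith [sq_le_sq.2 ht])

lemma integrableOn_Ioi_add_mul_tailKernel (hm : 0 < m) (hD0 : 0 ≤ D) (hD : D < R ^ 2) (c : ℝ) :
    IntegrableOn (fun t => (t + c) * tailKernel m R (t ^ 2 + D)) (Set.Ioi |c|) := by
  refine (((integrableOn_Ioi_mul_tailKernel hm hD0 hD).mono_set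
    (Set.Ioi_subset_Ioi (abs_nonneg c))).const_mul 2).mono' ?_ ?_
  · exact ((measurable_id.add_const c).mul ((measurable_tailKernel m R).comp
      ((measurable_id.pow_const 2).add_const D))).aestronglyMeasurable
  · filter_upwards [ae_restrict_mem measurableSet_Ioi] with t ht
    have ht : |c| < t := ht
    have kernel_nonneg := tailKernel_nonneg m R (t ^ 2 + D)
    rw [norm_mul, Real.norm_eq_abs, Real.norm_eq_abs, abs_of_nonneg kernel_nonneg, ← mul_assoc]
    refine mul_le_mul_of_nonneg_right (abs_le.2 ⟨?_, ?_⟩) kernel_nonneg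
    · linarith [neg_abs_le c, abs_nonneg c]
    · linarith [le_abs_self c, abs_nonneg c]

lemma indicator_Ioi_mul_tailKernel_sub {c : ℝ} (hD : c ^ 2 + D < R ^ 2) (t : ℝ) :
    (Set.Ioi 0).indicator (fun t => t * tailKernel m R ((t - c) ^ 2 + D)) t =
      (Set.Ioi |c|).indicator (fun t => (t + c) * tailKernel m R (t ^ 2 + D)) (t - c) := by
  have := neg_abs_le c
  have := le_abs_self c
  simp only [Set.indicator_apply, Set.mem_Ioi, sub_add_cancel]
  by_cases ht : |c| < t - c
  · rw [if_pos ht, if_pos (by linarith)]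
  · rw [if_neg ht, ite_eq_right_iff]
    intro ht_pos
    rw [tailKernel_sq_add_eq_zero hD (abs_le.2 ⟨by linarith, by linarith⟩), mul_zero]

lemma integrableOn_Ioi_mul_tailKernel_sub (hm : 0 < m) {c : ℝ} (hD0 : 0 ≤ D)
    (hD : c ^ 2 + D < R ^ 2) :
    IntegrableOn (fun t => t * tailKernel m R ((t - c) ^ 2 + D)) (Set.Ioi 0) := by
  rw [← integrable_indicator_iff measurableSet_Ioi,
    funext (indicator_Ioi_mul_tailKernel_sub (m := m) hD)]
  exact ((integrable_indicator_iff measurableSet_Ioi).2 (integrableOn_Ioi_add_mul_tailKernel hm hD0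
    (by nlinarith [sq_nonneg c]) c)).comp_sub_right c

lemma integral_Ioi_mul_tailKernel_sub {c : ℝ} (hD : c ^ 2 + D < R ^ 2) :
    ∫ t in Set.Ioi 0, t * tailKernel m R ((t - c) ^ 2 + D) =
      ∫ t in Set.Ioi |c|, (t + c) * tailKernel m R (t ^ 2 + D) := by
  rw [← integral_indicator measurableSet_Ioi,
    funext (indicator_Ioi_mul_tailKernel_sub (m := m) hD),
    integral_sub_right_eq_self (fun t => (Set.Ioi |c|).indicator _ t),
    integral_indicator measurableSet_Ioi]

lemma setIntegral_Ioi_abs_mul_tailKernel {b : ℝ} (hD : b ^ 2 + D < R ^ 2) :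
    ∫ t in Set.Ioi |b|, t * tailKernel m R (t ^ 2 + D) =
      ∫ t in Set.Ioi 0, t * tailKernel m R (t ^ 2 + D) := by
  refine (setIntegral_eq_of_subset_of_forall_sdiff_eq_zero measurableSet_Ioi
    (Set.Ioi_subset_Ioi (abs_nonneg b)) fun t ht => ?_).symm
  have ht_pos : 0 < t := ht.1
  rw [tailKernel_sq_add_eq_zero hD (by simpa [abs_of_pos ht_pos] using ht.2), mul_zero]

/- Recentring each kernel at the origin turns the weight `t` into `t + b` and `t - b`, so that the
dependence on `b` cancels in the sum. -/
lemma integral_Ioi_mul_tailKernel_symm (hm : 0 < m) {b : ℝ} (hR : 0 < R) (hD0 : 0 ≤ D)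
    (hD : b ^ 2 + D < R ^ 2) :
    ∫ t in Set.Ioi 0, t * (tailKernel m R ((t - b) ^ 2 + D) + tailKernel m R ((t + b) ^ 2 + D)) =
      2 * ((R ^ m)⁻¹ / m) := by
  have hDb : D < R ^ 2 := by nlinarith [sq_nonneg b]
  have hD_neg : (-b) ^ 2 + D < R ^ 2 := by rwa [neg_sq]
  have right := integral_Ioi_mul_tailKernel_sub (m := m) hD_neg
  have right_integrable := integrableOn_Ioi_mul_tailKernel_sub hm hD0 hD_neg
  have recentred_integrable := integrableOn_Ioi_add_mul_tailKernel hm hD0 hDb (-b)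
  simp only [sub_neg_eq_add, abs_neg] at right right_integrable recentred_integrable
  simp only [mul_add]
  rw [integral_add (integrableOn_Ioi_mul_tailKernel_sub hm hD0 hD) right_integrable, right,
    integral_Ioi_mul_tailKernel_sub hD,
    ← integral_add (integrableOn_Ioi_add_mul_tailKernel hm hD0 hDb b) recentred_integrable,
    ← integral_Ioi_mul_tailKernel hm hR hD0 hDb, ← setIntegral_Ioi_abs_mul_tailKernel hD,
    ← integral_const_mul]
  congr 1 with t
  ring

end LineIntegral

section ExteriorIntegral

variable {m : ℕ} {R : ℝ} {z : Evec m} {F : Evec m → ℝ}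

lemma integral_radial_tailKernel (hm : 2 ≤ m) (hR : 0 < R) (hz : ‖z‖ < R) {ω : Evec m}
    (hω : ‖ω‖ = 1) (hF : ∀ c : ℝ, c ≠ 0 → ∀ y, F (c • y) = F y) :
    ∫ t in Set.Ioi (0 : ℝ), t ^ (m - 1) * ((‖t • ω‖ ^ (m - 2))⁻¹ * F (t • ω) *
      (tailKernel m R (‖t • ω - z‖ ^ 2) + tailKernel m R (‖t • ω + z‖ ^ 2))) =
    F ω * (2 * ((R ^ m)⁻¹ / m)) := by
  have inner_sq_le : ⟪ω, z⟫ ^ 2 ≤ ‖z‖ ^ 2 :=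
    sq_le_sq.2 (by simpa [hω] using abs_real_inner_le_norm ω z)
  have norm_sq_lt : ‖z‖ ^ 2 < R ^ 2 := by gcongr
  rw [← integral_Ioi_mul_tailKernel_symm (by lia : 0 < m) (b := ⟪ω, z⟫)
    (D := ‖z‖ ^ 2 - ⟪ω, z⟫ ^ 2) hR (by linarith) (by linarith), ← integral_const_mul]
  refine setIntegral_congr_fun measurableSet_Ioi fun t ht => ?_
  have ht_pos : 0 < t := ht
  have dist_sq : ‖t • ω - z‖ ^ 2 = (t - ⟪ω, z⟫) ^ 2 + (‖z‖ ^ 2 - ⟪ω, z⟫ ^ 2) := by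
    rw [norm_sub_sq_real, norm_smul, hω, real_inner_smul_left, Real.norm_eq_abs, mul_one, sq_abs]
    ring
  have dist_neg_sq : ‖t • ω + z‖ ^ 2 = (t + ⟪ω, z⟫) ^ 2 + (‖z‖ ^ 2 - ⟪ω, z⟫ ^ 2) := by
    rw [norm_add_sq_real, norm_smul, hω, real_inner_smul_left, Real.norm_eq_abs, mul_one, sq_abs]
    ring
  have jacobian : t ^ (m - 1) = t * t ^ (m - 2) := by
    rw [← pow_succ', show m - 2 + 1 = m - 1 by lia]
  simp only [dist_sq, dist_neg_sq, hF t ht_pos.ne', norm_smul, hω, Real.norm_eq_abs,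
    abs_of_pos ht_pos, mul_one, jacobian]
  field_simp

lemma integral_symmetrized_tailKernel (hm : 2 ≤ m) (hR : 0 < R) (hz : ‖z‖ < R)
    (hF : ∀ c : ℝ, c ≠ 0 → ∀ y, F (c • y) = F y)
    (hG : Integrable fun w => (‖w‖ ^ (m - 2))⁻¹ * F w *
      (tailKernel m R (‖w - z‖ ^ 2) + tailKernel m R (‖w + z‖ ^ 2))) :
    ∫ w, (‖w‖ ^ (m - 2))⁻¹ * F w *
      (tailKernel m R (‖w - z‖ ^ 2) + tailKernel m R (‖w + z‖ ^ 2)) =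
    (∫ ω : sphere (0 : Evec m) 1, F ω ∂(volume : Measure (Evec m)).toSphere) *
      (2 * ((R ^ m)⁻¹ / m)) := by
  have := nontrivial_evec (by lia : 0 < m)
  rw [integral_eq_integral_sphere_prod_Ioi volume,
    integral_prod _ (integrable_comp_smul_sphere_prod_Ioi hG), ← integral_mul_const]
  refine integral_congr_ae (.of_forall fun ω => ?_)
  simp only [finrank_euclideanSpace_fin]
  rw [integral_volumeIoiPow (m - 1) fun t => (‖t • (ω : Evec m)‖ ^ (m - 2))⁻¹ *
      F (t • (ω : Evec m)) * (tailKernel m R (‖t • (ω : Evec m) - z‖ ^ 2) +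
        tailKernel m R (‖t • (ω : Evec m) + z‖ ^ 2)),
    integral_radial_tailKernel hm hR hz (by simp) hF]

lemma toSphere_real_univ_eq_mul_volume_ball (m : ℕ) :
    (volume : Measure (Evec m)).toSphere.real Set.univ =
      m * volume.real (ball (0 : Evec m) 1) := by
  rw [Measure.toSphere_real_apply_univ, finrank_euclideanSpace_fin]

lemma integral_tailKernel (hm : 2 ≤ m) (hR : 0 < R) (hz : ‖z‖ < R)
    (hF : ∀ c : ℝ, c ≠ 0 → ∀ y, F (c • y) = F y)
    (hG : Integrable fun w => (‖w‖ ^ (m - 2))⁻¹ * F w * tailKernel m R (‖w - z‖ ^ 2)) :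
    ∫ w, (‖w‖ ^ (m - 2))⁻¹ * F w * tailKernel m R (‖w - z‖ ^ 2) =
      angularMean volume F * ((R ^ m)⁻¹ * volume.real (ball (0 : Evec m) 1)) := by
  have := nontrivial_evec (by lia : 0 < m)
  set G : Evec m → ℝ := fun w => (‖w‖ ^ (m - 2))⁻¹ * F w * tailKernel m R (‖w - z‖ ^ 2)
  have symmetrized : ∀ w, G w + G (-w) = (‖w‖ ^ (m - 2))⁻¹ * F w *
      (tailKernel m R (‖w - z‖ ^ 2) + tailKernel m R (‖w + z‖ ^ 2)) := by
    intro w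
    have F_neg : F (-w) = F w := by simpa using hF (-1) (by norm_num) w
    have norm_neg_sub : ‖-w - z‖ = ‖w + z‖ := by rw [← norm_neg, neg_sub, sub_neg_eq_add, add_comm]
    simp only [G, F_neg, norm_neg_sub, norm_neg]
    ring
  have integrable_symmetrized := (hG.add hG.comp_neg).congr (.of_forall symmetrized)
  have twice_integral : 2 * ∫ w, G w = (∫ ω : sphere (0 : Evec m) 1, F ω
      ∂(volume : Measure (Evec m)).toSphere) * (2 * ((R ^ m)⁻¹ / m)) := by
    rw [← integral_symmetrized_tailKernel hm hR hz hF integrable_symmetrized,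
      ← integral_congr_ae (.of_forall symmetrized), integral_add hG hG.comp_neg,
      integral_neg_eq_self, two_mul]
  have surface_pos := toSphere_real_univ_pos (volume : Measure (Evec m))
  rw [toSphere_real_univ_eq_mul_volume_ball] at surface_pos
  have : (m : ℝ) ≠ 0 := left_ne_zero_of_mul surface_pos.ne'
  have : volume.real (ball (0 : Evec m) 1) ≠ 0 := right_ne_zero_of_mul surface_pos.ne'
  rw [angularMean, toSphere_real_univ_eq_mul_volume_ball, ← mul_right_inj' two_ne_zero,
    twice_integral]
  field_simp

end ExteriorIntegral

section Reflections

variable {m : ℕ}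

lemma reflv_zero_left (ν : Evec m) : reflv 0 ν = ν := by
  rw [reflv, smul_zero, sub_zero]

lemma reflv_eq_reflection (x ν : Evec m) : reflv x ν = (ℝ ∙ x)ᗮ.reflection ν := by
  rw [Submodule.reflection_orthogonal_apply, Submodule.reflection_singleton_apply, reflv]
  simp only [RCLike.ofReal_real_eq_id, id_eq]
  module

lemma norm_reflv (x ν : Evec m) : ‖reflv x ν‖ = ‖ν‖ := by
  rw [reflv_eq_reflection, LinearIsometryEquiv.norm_map]

lemma measurable_reflv {α : Type*} [MeasurableSpace α] {g h : α → Evec m} (hg : Measurable g)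
    (hh : Measurable h) : Measurable fun p => reflv (g p) (h p) := by
  unfold reflv
  fun_prop

lemma continuousOn_reflv (ν : Evec m) : ContinuousOn (fun x => reflv x ν) {0}ᶜ := by
  have coefficient : ContinuousOn (fun x : Evec m => 2 * ⟪x, ν⟫ / ‖x‖ ^ 2) {0}ᶜ :=
    ContinuousOn.div (by fun_prop) (by fun_prop) fun x hx => by simpa using hx
  exact continuousOn_const.sub (coefficient.smul continuousOn_id)

lemma reflv_reflv_comm (x ω ν : Evec m) :
    reflv x (reflv ω ν) = reflv (reflv x ω) (reflv x ν) := by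
  rw [reflv.eq_def (reflv x ω), norm_reflv, reflv_eq_reflection x, reflv_eq_reflection x,
    reflv_eq_reflection x, LinearIsometryEquiv.inner_map_map, reflv, map_sub, map_smul]

lemma inversion_sub_inversion {E : Type*} [NormedAddCommGroup E] [InnerProductSpace ℝ E] {x y : E}
    (hx : x ≠ 0) (hy : y ≠ 0) :
    EuclideanGeometry.inversion 0 1 x - EuclideanGeometry.inversion 0 1 y =
      (‖x‖ ^ 2 * ‖y‖ ^ 2)⁻¹ • (‖y‖ ^ 2 • x - ‖x‖ ^ 2 • y) := by
  have := norm_ne_zero_iff.2 hx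
  have := norm_ne_zero_iff.2 hy
  simp only [EuclideanGeometry.inversion, vsub_eq_sub, vadd_eq_add, sub_zero, add_zero,
    dist_zero_right, smul_sub, smul_smul, div_pow, one_pow]
  congr 2 <;> field_simp

lemma norm_sq_smul_sub_norm_sq_smul_sq {E : Type*} [NormedAddCommGroup E] [InnerProductSpace ℝ E]
    (x y : E) : ‖‖y‖ ^ 2 • x - ‖x‖ ^ 2 • y‖ ^ 2 = ‖x‖ ^ 2 * ‖y‖ ^ 2 * ‖y - x‖ ^ 2 := by
  rw [norm_sub_sq_real, norm_sub_sq_real, norm_smul, norm_smul, real_inner_smul_left,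
    real_inner_smul_right, real_inner_comm]
  simp only [Real.norm_eq_abs, abs_pow, abs_norm]
  ring

/- The inversion of `x` is the Clifford inverse `x⁻¹`, up to sign, and
`(y - x) y⁻¹ = x (x⁻¹ - y⁻¹)`. -/
lemma reflv_sub_reflv {x y : Evec m} (hx : x ≠ 0) (hy : y ≠ 0) (hxy : y ≠ x) (ν : Evec m) :
    reflv (y - x) (reflv y ν) = reflv x (reflv
      (EuclideanGeometry.inversion 0 1 x - EuclideanGeometry.inversion 0 1 y) ν) := by
  have norm_sq_x : ‖x‖ ^ 2 ≠ 0 := by simpa using hx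
  have norm_sq_y : ‖y‖ ^ 2 ≠ 0 := by simpa using hy
  have dist_sq : ‖y‖ ^ 2 - 2 * ⟪x, y⟫ + ‖x‖ ^ 2 ≠ 0 := by
    rw [real_inner_comm, ← norm_sub_sq_real]
    simpa [sub_eq_zero] using hxy
  have inner_comm : ⟪y, x⟫ = ⟪x, y⟫ := real_inner_comm _ _
  rw [inversion_sub_inversion hx hy, reflv_smul (by positivity)]
  simp only [reflv, norm_sq_smul_sub_norm_sq_smul_sq]
  simp only [norm_sub_sq_real, inner_sub_left, inner_sub_right, real_inner_smul_left,
    real_inner_smul_right, real_inner_self_eq_norm_sq, inner_comm]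
  generalize ‖x‖ ^ 2 = normSqX at *
  generalize ‖y‖ ^ 2 = normSqY at *
  generalize ⟪x, y⟫ = innerXY at *
  match_scalars <;> field_simp <;> ring

lemma angularMean_reflv_reflv (hm : 2 < m) {k : ℕ} {P : MvPolynomial (Fin m) ℝ}
    (hP : IsSolidHarmonic k P) (x ν : Evec m) :
    angularMean volume (fun ω => polyFun P (reflv x (reflv ω ν))) =
      ((m : ℝ) - 2) / (m + 2 * k - 2) * polyFun P (reflv x ν) := by
  have := nontrivial_evec (by lia : 0 < m)
  rw [← angularMean_reflv hm hP, ← angularMean_comp_linearIsometryEquiv volume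
    ((ℝ ∙ x)ᗮ.reflection).measurePreserving fun ω => polyFun P (reflv ω (reflv x ν))]
  simp only [← reflv_eq_reflection, ← reflv_reflv_comm]

end Reflections

section Inversion

open EuclideanGeometry

lemma norm_inversion_zero_one {E : Type*} [NormedAddCommGroup E] [InnerProductSpace ℝ E] (y : E) :
    ‖inversion (0 : E) 1 y‖ = ‖y‖⁻¹ := by
  simpa using dist_inversion_center (0 : E) y 1

lemma image_inversion_compl_closedBall {E : Type*} [NormedAddCommGroup E] [InnerProductSpace ℝ E]
    {ρ : ℝ} (hρ : 0 < ρ) : inversion (0 : E) 1 '' (closedBall 0 ρ⁻¹)ᶜ = ball 0 ρ \ {0} := by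
  ext y
  constructor
  · rintro ⟨η, hη, rfl⟩
    rw [Set.mem_compl_iff, mem_closedBall_zero_iff, not_le] at hη
    have hη0 : η ≠ 0 := norm_pos_iff.1 ((inv_pos.2 hρ).trans hη)
    refine ⟨?_, by simpa [inversion_eq_center] using hη0⟩
    rw [mem_ball_zero_iff, norm_inversion_zero_one]
    exact inv_lt_of_inv_lt₀ hρ hη
  · rintro ⟨hy, hy0⟩
    refine ⟨inversion 0 1 y, ?_, inversion_inversion _ one_ne_zero y⟩
    rw [Set.mem_compl_iff, mem_closedBall_zero_iff, not_le, norm_inversion_zero_one]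
    rw [mem_ball_zero_iff] at hy
    exact (inv_lt_inv₀ hρ (norm_pos_iff.2 hy0)).2 hy

lemma abs_det_fderiv_inversion {m : ℕ} (η : Evec m) :
    |((1 / dist η 0) ^ 2 • ((ℝ ∙ (η - 0))ᗮ.reflection : Evec m →L[ℝ] Evec m)).det| =
      (‖η‖ ^ (2 * m))⁻¹ := by
  have det_reflection := Submodule.det_reflection (𝕜 := ℝ) (ℝ ∙ (η - 0))ᗮ
  rw [ContinuousLinearMap.det, ContinuousLinearMap.toLinearMap_smul, LinearMap.det_smul]
  erw [det_reflection]
  simp [abs_mul, abs_pow, pow_mul]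

end Inversion

section InversionChangeOfVariables

open EuclideanGeometry

variable {m : ℕ} {ρ : ℝ}

lemma hasFDerivWithinAt_inversion_zero_one (hρ : 0 < ρ) {η : Evec m}
    (hη : η ∈ (closedBall (0 : Evec m) ρ⁻¹)ᶜ) : HasFDerivWithinAt (inversion (0 : Evec m) 1)
      ((1 / dist η 0) ^ 2 • ((ℝ ∙ (η - 0))ᗮ.reflection : Evec m →L[ℝ] Evec m))
      (closedBall (0 : Evec m) ρ⁻¹)ᶜ η := by
  refine (hasFDerivAt_inversion ?_).hasFDerivWithinAt
  rintro rfl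
  simp [hρ.le] at hη

lemma setIntegral_ball_eq_setIntegral_inversion (hm : 0 < m) (hρ : 0 < ρ) (g : Evec m → ℝ) :
    ∫ y in ball 0 ρ, g y =
      ∫ η in (closedBall (0 : Evec m) ρ⁻¹)ᶜ, (‖η‖ ^ (2 * m))⁻¹ * g (inversion 0 1 η) := by
  have := nontrivial_evec hm
  rw [← setIntegral_congr_set (sdiff_null_ae_eq_self (measure_singleton (0 : Evec m))),
    ← image_inversion_compl_closedBall hρ,
    integral_image_eq_integral_abs_det_fderiv_smul _ measurableSet_closedBall.compl
      (fun η => hasFDerivWithinAt_inversion_zero_one hρ) (inversion_injective _ one_ne_zero).injOn]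
  simp only [abs_det_fderiv_inversion, smul_eq_mul]

lemma integrableOn_ball_iff_inversion (hm : 0 < m) (hρ : 0 < ρ) (g : Evec m → ℝ) :
    IntegrableOn g (ball 0 ρ) ↔ IntegrableOn
      (fun η => (‖η‖ ^ (2 * m))⁻¹ * g (inversion 0 1 η)) (closedBall (0 : Evec m) ρ⁻¹)ᶜ := by
  have := nontrivial_evec hm
  rw [← integrableOn_congr_set_ae (sdiff_null_ae_eq_self (measure_singleton (0 : Evec m))),
    ← image_inversion_compl_closedBall hρ,
    integrableOn_image_iff_integrableOn_abs_det_fderiv_smul _ measurableSet_closedBall.compl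
      (fun η => hasFDerivWithinAt_inversion_zero_one hρ) (inversion_injective _ one_ne_zero).injOn]
  simp only [abs_det_fderiv_inversion, smul_eq_mul]

lemma norm_inversion_sub {E : Type*} [NormedAddCommGroup E] [InnerProductSpace ℝ E] {η x : E}
    (hη : η ≠ 0) (hx : x ≠ 0) :
    ‖inversion 0 1 η - x‖ = ‖x‖ / ‖η‖ * ‖inversion 0 1 x - η‖ := by
  have hx_inv : inversion 0 1 x ≠ 0 := by
    rwa [← norm_ne_zero_iff, norm_inversion_zero_one, ne_eq, inv_eq_zero,
      norm_eq_zero]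
  have dist_eq := dist_inversion_inversion hη hx_inv 1
  rw [inversion_inversion _ one_ne_zero, dist_eq_norm, dist_zero_right, dist_zero_right,
    norm_inversion_zero_one, dist_eq_norm, norm_sub_rev η] at dist_eq
  rw [dist_eq]
  field_simp

end InversionChangeOfVariables

/-- The kernel `|x - y| ^ (2 - m) P(R_{x - y} R_y ν)`. For `y = 0` and the solid harmonics `P` given
by the symbol of the bosonic Laplacian, it represents compactly supported functions by their second
derivatives. -/
def rieszKernel {m : ℕ} (P : MvPolynomial (Fin m) ℝ) (ν x y : Evec m) : ℝ :=
  (‖x - y‖ ^ (m - 2))⁻¹ * polyFun P (reflv (x - y) (reflv y ν))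

/-- The transform of the kernel `rieszKernel P ν x`, restricted to the ball of radius `R⁻¹`, under
inversion in the unit sphere, as a function of the displacement from the inverse of `x`. -/
def invertedKernel {m : ℕ} (P : MvPolynomial (Fin m) ℝ) (ν x : Evec m) (R : ℝ) (w : Evec m) : ℝ :=
  (‖w‖ ^ (m - 2))⁻¹ * polyFun P (reflv x (reflv w ν)) *
    tailKernel m R (‖w - EuclideanGeometry.inversion 0 1 x‖ ^ 2)

section Shell

open EuclideanGeometry

variable {m : ℕ} {P : MvPolynomial (Fin m) ℝ} {ρ : ℝ} {x : Evec m}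

lemma rieszKernel_zero_right (P : MvPolynomial (Fin m) ℝ) (ν x : Evec m) :
    rieszKernel P ν x 0 = (‖x‖ ^ (m - 2))⁻¹ * polyFun P (reflv x ν) := by
  rw [rieszKernel, sub_zero, reflv_zero_left]

lemma rieszKernel_eq_sub_rev (P : MvPolynomial (Fin m) ℝ) (ν x y : Evec m) :
    rieszKernel P ν x y = (‖y - x‖ ^ (m - 2))⁻¹ * polyFun P (reflv (y - x) (reflv y ν)) := by
  rw [rieszKernel, norm_sub_rev, ← reflv_smul (neg_ne_zero.2 one_ne_zero) (x - y), neg_one_smul,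
    neg_sub]

lemma measurable_uncurry_rieszKernel (P : MvPolynomial (Fin m) ℝ) (ν : Evec m) :
    Measurable fun p : Evec m × Evec m => rieszKernel P ν p.1 p.2 :=
  (by fun_prop : Measurable fun p : Evec m × Evec m => (‖p.1 - p.2‖ ^ (m - 2))⁻¹).mul
    ((continuous_polyFun P).measurable.comp (measurable_reflv (by fun_prop)
      (measurable_reflv measurable_snd measurable_const)))

lemma exists_abs_polyFun_le (P : MvPolynomial (Fin m) ℝ) (R : ℝ) :
    ∃ C, 0 ≤ C ∧ ∀ u : Evec m, ‖u‖ ≤ R → |polyFun P u| ≤ C := by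
  obtain ⟨C, hC⟩ := (isCompact_closedBall (0 : Evec m) R).exists_bound_of_continuousOn
    (continuous_polyFun P).continuousOn
  exact ⟨max C 0, le_max_right _ _, fun u hu => (hC u (by simpa using hu)).trans (le_max_left _ _)⟩

lemma exists_abs_rieszKernel_le (P : MvPolynomial (Fin m) ℝ) (ν : Evec m) :
    ∃ C, 0 ≤ C ∧ ∀ x y, |rieszKernel P ν x y| ≤ (‖x - y‖ ^ (m - 2))⁻¹ * C := by
  obtain ⟨C, hC0, hC⟩ := exists_abs_polyFun_le P ‖ν‖
  refine ⟨C, hC0, fun x y => ?_⟩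
  rw [rieszKernel, abs_mul, abs_of_nonneg (by positivity)]
  gcongr
  exact hC _ (by rw [norm_reflv, norm_reflv])

lemma integrableOn_ball_rieszKernel (P : MvPolynomial (Fin m) ℝ) (hx : ρ < ‖x‖) (ν : Evec m) :
    IntegrableOn (rieszKernel P ν x) (ball 0 ρ) := by
  obtain ⟨C, hC0, hC⟩ := exists_abs_rieszKernel_le P ν
  refine Measure.integrableOn_of_bounded (M := ((‖x‖ - ρ) ^ (m - 2))⁻¹ * C)
    measure_ball_lt_top.ne
    ((measurable_uncurry_rieszKernel P ν).comp measurable_prodMk_left).aestronglyMeasurable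
    ((ae_restrict_iff' measurableSet_ball).2 (.of_forall fun y hy => (hC x y).trans ?_))
  rw [mem_ball_zero_iff] at hy
  have dist_ge : ‖x‖ - ρ ≤ ‖x - y‖ := by linarith [norm_sub_norm_le x y]
  have : 0 < ‖x‖ - ρ := sub_pos.2 hx
  gcongr

lemma tailKernel_norm_sq {R : ℝ} (hR : 0 ≤ R) {η : Evec m} (hη : R < ‖η‖) :
    tailKernel m R (‖η‖ ^ 2) = (‖η‖ ^ (m + 2))⁻¹ := by
  rw [tailKernel, if_pos (by gcongr), ← Real.rpow_natCast ‖η‖ 2,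
    ← Real.rpow_mul (norm_nonneg η), ← Real.rpow_natCast ‖η‖ (m + 2),
    ← Real.rpow_neg (norm_nonneg η)]
  congr 1
  push_cast
  ring

lemma invertedKernel_sub_eq_zero {R : ℝ} (P : MvPolynomial (Fin m) ℝ) (ν x : Evec m) {η : Evec m}
    (hη : ‖η‖ ≤ R) : invertedKernel P ν x R (inversion 0 1 x - η) = 0 := by
  rw [invertedKernel, sub_sub_cancel_left, norm_neg, tailKernel,
    if_neg (not_lt.2 (by gcongr)), mul_zero]

lemma mul_rieszKernel_inversion (hm : 2 ≤ m) (P : MvPolynomial (Fin m) ℝ) (ν : Evec m)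
    (hρ : 0 < ρ) (hx : ρ < ‖x‖) {η : Evec m} (hη : η ∈ (closedBall (0 : Evec m) ρ⁻¹)ᶜ) :
    (‖η‖ ^ (2 * m))⁻¹ * rieszKernel P ν x (inversion 0 1 η) =
      (‖x‖ ^ (m - 2))⁻¹ * invertedKernel P ν x ρ⁻¹ (inversion 0 1 x - η) := by
  have η_gt : ρ⁻¹ < ‖η‖ := by simpa using hη
  have η_pos : 0 < ‖η‖ := (inv_pos.2 hρ).trans η_gt
  have x_pos : 0 < ‖x‖ := hρ.trans hx
  obtain ⟨inv_mem, inv_ne_zero⟩ : inversion (0 : Evec m) 1 η ∈ ball 0 ρ \ {0} := by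
    rw [← image_inversion_compl_closedBall hρ]
    exact Set.mem_image_of_mem _ hη
  have inv_ne : inversion (0 : Evec m) 1 η ≠ x := by
    rintro rfl
    exact hx.not_gt (mem_ball_zero_iff.1 inv_mem)
  rw [rieszKernel_eq_sub_rev, reflv_sub_reflv (norm_pos_iff.1 x_pos) inv_ne_zero inv_ne,
    inversion_inversion _ one_ne_zero, norm_inversion_sub (norm_pos_iff.1 η_pos)
      (norm_pos_iff.1 x_pos), invertedKernel, sub_sub_cancel_left, norm_neg,
    tailKernel_norm_sq (inv_pos.2 hρ).le η_gt]
  obtain ⟨n, rfl⟩ := Nat.exists_eq_add_of_le hm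
  rw [Nat.add_sub_cancel_left, mul_pow, div_pow]
  field_simp
  ring

lemma setIntegral_ball_rieszKernel_eq_integral (hm : 2 ≤ m) (P : MvPolynomial (Fin m) ℝ)
    (ν : Evec m) (hρ : 0 < ρ) (hx : ρ < ‖x‖) :
    ∫ y in ball 0 ρ, rieszKernel P ν x y =
      (‖x‖ ^ (m - 2))⁻¹ * ∫ w, invertedKernel P ν x ρ⁻¹ w := by
  rw [setIntegral_ball_eq_setIntegral_inversion (by lia) hρ,
    setIntegral_congr_fun measurableSet_closedBall.compl
      fun η => mul_rieszKernel_inversion hm P ν hρ hx,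
    integral_const_mul, setIntegral_eq_integral_of_forall_compl_eq_zero
      fun η hη => invertedKernel_sub_eq_zero P ν x (by simpa using hη),
    integral_sub_left_eq_self (invertedKernel P ν x ρ⁻¹)]

lemma integrable_invertedKernel (hm : 2 ≤ m) (P : MvPolynomial (Fin m) ℝ) (ν : Evec m)
    (hρ : 0 < ρ) (hx : ρ < ‖x‖) : Integrable (invertedKernel P ν x ρ⁻¹) := by
  have integrableOn_compl := (integrableOn_ball_iff_inversion (by lia) hρ _).1
    (integrableOn_ball_rieszKernel P hx ν)
  rw [integrableOn_congr_fun (fun η => mul_rieszKernel_inversion hm P ν hρ hx)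
    measurableSet_closedBall.compl, IntegrableOn, integrable_const_mul_iff, ← IntegrableOn,
    integrableOn_iff_integrable_of_support_subset] at integrableOn_compl
  · simpa using integrableOn_compl.comp_sub_left (inversion 0 1 x)
  · intro η hη
    contrapose! hη
    exact Function.notMem_support.2 (invertedKernel_sub_eq_zero P ν x (by simpa using hη))
  · have := hρ.trans hx
    exact isUnit_iff_ne_zero.2 (by positivity)

lemma integral_invertedKernel (hm : 2 < m) {k : ℕ} (hP : IsSolidHarmonic k P) (ν : Evec m)
    (hρ : 0 < ρ) (hx : ρ < ‖x‖) :
    ∫ w, invertedKernel P ν x ρ⁻¹ w = ((m : ℝ) - 2) / (m + 2 * k - 2) *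
      volume.real (ball (0 : Evec m) ρ) * polyFun P (reflv x ν) := by
  have norm_lt : ‖inversion (0 : Evec m) 1 x‖ < ρ⁻¹ := by
    rw [norm_inversion_zero_one]
    exact inv_strictAnti₀ hρ hx
  have volume_ball : volume.real (ball (0 : Evec m) ρ) =
      ρ ^ m * volume.real (ball (0 : Evec m) 1) := by
    rw [measureReal_def, Measure.addHaar_ball_of_pos volume _ hρ, ENNReal.toReal_mul,
      ENNReal.toReal_ofReal (by positivity), finrank_euclideanSpace_fin, measureReal_def]
  refine (integral_tailKernel hm.le (inv_pos.2 hρ) norm_lt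
    (F := fun w => polyFun P (reflv x (reflv w ν))) (fun c hc y => by rw [reflv_smul hc])
    (integrable_invertedKernel hm.le P ν hρ hx)).trans ?_
  rw [angularMean_reflv_reflv hm hP, volume_ball, inv_pow, inv_inv]
  ring

lemma setIntegral_ball_rieszKernel (hm : 2 < m) {k : ℕ} (hP : IsSolidHarmonic k P) (ν : Evec m)
    (hρ : 0 < ρ) (hx : ρ < ‖x‖) :
    ∫ y in ball 0 ρ, rieszKernel P ν x y = ((m : ℝ) - 2) / (m + 2 * k - 2) *
      volume.real (ball (0 : Evec m) ρ) * rieszKernel P ν x 0 := by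
  rw [setIntegral_ball_rieszKernel_eq_integral hm.le P ν hρ hx,
    integral_invertedKernel hm hP ν hρ hx, rieszKernel_zero_right]
  ring

end Shell

section Fubini

variable {m : ℕ}

lemma locallyIntegrable_inv_norm_pow (hm : 2 ≤ m) :
    LocallyIntegrable fun x : Evec m => (‖x‖ ^ (m - 2))⁻¹ := by
  refine locallyIntegrable_of_homogeneous hm ?_ fun c hc x => ?_
  · exact ContinuousOn.inv₀ (by fun_prop) fun x hx => pow_ne_zero _ (norm_ne_zero_iff.2 hx)
  · rw [norm_smul, mul_pow, Real.norm_of_nonneg (le_of_lt hc), mul_inv]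

lemma locallyIntegrable_rieszKernel_zero (hm : 2 ≤ m) (P : MvPolynomial (Fin m) ℝ) (ν : Evec m) :
    LocallyIntegrable fun x => rieszKernel P ν x 0 := by
  simp only [rieszKernel_zero_right]
  refine locallyIntegrable_of_homogeneous hm ?_ fun c hc x => ?_
  · exact (ContinuousOn.inv₀ (by fun_prop) fun x hx => pow_ne_zero _ (norm_ne_zero_iff.2 hx)).mul
      ((continuous_polyFun P).comp_continuousOn (continuousOn_reflv ν))
  · rw [reflv_smul hc.ne', norm_smul, mul_pow, Real.norm_of_nonneg (le_of_lt hc), mul_inv,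
      mul_assoc]

lemma integrable_mul_rieszKernel (hm : 2 ≤ m) (P : MvPolynomial (Fin m) ℝ) (ν y : Evec m)
    {h : Evec m → ℝ} (hh : Continuous h) (hc : HasCompactSupport h) :
    Integrable fun x => h x * rieszKernel P ν x y := by
  have integrable_translate :=
    (locallyIntegrable_rieszKernel_zero hm P (reflv y ν)).integrable_smul_left_of_hasCompactSupport
      (g := fun x => h (x + y)) (by fun_prop) (hc.comp_homeomorph (Homeomorph.addRight y))
  simpa [rieszKernel, reflv_zero_left] using integrable_translate.comp_sub_right y

lemma integrable_prod_rieszKernel (hm : 2 ≤ m) (P : MvPolynomial (Fin m) ℝ) (ν : Evec m) (ρ : ℝ)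
    {h : Evec m → ℝ} (hh : Continuous h) (hc : HasCompactSupport h) :
    Integrable (fun p : Evec m × Evec m => h p.1 * rieszKernel P ν p.1 p.2)
      (volume.prod (volume.restrict (ball 0 ρ))) := by
  obtain ⟨C, hC0, hC⟩ := exists_abs_rieszKernel_le P ν
  obtain ⟨M, hM⟩ := hh.bounded_above_of_compact_support hc
  have M_nonneg : 0 ≤ M := (norm_nonneg _).trans (hM 0)
  obtain ⟨R, hR⟩ := hc.isCompact.isBounded.subset_closedBall (0 : Evec m)
  let truncated : Evec m → ℝ :=
    (closedBall (0 : Evec m) (R + ρ)).indicator fun x => (‖x‖ ^ (m - 2))⁻¹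
  have integrable_truncated : Integrable truncated :=
    ((locallyIntegrable_inv_norm_pow hm).integrableOn_isCompact
      (isCompact_closedBall _ _)).integrable_indicator measurableSet_closedBall
  have integrable_const : Integrable (fun _ => M * C) (volume.restrict (ball (0 : Evec m) ρ)) :=
    integrableOn_const measure_ball_lt_top.ne
  refine (integrable_const.convolution_integrand (ContinuousLinearMap.mul ℝ ℝ)
    integrable_truncated).mono' ((hh.measurable.comp measurable_fst).mul
      (measurable_uncurry_rieszKernel P ν)).aestronglyMeasurable ?_
  filter_upwards [Measure.quasiMeasurePreserving_snd.ae (ae_restrict_mem measurableSet_ball)]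
    with ⟨x, y⟩ hy
  rw [mem_ball_zero_iff] at hy
  by_cases hx : h x = 0
  · rw [hx, zero_mul, norm_zero]
    exact mul_nonneg (by positivity) (Set.indicator_nonneg (fun _ _ => by positivity) _)
  · have norm_x_le : ‖x‖ ≤ R := by simpa using hR (subset_tsupport _ hx)
    have sub_mem : x - y ∈ closedBall (0 : Evec m) (R + ρ) :=
      mem_closedBall_zero_iff.2 ((norm_sub_le _ _).trans (add_le_add norm_x_le hy.le))
    calc ‖h x * rieszKernel P ν x y‖
        ≤ M * ((‖x - y‖ ^ (m - 2))⁻¹ * C) :=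
          (norm_mul _ _).trans_le (mul_le_mul (hM x) (hC x y) (abs_nonneg _) M_nonneg)
      _ = M * C * truncated (x - y) := by
          rw [show truncated (x - y) = _ from Set.indicator_of_mem sub_mem _]
          ring

variable {β : Type*} [Fintype β] {Q : β → MvPolynomial (Fin m) ℝ}

lemma sum_mul_rieszKernel_eq_zero {c : β → ℝ} (hzero : ∑ b, c b • Q b = 0) (ν x y : Evec m) :
    ∑ b, c b * rieszKernel (Q b) ν x y = 0 := by
  calc ∑ b, c b * rieszKernel (Q b) ν x y
      = (‖x - y‖ ^ (m - 2))⁻¹ * polyFun (∑ b, c b • Q b) (reflv (x - y) (reflv y ν)) := by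
        simp only [polyFun_sum, polyFun_smul, rieszKernel, Finset.mul_sum, mul_left_comm]
    _ = 0 := by rw [hzero, polyFun_zero, mul_zero]

lemma integral_ball_integral_rieszKernel (hm : 2 < m) {k : ℕ} (hQ : ∀ b, IsSolidHarmonic k (Q b))
    {h : β → Evec m → ℝ} (hh : ∀ b, Continuous (h b)) (hc : ∀ b, HasCompactSupport (h b)) {ρ : ℝ}
    (hρ : 0 < ρ) (hzero : ∀ x ∈ closedBall (0 : Evec m) ρ, ∑ b, h b x • Q b = 0) (ν : Evec m) :
    ∫ y in ball 0 ρ, ∫ x, ∑ b, h b x * rieszKernel (Q b) ν x y =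
      ((m : ℝ) - 2) / (m + 2 * k - 2) * volume.real (ball (0 : Evec m) ρ) *
        ∫ x, ∑ b, h b x * rieszKernel (Q b) ν x 0 := by
  rw [← integral_integral_swap, ← integral_const_mul]
  · refine integral_congr_ae (.of_forall fun x => ?_)
    rcases le_or_gt ‖x‖ ρ with hx | hx
    · simp only [sum_mul_rieszKernel_eq_zero (hzero x (by simpa using hx)), integral_zero, mul_zero]
    · simp only [integral_finsetSum _ fun b _ =>
        (integrableOn_ball_rieszKernel (Q b) hx ν).const_mul (h b x), integral_const_mul,
        setIntegral_ball_rieszKernel hm (hQ _) ν hρ hx, Finset.mul_sum, mul_left_comm (h _ x)]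
  · exact integrable_finsetSum _ fun b _ =>
      integrable_prod_rieszKernel hm.le (Q b) ν ρ (hh b) (hc b)

end Fubini

section CompactlySupported

variable {m k : ℕ} {N : ℝ} {ι : Type*} [Fintype ι] {e : ι → MvPolynomial (Fin m) ℝ}
  {φ : ι → Evec m → ℝ}

lemma continuous_pdv_pdv (i j : Fin m) {g : Evec m → ℝ} (hg : ContDiff ℝ 2 g) :
    Continuous (pdv j (pdv i g)) :=
  (contDiff_pdv (n' := 0) (n := 1) (by simp) j (contDiff_pdv (by norm_num) i hg)).continuous

lemma integral_pdv_pdv_mul_rieszKernel (hm : 2 < m) (hN : N = m + 2 * k - 2) (hN2 : 2 < N)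
    (he : ∀ α, IsSolidHarmonic k (e α)) (hφ : ∀ α, ContDiff ℝ 2 (φ α))
    (hc : ∀ α, HasCompactSupport (φ α)) (ν y : Evec m) :
    ∫ x, ∑ b : ι × Fin m × Fin m, pdv b.2.2 (pdv b.2.1 (φ b.1)) x *
        rieszKernel (bosonicSymbol N (basisVec b.2.1) (basisVec b.2.2) (e b.1)) ν x y =
      -(((m : ℝ) - 2) * (m - 4) / (N - 2)) * fluxWeight m *
        ∑ α, φ α y * polyFun (e α) (reflv y ν) := by
  have := nontrivial_evec (by lia : 0 < m)
  simp only [Fintype.sum_prod_type]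
  rw [integral_finsetSum _ fun α _ => integrable_finsetSum _ fun i _ => integrable_finsetSum _
    fun j _ => integrable_mul_rieszKernel hm.le _ ν y (continuous_pdv_pdv i j (hφ α))
      (hasCompactSupport_pdv j (hasCompactSupport_pdv i (hc α))), Finset.mul_sum]
  refine Finset.sum_congr rfl fun α _ => ?_
  trans ∫ x, ∑ i, ∑ j, pdv j (pdv i (φ α)) x *
    fundSol N (e α) (reflv y ν) (basisVec i) (basisVec j) (x - y)
  · refine integral_congr_ae ?_
    filter_upwards [compl_mem_ae_iff.2 (measure_singleton y)] with x hx
    simp only [fundSol_eq hm.le hN (he α).isHomogeneous _ _ _ (sub_ne_zero.2 hx), rieszKernel]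
  · rw [integral_sum_pdv_pdv_mul_fundSol hm hN hN2 (he α) _ y (hφ α) (hc α)]
    ring

lemma integral_ball_of_hasCompactSupport (hm : 2 < m) (hm4 : m ≠ 4) (hN : N = m + 2 * k - 2)
    (hN2 : 2 < N) (he : ∀ α, IsSolidHarmonic k (e α)) (hφ : ∀ α, ContDiff ℝ 2 (φ α))
    (hc : ∀ α, HasCompactSupport (φ α)) {ρ : ℝ} (hρ : 0 < ρ)
    (hzero : ∀ x ∈ closedBall (0 : Evec m) ρ, ∑ α, ∑ i, ∑ j,
      pdv j (pdv i (φ α)) x • bosonicSymbol N (basisVec i) (basisVec j) (e α) = 0) (ν : Evec m) :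
    ∫ y in ball 0 ρ, ∑ α, φ α y * polyFun (e α) (reflv y ν) =
      ((m : ℝ) - 2) / N * volume.real (ball (0 : Evec m) ρ) * ∑ α, φ α 0 * polyFun (e α) ν := by
  have constant_ne_zero : -(((m : ℝ) - 2) * (m - 4) / (N - 2)) * fluxWeight m ≠ 0 := by
    have m_gt : (2 : ℝ) < m := by exact_mod_cast hm
    have m_ne : (m : ℝ) ≠ 4 := by exact_mod_cast hm4
    exact mul_ne_zero (neg_ne_zero.2 (div_ne_zero (mul_ne_zero (sub_ne_zero.2 m_gt.ne')
      (sub_ne_zero.2 m_ne)) (sub_ne_zero.2 hN2.ne'))) (fluxWeight_pos (by lia)).ne'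
  have mean_value_of_symbol := integral_ball_integral_rieszKernel hm
    (Q := fun b : ι × Fin m × Fin m => bosonicSymbol N (basisVec b.2.1) (basisVec b.2.2) (e b.1))
    (fun b => (he b.1).bosonicSymbol hN hN2 _ _)
    (h := fun b => pdv b.2.2 (pdv b.2.1 (φ b.1)))
    (fun b => continuous_pdv_pdv _ _ (hφ b.1))
    (fun b => hasCompactSupport_pdv _ (hasCompactSupport_pdv _ (hc b.1))) hρ
    (fun x hx => by simpa only [Fintype.sum_prod_type] using hzero x hx) ν
  simp only [integral_pdv_pdv_mul_rieszKernel hm hN hN2 he hφ hc, reflv_zero_left]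
    at mean_value_of_symbol
  rw [integral_const_mul, mul_left_comm, ← hN] at mean_value_of_symbol
  exact mul_left_cancel₀ constant_ne_zero mean_value_of_symbol

end CompactlySupported

section Separation

variable {m : ℕ}

/-- The solid harmonics of degree `k`, the polynomial counterpart of `ℋ_k`. -/
def harmSubmodule (m k : ℕ) : Submodule ℝ (MvPolynomial (Fin m) ℝ) where
  carrier := {P | IsSolidHarmonic k P}
  zero_mem' := ⟨MvPolynomial.isHomogeneous_zero _ _ _, by simp⟩
  add_mem' hP hQ := ⟨hP.isHomogeneous.add hQ.isHomogeneous, by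
    simp [Finset.sum_add_distrib, hP.laplacian_eq_zero, hQ.laplacian_eq_zero]⟩
  smul_mem' c P hP := ⟨isHomogeneous_smul hP.isHomogeneous c, by
    simp [← Finset.smul_sum, hP.laplacian_eq_zero]⟩

instance finiteDimensional_harmSubmodule (m k : ℕ) : FiniteDimensional ℝ (harmSubmodule m k) := by
  have : FiniteDimensional ℝ (MvPolynomial.homogeneousSubmodule (Fin m) ℝ k) :=
    Module.Finite.iff_fg.2 (MvPolynomial.homogeneousSubmodule_fg _ _ k)
  exact Submodule.finiteDimensional_of_le (S₂ := MvPolynomial.homogeneousSubmodule (Fin m) ℝ k)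
    fun P hP => hP.isHomogeneous

/-- Evaluation at a point as a linear form on the solid harmonics. -/
def evalForm (m k : ℕ) (u : Evec m) : harmSubmodule m k →ₗ[ℝ] ℝ where
  toFun P := polyFun P.1 u
  map_add' _ _ := polyFun_add _ _ _
  map_smul' _ _ := polyFun_smul _ _ _

lemma eq_zero_of_polyFun_eq_zero_on_ball {k : ℕ} {P : MvPolynomial (Fin m) ℝ}
    (hP : P.IsHomogeneous k) (h : ∀ u ∈ ball (0 : Evec m) 1, polyFun P u = 0) : P = 0 := by
  refine polyFun_injective fun x => ?_
  have norm_add_one_pos : (0 : ℝ) < ‖x‖ + 1 := by positivity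
  have eval_scaled := h ((‖x‖ + 1)⁻¹ • x) (by
    rw [mem_ball_zero_iff, norm_smul, norm_inv, Real.norm_of_nonneg norm_add_one_pos.le,
      inv_mul_lt_iff₀ norm_add_one_pos]
    linarith)
  rw [polyFun_smul_of_isHomogeneous hP] at eval_scaled
  simpa [norm_add_one_pos.ne'] using eval_scaled

lemma exists_finset_eval_injective (m k : ℕ) : ∃ s : Finset (ball (0 : Evec m) 1),
    LinearMap.ker (LinearMap.pi fun α : s => evalForm m k α.1) = ⊥ := by
  obtain ⟨s, hs⟩ := Finset.exists_inf_le
    fun u : ball (0 : Evec m) 1 => LinearMap.ker (evalForm m k u)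
  refine ⟨s, eq_bot_iff.2 fun P hP => ?_⟩
  have mem_inf : P ∈ s.inf fun u : ball (0 : Evec m) 1 => LinearMap.ker (evalForm m k u) := by
    rw [Submodule.mem_finsetInf]
    exact fun u hu => congrFun hP ⟨u, hu⟩
  exact Subtype.ext (eq_zero_of_polyFun_eq_zero_on_ball P.2.isHomogeneous
    fun u hu => hs ⟨u, hu⟩ mem_inf)

lemma exists_interpolation (m k : ℕ) : ∃ (s : Finset (ball (0 : Evec m) 1))
    (e : s → MvPolynomial (Fin m) ℝ), (∀ α, IsSolidHarmonic k (e α)) ∧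
      ∀ P, IsSolidHarmonic k P → P = ∑ α : s, polyFun P α.1.1 • e α := by
  obtain ⟨s, hs⟩ := exists_finset_eval_injective m k
  obtain ⟨L, hL⟩ := LinearMap.exists_leftInverse_of_injective _ hs
  refine ⟨s, fun α => (L (Pi.single α 1)).1, fun α => (L (Pi.single α 1)).2, fun P hP => ?_⟩
  have expansion : (⟨P, hP⟩ : harmSubmodule m k) =
      ∑ α : s, polyFun P α.1.1 • L (Pi.single α 1) := by
    conv_lhs => rw [← LinearMap.id_apply (R := ℝ) (⟨P, hP⟩ : harmSubmodule m k), ← hL,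
      LinearMap.comp_apply, LinearMap.pi_apply_eq_sum_univ L]
    refine Finset.sum_congr rfl fun α _ => congrArg (polyFun P α.1.1 • L ·) ?_
    ext β
    simp [Pi.single_apply, eq_comm]
  simpa using congrArg Subtype.val expansion

end Separation

section BosonicLaplacian

variable {m : ℕ} {ι : Type*} [Fintype ι] {Ω : Set (Evec m)} {f : Evec m → Evec m → ℝ}
  {φ : ι → Evec m → ℝ} {e : ι → MvPolynomial (Fin m) ℝ}

lemma pd1_eq_sum (hΩ : IsOpen Ω) (hφ : ∀ α, DifferentiableOn ℝ (φ α) Ω)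
    (hf : ∀ x ∈ Ω, ∀ u ∈ ball (0 : Evec m) 1, f x u = ∑ α, φ α x * polyFun (e α) u) (i : Fin m) :
    ∀ x ∈ Ω, ∀ u ∈ ball (0 : Evec m) 1, pd1 i f x u = ∑ α, pdv i (φ α) x * polyFun (e α) u := by
  intro x hx u hu
  have eventuallyEq_sum : (fun y => f y u) =ᶠ[𝓝 x] fun y => ∑ α, φ α y * polyFun (e α) u := by
    filter_upwards [hΩ.mem_nhds hx] with y hy using hf y hy u hu
  have hd : ∀ α, DifferentiableAt ℝ (φ α) x := fun α => (hφ α).differentiableAt (hΩ.mem_nhds hx)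
  rw [pd1, eventuallyEq_sum.fderiv_eq, fderiv_fun_sum fun α _ => (hd α).mul_const _]
  simp only [fderiv_mul_const (hd _), sum_apply, smul_apply, smul_eq_mul, pdv, mul_comm]

lemma pd2_eq_sum
    (hf : ∀ x ∈ Ω, ∀ u ∈ ball (0 : Evec m) 1, f x u = ∑ α, φ α x * polyFun (e α) u) (i : Fin m) :
    ∀ x ∈ Ω, ∀ u ∈ ball (0 : Evec m) 1,
      pd2 i f x u = ∑ α, φ α x * polyFun (∂[basisVec i] (e α)) u := by
  intro x hx u hu
  have eventuallyEq_sum : (fun v => f x v) =ᶠ[𝓝 u] fun v => ∑ α, φ α x * polyFun (e α) v := by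
    filter_upwards [isOpen_ball.mem_nhds hu] with v hv using hf x hx v hv
  have hd : ∀ α, DifferentiableAt ℝ (polyFun (e α)) u := fun α =>
    (differentiable_polyFun _).differentiableAt
  rw [pd2, eventuallyEq_sum.fderiv_eq, fderiv_fun_sum fun α _ => (hd α).const_mul _]
  simp only [fderiv_const_mul (hd _), sum_apply, smul_apply, smul_eq_mul, fderiv_polyFun]

lemma pdv_pdv_eq_fderiv_fderiv {g : Evec m → ℝ} {x : Evec m} (hg : ContDiffAt ℝ 2 g x)
    (i j : Fin m) : pdv i (pdv j g) x = fderiv ℝ (fderiv ℝ g) x (basisVec i) (basisVec j) := by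
  have hd : DifferentiableAt ℝ (fderiv ℝ g) x :=
    (hg.fderiv_right (m := 1) (by norm_num)).differentiableAt one_ne_zero
  have pdv_eq : pdv j g = fun y => fderiv ℝ g y (basisVec j) := rfl
  rw [pdv, pdv_eq, fderiv_clm_apply hd (differentiableAt_const _)]
  simp

lemma pdv_comm {g : Evec m → ℝ} {x : Evec m} (hg : ContDiffAt ℝ 2 g x) (i j : Fin m) :
    pdv i (pdv j g) x = pdv j (pdv i g) x := by
  rw [pdv_pdv_eq_fderiv_fderiv hg, pdv_pdv_eq_fderiv_fderiv hg]
  exact hg.isSymmSndFDerivAt (by simp) _ _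

lemma sum_mul_polyFun_bosonicSymbol_basisVec {A : Fin m → Fin m → ℝ} (hA : ∀ i j, A i j = A j i)
    (N : ℝ) (P : MvPolynomial (Fin m) ℝ) (u : Evec m) :
    ∑ i, ∑ j, A i j * polyFun (bosonicSymbol N (basisVec i) (basisVec j) P) u =
      ∑ i, A i i * polyFun P u
        - 4 / N * ∑ i, ∑ j, u i * (A j i * polyFun (∂[basisVec j] P) u)
        + 4 * ‖u‖ ^ 2 / (N * (N - 2)) *
          ∑ i, ∑ j, A j i * polyFun (∂[basisVec i] (∂[basisVec j] P)) u := by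
  have diagonal : ∑ i, A i i * polyFun P u =
      ∑ i, ∑ j, A i j * (⟪(basisVec i : Evec m), basisVec j⟫ * polyFun P u) := by
    refine Finset.sum_congr rfl fun i _ => ?_
    simp [inner_basisVec]
  have swapped : ∑ i, ∑ j, u j * (A i j * polyFun (∂[basisVec i] P) u) =
      ∑ i, ∑ j, u i * (A j i * polyFun (∂[basisVec j] P) u) := Finset.sum_comm
  have symmetrized : 4 / N * ∑ i, ∑ j, u i * (A j i * polyFun (∂[basisVec j] P) u) =
      2 / N * ∑ i, ∑ j, u i * (A j i * polyFun (∂[basisVec j] P) u) +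
      2 / N * ∑ i, ∑ j, u j * (A i j * polyFun (∂[basisVec i] P) u) := by
    rw [swapped]
    ring
  rw [diagonal, symmetrized]
  simp only [Finset.mul_sum, ← Finset.sum_add_distrib, ← Finset.sum_sub_distrib]
  refine Finset.sum_congr rfl fun i _ => Finset.sum_congr rfl fun j _ => ?_
  rw [polyFun_bosonicSymbol, inner_basisVec, inner_basisVec, inner_basisVec, hA j i,
    dirDeriv_comm (basisVec i)]
  ring

lemma Dk_eq_sum {k : ℕ} {N : ℝ} (hN : N = m + 2 * k - 2) (hΩ : IsOpen Ω)
    (hφ : ∀ α, ContDiffOn ℝ 2 (φ α) Ω)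
    (hf : ∀ x ∈ Ω, ∀ u ∈ ball (0 : Evec m) 1, f x u = ∑ α, φ α x * polyFun (e α) u)
    {x : Evec m} (hx : x ∈ Ω) {u : Evec m} (hu : u ∈ ball 0 1) :
    Dk m k f x u = ∑ α, ∑ i, ∑ j, pdv j (pdv i (φ α)) x *
      polyFun (bosonicSymbol N (basisVec i) (basisVec j) (e α)) u := by
  have hdφ : ∀ α, DifferentiableOn ℝ (φ α) Ω := fun α => (hφ α).differentiableOn two_ne_zero
  have hdpdv : ∀ i α, DifferentiableOn ℝ (pdv i (φ α)) Ω := fun i α =>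
    (contDiffOn_pdv (n' := 1) (by norm_num) i hΩ (hφ α)).differentiableOn one_ne_zero
  have pd1_eq := fun i => pd1_eq_sum hΩ hdφ hf i
  have pd1_pd1_eq := fun i => pd1_eq_sum hΩ (hdpdv i) (pd1_eq i) i
  have pd1_pd2_pd1_eq := fun i j => pd1_eq_sum hΩ (hdpdv j) (pd2_eq_sum (pd1_eq j) j) i
  have pd2_pd1_pd2_pd1_eq := fun i j => pd2_eq_sum (pd1_pd2_pd1_eq i j) i
  have symm_pdv : ∀ α i j, pdv j (pdv i (φ α)) x = pdv i (pdv j (φ α)) x := fun α i j =>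
    pdv_comm ((hφ α).contDiffAt (hΩ.mem_nhds hx)) j i
  have expand := fun α => sum_mul_polyFun_bosonicSymbol_basisVec (symm_pdv α) N (e α) u
  have sum_comm₃ : ∀ F : ι → Fin m → Fin m → ℝ,
      ∑ i, ∑ j, ∑ α, F α i j = ∑ α, ∑ i, ∑ j, F α i j := fun F =>
    (Finset.sum_congr rfl fun i _ => Finset.sum_comm).trans Finset.sum_comm
  rw [Finset.sum_congr rfl fun α _ => expand α, Finset.sum_add_distrib, Finset.sum_sub_distrib,
    ← Finset.mul_sum, ← Finset.mul_sum, Dk, show (m : ℝ) + 2 * k - 4 = N - 2 by rw [hN]; ring, ← hN]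
  simp only [pd1_pd1_eq _ x hx u hu, pd1_pd2_pd1_eq _ _ x hx u hu,
    pd2_pd1_pd2_pd1_eq _ _ x hx u hu]
  congr 2
  · exact Finset.sum_comm
  · simp only [Finset.mul_sum]
    exact sum_comm₃ _
  · exact sum_comm₃ _

end BosonicLaplacian

lemma exists_contDiff_extension {E : Type*} [NormedAddCommGroup E] [NormedSpace ℝ E]
    [FiniteDimensional ℝ E] {n : ℕ∞} {g : E → ℝ} {c : E} {ρ r : ℝ} (hρ : 0 < ρ) (hρr : ρ < r)
    (hg : ContDiffOn ℝ n g (ball c r)) :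
    ∃ ψ : E → ℝ, ContDiff ℝ n ψ ∧ HasCompactSupport ψ ∧ Set.EqOn ψ g (closedBall c ρ) := by
  let χ : ContDiffBump c := ⟨ρ, (ρ + r) / 2, hρ, by linarith⟩
  refine ⟨fun x => χ x * g x, contDiff_iff_contDiffAt.2 fun x => ?_,
    χ.hasCompactSupport.mul_right, fun x hx => ?_⟩
  · by_cases hx : x ∈ tsupport fun y => χ y * g y
    · have x_mem : x ∈ closedBall c ((ρ + r) / 2) :=
        χ.tsupport_eq.le (tsupport_mul_subset_left hx)
      exact χ.contDiff.contDiffAt.mul <| hg.contDiffAt <| isOpen_ball.mem_nhds <|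
        closedBall_subset_ball (by linarith) x_mem
    · exact contDiffAt_const.congr_of_eventuallyEq (notMem_tsupport_iff_eventuallyEq.1 hx)
  · simp only [χ.one_of_mem_closedBall hx, one_mul]

lemma tendsto_setIntegral_ball {X : Type*} [PseudoMetricSpace X] [MeasurableSpace X]
    [OpensMeasurableSpace X] {μ : Measure X} {g : X → ℝ} {c : X} {r : ℝ}
    (hg : IntegrableOn g (ball c r) μ) :
    Tendsto (fun t => ∫ x in ball c t, g x ∂μ) (𝓝[<] r) (𝓝 (∫ x in ball c r, g x ∂μ)) := by
  simp only [← integral_indicator measurableSet_ball]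
  have ball_subset : ∀ᶠ t in 𝓝[<] r, ball c t ⊆ ball c r := by
    filter_upwards [self_mem_nhdsWithin] with t ht using ball_subset_ball (Set.mem_Iio.1 ht).le
  refine tendsto_integral_filter_of_dominated_convergence ((ball c r).indicator fun x => ‖g x‖)
    ?_ ?_ (IntegrableOn.integrable_indicator hg.norm measurableSet_ball) (.of_forall fun x => ?_)
  · filter_upwards [ball_subset] with t ht
    exact ((hg.mono_set ht).integrable_indicator measurableSet_ball).aestronglyMeasurable
  · filter_upwards [ball_subset] with t ht
    refine .of_forall fun x => ?_
    rw [norm_indicator_eq_indicator_norm]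
    exact Set.indicator_le_indicator_of_subset ht (fun _ => norm_nonneg _) x
  · refine tendsto_const_nhds.congr' ?_
    by_cases hx : x ∈ ball c r
    · filter_upwards [Ioo_mem_nhdsLT (mem_ball.1 hx)] with t ht
      rw [Set.indicator_of_mem hx, Set.indicator_of_mem (mem_ball.2 ht.1)]
    · filter_upwards [ball_subset] with t ht
      rw [Set.indicator_of_notMem hx, Set.indicator_of_notMem fun h => hx (ht h)]

section MeanValue

variable {m k : ℕ} {a : Evec m} {f : Evec m → Evec m → ℝ}

lemma pdv_comp_const_add (a : Evec m) (i : Fin m) (g : Evec m → ℝ) :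
    pdv i (fun x => g (a + x)) = fun x => pdv i g (a + x) := by
  funext x
  rw [pdv, pdv, fderiv_comp_add_left]

lemma C2Hk.exists_separation {Ω : Set (Evec m)} (hf : C2Hk m k Ω f) :
    ∃ (s : Finset (ball (0 : Evec m) 1)) (e : s → MvPolynomial (Fin m) ℝ) (φ : s → Evec m → ℝ),
      (∀ α, IsSolidHarmonic k (e α)) ∧ (∀ α, ContDiffOn ℝ 2 (φ α) Ω) ∧
      ∀ x ∈ Ω, ∀ u ∈ closedBall (0 : Evec m) 1, f x u = ∑ α, φ α x * polyFun (e α) u := by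
  obtain ⟨s, e, he, interpolation⟩ := exists_interpolation m k
  refine ⟨s, e, fun α x => f x α.1, he, fun α => ?_, fun x hx u hu => ?_⟩
  · exact hf.1.comp (f := fun x : Evec m => (x, (α.1.1 : Evec m)))
      (contDiff_id.prodMk contDiff_const).contDiffOn fun x hx => ⟨hx, α.1.2⟩
  · obtain ⟨q, hq, hfq⟩ := hf.2 x hx
    obtain ⟨P, hP, rfl⟩ := hq.exists_isSolidHarmonic
    rw [hfq u hu, congrArg (polyFun · u) (interpolation P hP), polyFun_sum]
    refine Finset.sum_congr rfl fun α _ => ?_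
    rw [polyFun_smul, ← hfq _ (ball_subset_closedBall α.1.2)]

lemma C2Hk.exists_compactly_supported_separation {r ρ : ℝ} (hf : C2Hk m k (ball a r) f)
    (hρ : 0 < ρ) (hρr : ρ < r) :
    ∃ (s : Finset (ball (0 : Evec m) 1)) (e : s → MvPolynomial (Fin m) ℝ) (φ : s → Evec m → ℝ),
      (∀ α, IsSolidHarmonic k (e α)) ∧ (∀ α, ContDiff ℝ 2 (φ α)) ∧
      (∀ α, HasCompactSupport (φ α)) ∧ ∀ x ∈ closedBall a ρ, ∀ u ∈ closedBall (0 : Evec m) 1,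
        f x u = ∑ α, φ α x * polyFun (e α) u := by
  obtain ⟨s, e, φ, he, hφ, separation⟩ := hf.exists_separation
  choose ψ hψ hψ_supp hψ_eq using fun α => exists_contDiff_extension (n := 2) hρ hρr (hφ α)
  refine ⟨s, e, ψ, he, hψ, hψ_supp, fun x hx u hu => ?_⟩
  rw [separation x (closedBall_subset_ball hρr hx) u hu]
  exact Finset.sum_congr rfl fun α _ => by rw [hψ_eq α hx]

lemma sum_pdv_pdv_smul_bosonicSymbol_eq_zero {ι : Type*} [Fintype ι] {Ω : Set (Evec m)}
    {φ : ι → Evec m → ℝ} {e : ι → MvPolynomial (Fin m) ℝ} (hΩ : IsOpen Ω)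
    (he : ∀ α, (e α).IsHomogeneous k) (hφ : ∀ α, ContDiffOn ℝ 2 (φ α) Ω)
    (hf : ∀ x ∈ Ω, ∀ u ∈ ball (0 : Evec m) 1, f x u = ∑ α, φ α x * polyFun (e α) u)
    {x : Evec m} (hx : x ∈ Ω) (hD : ∀ u ∈ ball (0 : Evec m) 1, Dk m k f x u = 0) :
    ∑ α, ∑ i, ∑ j, pdv j (pdv i (φ α)) x •
      bosonicSymbol (m + 2 * k - 2) (basisVec i) (basisVec j) (e α) = 0 := by
  refine eq_zero_of_polyFun_eq_zero_on_ball (k := k) ?_ fun u hu => ?_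
  · exact MvPolynomial.IsHomogeneous.sum _ _ _ fun α _ => MvPolynomial.IsHomogeneous.sum _ _ _
      fun i _ => MvPolynomial.IsHomogeneous.sum _ _ _ fun j _ =>
        isHomogeneous_smul (isHomogeneous_bosonicSymbol _ (he α) _ _) _
  · rw [← hD u hu, Dk_eq_sum rfl hΩ hφ hf hx hu]
    simp only [polyFun_sum, polyFun_smul]

lemma integral_ball_reflv_of_lt (hm : 2 < m) (hm4 : m ≠ 4) (hmk : 4 < m + 2 * k) {r ρ : ℝ}
    (hf : C2Hk m k (ball a r) f)
    (hD : ∀ x ∈ ball a r, ∀ u ∈ ball (0 : Evec m) 1, Dk m k f x u = 0) {ν : Evec m} (hν : ‖ν‖ < 1)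
    (hρ : 0 < ρ) (hρr : ρ < r) :
    ∫ y in ball (0 : Evec m) ρ, f (a + y) (reflv y ν) =
      ((m : ℝ) - 2) / (m + 2 * k - 2) * volume.real (ball (0 : Evec m) ρ) * f a ν := by
  obtain ⟨R, hρR, hRr⟩ := exists_between hρr
  obtain ⟨s, e, φ, he, hφ, hφ_supp, separation⟩ :=
    hf.exists_compactly_supported_separation (hρ.trans hρR) hRr
  have separation_translated : ∀ y ∈ ball (0 : Evec m) ρ, ∀ u, ‖u‖ < 1 →
      f (a + y) u = ∑ α, φ α (a + y) * polyFun (e α) u := fun y hy u hu =>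
    separation _ (closedBall_subset_closedBall hρR.le (ball_subset_closedBall (by simpa using hy)))
      u (by simpa using hu.le)
  have hN2 : (2 : ℝ) < m + 2 * k - 2 := by
    have : (4 : ℝ) < m + 2 * k := by exact_mod_cast hmk
    linarith
  have mean_value := integral_ball_of_hasCompactSupport hm hm4 rfl hN2 he
    (φ := fun α x => φ α (a + x)) (fun α => (hφ α).comp (contDiff_const.add contDiff_id))
    (fun α => (hφ_supp α).comp_homeomorph (Homeomorph.addLeft a)) hρ (fun x hx => ?_) ν
  · have center : f a ν = ∑ α, φ α (a + 0) * polyFun (e α) ν := by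
      simpa only [add_zero] using separation_translated 0 (mem_ball_self hρ) ν hν
    rw [center, ← mean_value]
    exact setIntegral_congr_fun measurableSet_ball fun y hy =>
      separation_translated y hy _ ((norm_reflv y ν).trans_lt hν)
  · have x_mem : a + x ∈ ball a R := closedBall_subset_ball hρR (by simpa using hx)
    simp only [pdv_comp_const_add]
    exact sum_pdv_pdv_smul_bosonicSymbol_eq_zero isOpen_ball (fun α => (he α).isHomogeneous)
      (fun α => (hφ α).contDiffOn)
      (fun y hy u hu => separation y (ball_subset_closedBall hy) u (ball_subset_closedBall hu))
      x_mem (hD _ (ball_subset_ball hRr.le x_mem))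

lemma integrableOn_comp_reflv (hm : 0 < m) {r : ℝ}
    (hc : ContinuousOn (fun q : Evec m × Evec m => f q.1 q.2)
      (closedBall a r ×ˢ closedBall (0 : Evec m) 1)) {ν : Evec m} (hν : ‖ν‖ ≤ 1) :
    IntegrableOn (fun y => f (a + y) (reflv y ν)) (ball 0 r) := by
  have := nontrivial_evec hm
  have mapsTo : ∀ y ∈ ball (0 : Evec m) r,
      (a + y, reflv y ν) ∈ closedBall a r ×ˢ closedBall (0 : Evec m) 1 := fun y hy =>
    ⟨ball_subset_closedBall (by simpa using hy), by simpa [norm_reflv] using hν⟩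
  obtain ⟨M, hM⟩ := ((isCompact_closedBall a r).prod
    (isCompact_closedBall (0 : Evec m) 1)).exists_bound_of_continuousOn hc
  have continuousOn_punctured :
      ContinuousOn (fun y => f (a + y) (reflv y ν)) (ball 0 r \ {0}) :=
    hc.comp (f := fun y => (a + y, reflv y ν))
      ((by fun_prop : ContinuousOn (fun y => a + y) _).prodMk
        ((continuousOn_reflv ν).mono fun y hy => hy.2)) fun y hy => mapsTo y hy.1
  have ae_eq : (ball (0 : Evec m) r \ {0} : Set (Evec m)) =ᵐ[volume] ball 0 r :=
    sdiff_null_ae_eq_self (measure_singleton _)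
  refine IntegrableOn.of_bound measure_ball_lt_top ?_ M
    ((ae_restrict_iff' measurableSet_ball).2 (.of_forall fun y hy => hM _ (mapsTo y hy)))
  rw [← Measure.restrict_congr_set ae_eq]
  exact continuousOn_punctured.aestronglyMeasurable
    (measurableSet_ball.diff (measurableSet_singleton 0))

lemma integral_ball_reflv (hm : 2 < m) (hm4 : m ≠ 4) (hmk : 4 < m + 2 * k) {r : ℝ} (hr : 0 < r)
    (hf : C2Hk m k (ball a r) f)
    (hc : ContinuousOn (fun q : Evec m × Evec m => f q.1 q.2)
      (closedBall a r ×ˢ closedBall (0 : Evec m) 1))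
    (hD : ∀ x ∈ ball a r, ∀ u ∈ ball (0 : Evec m) 1, Dk m k f x u = 0) {ν : Evec m} (hν : ‖ν‖ < 1) :
    ∫ y in ball (0 : Evec m) r, f (a + y) (reflv y ν) =
      ((m : ℝ) - 2) / (m + 2 * k - 2) * volume.real (ball (0 : Evec m) r) * f a ν := by
  have integral_const_ball : ∀ t, ((m : ℝ) - 2) / (m + 2 * k - 2) *
      volume.real (ball (0 : Evec m) t) * f a ν =
        ∫ _ in ball (0 : Evec m) t, ((m : ℝ) - 2) / (m + 2 * k - 2) * f a ν := fun t => by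
    rw [setIntegral_const, smul_eq_mul]
    ring
  rw [integral_const_ball]
  refine tendsto_nhds_unique_of_eventuallyEq
    (tendsto_setIntegral_ball (integrableOn_comp_reflv (by lia) hc hν.le))
    (tendsto_setIntegral_ball (integrableOn_const measure_ball_lt_top.ne)) ?_
  filter_upwards [Ioo_mem_nhdsLT hr] with t ht
  rw [integral_ball_reflv_of_lt hm hm4 hmk hf hD hν ht.1 ht.2, integral_const_ball]

end MeanValue

theorem stmt_14_general (m k : ℕ) (hm : 2 < m) (hm4 : m ≠ 4) (hmk : 4 < m + 2 * k)
    (a : Evec m) (r : ℝ) (hr : 0 < r) (f : Evec m → Evec m → ℝ)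
    (hreg : C2Hk m k (ball a r) f)
    (hc : ContinuousOn (fun q : Evec m × Evec m => f q.1 q.2)
      (closedBall a r ×ˢ closedBall (0 : Evec m) 1))
    (hD : ∀ x ∈ ball a r, ∀ u ∈ ball (0 : Evec m) 1, Dk m k f x u = 0)
    (ν : Evec m) (hν : ‖ν‖ < 1) :
    f a ν = (((m : ℝ) + 2 * k - 2) / (((m : ℝ) - 2) * (volume (ball a r)).toReal)) *
      ∫ x in ball a r, f x (reflv (x - a) ν) := by
  have translate : ∫ x in ball a r, f x (reflv (x - a) ν) =
      ∫ y in ball (0 : Evec m) r, f (a + y) (reflv y ν) := by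
    simpa using ((measurePreserving_add_left volume a).setIntegral_preimage_emb
      (Homeomorph.addLeft a).measurableEmbedding (fun x => f x (reflv (x - a) ν)) (ball a r)).symm
  have volume_ne_zero : volume.real (ball (0 : Evec m) r) ≠ 0 :=
    (ENNReal.toReal_pos (measure_ball_pos volume _ hr).ne' measure_ball_lt_top.ne).ne'
  have m_sub_two_ne_zero : (m : ℝ) - 2 ≠ 0 := sub_ne_zero.2 (by exact_mod_cast hm.ne')
  have : (4 : ℝ) < m + 2 * k := by exact_mod_cast hmk
  have order_ne_zero : (m : ℝ) + 2 * k - 2 ≠ 0 := by linarith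
  rw [translate, integral_ball_reflv hm hm4 hmk hr hreg hc hD hν,
    Measure.addHaar_ball_center volume a r, ← measureReal_def]
  field_simp

/-- mean-value property, volume version, for null solutions of the
bosonic Laplacian, `m > 4`. -/
theorem stmt_14 (m k : ℕ) (hm : 4 < m) (hk : 1 ≤ k)
    (a : Evec m) (r : ℝ) (hr : 0 < r) (f : Evec m → Evec m → ℝ)
    (hreg : C2Hk m k (ball a r) f)
    (hc : ContinuousOn (fun q : Evec m × Evec m => f q.1 q.2)
      (closedBall a r ×ˢ closedBall (0 : Evec m) 1))
    (hD : ∀ x ∈ ball a r, ∀ u ∈ ball (0 : Evec m) 1, Dk m k f x u = 0) :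
    ∀ ν : Evec m, ‖ν‖ < 1 →
      f a ν = (((m : ℝ) + 2 * k - 2) / (((m : ℝ) - 2) * (volume (ball a r)).toReal)) *
        ∫ x in ball a r, f x (reflv (x - a) ν) :=
  stmt_14_general m k (by lia) (by lia) (by lia) a r hr f hreg hc hD
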